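/- Let 0 < t < 1 and define f₀(x) := x/(1+x) and f_t(x) := (x+t)/(1+x+t) on [0,1]. Let ν_t be a Borel probability measure on [0,1] satisfying the self-conformality equation ν_t = (1/2)·(f₀)_*ν_t + (1/2)·(f_t)_*ν_t (the Lyons conductance measure). Then ν_t has power Fourier decay: there exist β > 0 and C > 0 such that |ν̂_t(ξ)| ≤ C|ξ|^{−β} for all ξ ∈ ℝ with |ξ| ≥ 1. -/

import Mathlib

open MeasureTheory
open scoped ENNReal

/-!
Write `g_y x = x / (1 + y x)` with `y = (1 - r) / t`. Iterating the stationarity equation in the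
parabolic branch only gives
`ν = ∑_{n < N} 2⁻ⁿ⁻¹ (f₀ⁿ ∘ f_t)_* ν + 2⁻ᴺ (f₀ᴺ)_* ν`, and, up to an additive constant,
`g_y ∘ f₀ⁿ ∘ f_t` is `D⁻² g_{y'}` with `D = 2 + t (n + 1) - r` and `y' = (1 - 1 / D) / t`. The
absolute value of the Fourier transform of `(g_y)_* ν` at frequency `a e^{-2s}` is therefore, up to
an error `2⁻ᴺ`, subharmonic for the skew product `(s, r) ↦ (s + log D, 1 / D)` over the uniformly
contracting system of maps `r ↦ 1 / D`: the parabolic behaviour has been absorbed in the infinitely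
many branches.

The cocycle `log D` is uniformly non-integrable, so Dolgopyat's method bounds the twisted operators
`u ↦ ∑ₙ 2⁻ⁿ⁻¹ exp (i b log D) u (1 / D)` with a spectral gap, polynomially in `b` and uniformly in
the truncation `N`. By Fourier inversion in `s`, oscillating windows `exp (i a e^{-2s}) g(s)` decay
exponentially under the skew operator once `s` has had the time to equidistribute. Stopping `s` in a
window of bounded length and using the Cauchy–Schwarz inequality reduces the Fourier transform of
`ν` to pairs of points: distant pairs produce such oscillating windows, and pairs at distance at
most `δ` have `ν × ν`-measure `O(δˢ)` by a Frostman estimate.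
-/

namespace Lyons

open Finset

/-! ### Weighted iterated function systems -/

/-- A finite family of self-maps of `X` with nonnegative weights of total mass at most one. -/
structure WeightedIFS (ι X : Type*) where
  index : Finset ι
  weight : ι → ℝ
  map : ι → X → X
  weight_nonneg : ∀ i, 0 ≤ weight i
  sum_weight_le_one : ∑ i ∈ index, weight i ≤ 1

namespace WeightedIFS

variable {ι X : Type*} (S : WeightedIFS ι X)

/-- The transfer (averaging) operator of a weighted iterated function system. -/
noncomputable def op {E : Type*} [AddCommMonoid E] [Module ℝ E] (f : X → E) (x : X) : E :=
  ∑ i ∈ S.index, S.weight i • f (S.map i x)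

section linear

variable {E F : Type*} [AddCommMonoid E] [Module ℝ E] [AddCommMonoid F] [Module ℝ F]

lemma op_semiconj (A : E →ₗ[ℝ] F) :
    Function.Semiconj (fun (f : X → E) x => A (f x)) S.op S.op := fun f => by
  funext x
  simp only [op, map_sum, map_smul]

lemma iterate_op_comp_linearMap (A : E →ₗ[ℝ] F) (k : ℕ) (f : X → E) (x : X) :
    S.op^[k] (fun z => A (f z)) x = A (S.op^[k] f x) :=
  congrFun ((S.op_semiconj A).iterate_right k f).symm x

lemma iterate_op_smul (k : ℕ) (c : ℝ) (f : X → E) (x : X) :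
    S.op^[k] (fun z => c • f z) x = c • S.op^[k] f x :=
  S.iterate_op_comp_linearMap (LinearMap.lsmul ℝ E c) k f x

lemma iterate_op_comp {φ : X → X} (hφ : ∀ i x, S.map i (φ x) = φ (S.map i x)) (k : ℕ)
    (f : X → E) (x : X) : S.op^[k] (fun z => f (φ z)) x = S.op^[k] f (φ x) := by
  have h : Function.Commute (fun (g : X → E) z => g (φ z)) S.op := fun g => by
    funext z
    simp only [op, hφ]
  exact congrFun (h.iterate_right k f).symm x

lemma op_sum {κ : Type*} (s : Finset κ) (f : κ → X → E) :
    S.op (fun z => ∑ j ∈ s, f j z) = fun x => ∑ j ∈ s, S.op (f j) x := by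
  funext x
  simp only [op, smul_sum]
  exact sum_comm

lemma iterate_op_sum {κ : Type*} (s : Finset κ) (f : κ → X → E) (k : ℕ) (x : X) :
    S.op^[k] (fun z => ∑ j ∈ s, f j z) x = ∑ j ∈ s, S.op^[k] (f j) x := by
  induction k generalizing f with
  | zero => rfl
  | succ k ih => simp only [Function.iterate_succ_apply, op_sum, ih]

lemma iterate_op_succ_comp (k : ℕ) (f : X → E) (φ : X → X) (x : X) :
    S.op^[k + 1] (fun z => f (φ z)) x =
      ∑ i ∈ S.index, S.weight i • S.op^[k] (fun z => f (φ (S.map i z))) x := by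
  rw [Function.iterate_succ_apply]
  simp only [← iterate_op_smul]
  exact S.iterate_op_sum S.index _ k x

end linear

section real

lemma op_monotone : Monotone (S.op : (X → ℝ) → X → ℝ) := fun _ _ h _ =>
  sum_le_sum fun i _ => mul_le_mul_of_nonneg_left (h _) (S.weight_nonneg i)

lemma iterate_op_mono (k : ℕ) {f g : X → ℝ} (h : ∀ x, f x ≤ g x) (x : X) :
    S.op^[k] f x ≤ S.op^[k] g x :=
  S.op_monotone.iterate k h x

lemma op_nonneg {f : X → ℝ} (hf : ∀ x, 0 ≤ f x) (x : X) : 0 ≤ S.op f x :=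
  sum_nonneg fun i _ => mul_nonneg (S.weight_nonneg i) (hf _)

lemma op_le_of_le {f : X → ℝ} {c : ℝ} (hc : 0 ≤ c) (hf : ∀ x, f x ≤ c) (x : X) :
    S.op f x ≤ c :=
  calc S.op f x ≤ ∑ i ∈ S.index, S.weight i * c := S.op_monotone hf x
    _ = (∑ i ∈ S.index, S.weight i) * c := (sum_mul _ _ _).symm
    _ ≤ c := mul_le_of_le_one_left hc S.sum_weight_le_one

lemma iterate_op_nonneg (k : ℕ) {f : X → ℝ} (hf : ∀ x, 0 ≤ f x) : ∀ x, 0 ≤ S.op^[k] f x :=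
  Function.Iterate.rec (fun g : X → ℝ => ∀ x, 0 ≤ g x) hf (fun _ h => S.op_nonneg h) k

lemma iterate_op_le_of_le (k : ℕ) {f : X → ℝ} {c : ℝ} (hc : 0 ≤ c) (hf : ∀ x, f x ≤ c) :
    ∀ x, S.op^[k] f x ≤ c :=
  Function.Iterate.rec (fun g : X → ℝ => ∀ x, g x ≤ c) hf (fun _ h => S.op_le_of_le hc h) k

lemma sq_op_le (f : X → ℝ) (x : X) : S.op f x ^ 2 ≤ S.op (fun z => f z ^ 2) x := by
  have h := sum_sq_le_sum_mul_sum_of_sq_le_mul S.index (r := fun i => S.weight i * f (S.map i x))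
    (fun i _ => S.weight_nonneg i)
    (fun i _ => mul_nonneg (S.weight_nonneg i) (sq_nonneg (f (S.map i x))))
    (fun i _ => by ring_nf; rfl)
  exact h.trans (mul_le_of_le_one_left (S.op_nonneg (fun z => sq_nonneg (f z)) x)
    S.sum_weight_le_one)

lemma sq_iterate_op_le (k : ℕ) (f : X → ℝ) (x : X) :
    S.op^[k] f x ^ 2 ≤ S.op^[k] (fun z => f z ^ 2) x := by
  induction k generalizing f with
  | zero => exact le_rfl
  | succ k ih => exact (ih _).trans (S.iterate_op_mono k (S.sq_op_le f) x)

end real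

section norm

variable {E : Type*} [NormedAddCommGroup E]

lemma norm_op_le [NormedSpace ℝ E] (f : X → E) (x : X) : ‖S.op f x‖ ≤ S.op (fun z => ‖f z‖) x := by
  refine (norm_sum_le _ _).trans (sum_le_sum fun i _ => ?_)
  rw [norm_smul, Real.norm_of_nonneg (S.weight_nonneg i), smul_eq_mul]

lemma norm_iterate_le {T : (X → E) → X → E} (hT : ∀ f x, ‖T f x‖ ≤ S.op (fun z => ‖f z‖) x)
    (k : ℕ) (f : X → E) (x : X) : ‖T^[k] f x‖ ≤ S.op^[k] (fun z => ‖f z‖) x := by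
  induction k generalizing f with
  | zero => exact le_rfl
  | succ k ih => exact (ih _).trans (S.iterate_op_mono k (hT f) x)

lemma norm_iterate_op_le [NormedSpace ℝ E] (k : ℕ) (f : X → E) (x : X) :
    ‖S.op^[k] f x‖ ≤ S.op^[k] (fun z => ‖f z‖) x :=
  S.norm_iterate_le S.norm_op_le k f x

end norm

end WeightedIFS

/-! ### Log-Lipschitz functions -/

section LogLipschitz

variable {X : Type*} [PseudoMetricSpace X]

/-- For a nonnegative `H`, this says that `log H` is `B`-Lipschitz, with zeros of `H` allowed. -/
def LogLipschitz (B : ℝ) (H : X → ℝ) : Prop :=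
  ∀ x y, H x ≤ H y * Real.exp (B * dist x y)

/-- The least `B`-log-Lipschitz majorant of `f` (`0` at points where the supremum is infinite). -/
noncomputable def logLipHull (B : ℝ) (f : X → ℝ) (x : X) : ℝ :=
  ⨆ z, f z * Real.exp (-(B * dist x z))

variable {B c : ℝ} {f H K : X → ℝ} {x : X}

lemma LogLipschitz.mono {B' : ℝ} (h : LogLipschitz B H) (hH : ∀ x, 0 ≤ H x) (hB : B ≤ B') :
    LogLipschitz B' H := fun x y => (h x y).trans (by have := hH y; gcongr)

lemma LogLipschitz.const_mul (h : LogLipschitz B H) (hc : 0 ≤ c) :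
    LogLipschitz B fun x => c * H x := fun x y => by
  rw [mul_assoc]
  exact mul_le_mul_of_nonneg_left (h x y) hc

lemma LogLipschitz.max (hH : LogLipschitz B H) (hK : LogLipschitz B K) :
    LogLipschitz B fun x => max (H x) (K x) := fun x y => by
  rw [max_mul_of_nonneg _ _ (Real.exp_nonneg _)]
  exact max_le_max (hH x y) (hK x y)

lemma logLipHull_le (h : ∀ z, f z * Real.exp (-(B * dist x z)) ≤ c) : logLipHull B f x ≤ c :=
  have : Nonempty X := ⟨x⟩
  ciSup_le h

lemma le_logLipHull (h : BddAbove (Set.range fun z => f z * Real.exp (-(B * dist x z)))) :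
    f x ≤ logLipHull B f x := by
  simpa [logLipHull] using le_ciSup h x

lemma logLipschitz_logLipHull (hB : 0 ≤ B) (hf : ∀ x, 0 ≤ f x)
    (h : ∀ x, BddAbove (Set.range fun z => f z * Real.exp (-(B * dist x z)))) :
    LogLipschitz B (logLipHull B f) := fun x y => logLipHull_le fun z =>
  calc f z * Real.exp (-(B * dist x z))
      ≤ f z * (Real.exp (-(B * dist y z)) * Real.exp (B * dist x y)) := by
        rw [← Real.exp_add]
        have htri := mul_le_mul_of_nonneg_left (dist_triangle_left y z x) hB
        have := hf z
        gcongr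
        linarith
    _ = f z * Real.exp (-(B * dist y z)) * Real.exp (B * dist x y) := (mul_assoc _ _ _).symm
    _ ≤ logLipHull B f y * Real.exp (B * dist x y) :=
        mul_le_mul_of_nonneg_right (le_ciSup (h y) z) (Real.exp_nonneg _)

end LogLipschitz

/-! ### Twisted transfer operators and majorants -/

lemma norm_exp_mul_I_sub_exp_mul_I (a c : ℝ) :
    ‖Complex.exp (a * Complex.I) - Complex.exp (c * Complex.I)‖ =
      ‖Complex.exp (Complex.I * (a - c : ℝ)) - 1‖ := by
  have h : Complex.exp (a * Complex.I) - Complex.exp (c * Complex.I) =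
      Complex.exp (c * Complex.I) * (Complex.exp (Complex.I * (a - c : ℝ)) - 1) := by
    rw [mul_sub, ← Complex.exp_add, mul_one]
    congr 2
    push_cast
    ring
  rw [h, norm_mul, Complex.norm_exp_ofReal_mul_I, one_mul]

lemma norm_exp_mul_I_sub_exp_mul_I_le (a c : ℝ) :
    ‖Complex.exp (a * Complex.I) - Complex.exp (c * Complex.I)‖ ≤ |a - c| :=
  (norm_exp_mul_I_sub_exp_mul_I a c).trans_le Real.norm_exp_I_mul_ofReal_sub_one_le

namespace WeightedIFS

variable {ι X : Type*} (S : WeightedIFS ι X)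

/-- The square root of the average of `H ^ 2`. -/
noncomputable def quadMean (H : X → ℝ) (x : X) : ℝ := √(S.op (fun z => H z ^ 2) x)

lemma quadMean_nonneg (H : X → ℝ) (x : X) : 0 ≤ S.quadMean H x := Real.sqrt_nonneg _

lemma sq_quadMean (H : X → ℝ) (x : X) : S.quadMean H x ^ 2 = S.op (fun z => H z ^ 2) x :=
  Real.sq_sqrt (S.op_nonneg (fun _ => sq_nonneg _) x)

lemma op_le_quadMean (H : X → ℝ) (x : X) : S.op H x ≤ S.quadMean H x :=
  Real.le_sqrt_of_sq_le (S.sq_op_le H x)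

/-- The transfer operator twisted by the characters `exp (i b θ)` of the cocycle `θ`. -/
noncomputable def twisted (θ : ι → X → ℝ) (b : ℝ) (u : X → ℂ) (x : X) : ℂ :=
  ∑ i ∈ S.index, S.weight i • (Complex.exp ((b * θ i x : ℝ) * Complex.I) * u (S.map i x))

variable {θ : ι → X → ℝ} {b : ℝ} {u : X → ℂ} {H : X → ℝ}

lemma norm_twisted_le (θ : ι → X → ℝ) (b : ℝ) (u : X → ℂ) (x : X) :
    ‖S.twisted θ b u x‖ ≤ S.op (fun z => ‖u z‖) x := by
  refine (norm_sum_le _ _).trans (sum_le_sum fun i _ => ?_)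
  rw [norm_smul, norm_mul, Complex.norm_exp_ofReal_mul_I, one_mul,
    Real.norm_of_nonneg (S.weight_nonneg i), smul_eq_mul]

variable [PseudoMetricSpace X]

/-- The branches contract distances by `lam < 1` and the cocycle is `1`-Lipschitz. -/
structure IsContractive (S : WeightedIFS ι X) (θ : ι → X → ℝ) (lam : ℝ) : Prop where
  nonneg : 0 ≤ lam
  lt_one : lam < 1
  dist_map_le : ∀ i x y, dist (S.map i x) (S.map i y) ≤ lam * dist x y
  abs_sub_le : ∀ i x y, |θ i x - θ i y| ≤ dist x y

variable {S} {lam : ℝ} {x y : X}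

lemma IsContractive.logLipschitz_quadMean (hS : S.IsContractive θ lam) {B : ℝ} (hB : 0 ≤ B)
    (hH : ∀ x, 0 ≤ H x) (h : LogLipschitz B H) : LogLipschitz (lam * B) (S.quadMean H) := by
  intro x y
  refine Real.sqrt_le_iff.2 ⟨mul_nonneg (S.quadMean_nonneg H y) (Real.exp_nonneg _), ?_⟩
  rw [mul_pow, sq_quadMean, op, op, sum_mul]
  refine sum_le_sum fun i _ => ?_
  rw [smul_eq_mul, smul_eq_mul, mul_assoc, ← mul_pow]
  refine mul_le_mul_of_nonneg_left (pow_le_pow_left₀ (hH _) ?_ 2) (S.weight_nonneg i)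
  refine (h _ (S.map i y)).trans (mul_le_mul_of_nonneg_left (Real.exp_le_exp.2 ?_) (hH _))
  calc B * dist (S.map i x) (S.map i y) ≤ B * (lam * dist x y) := by
        gcongr
        exact hS.dist_map_le i x y
    _ = lam * B * dist x y := by ring

end WeightedIFS

section IsMajorant

variable {X E : Type*} [PseudoMetricSpace X] [NormedAddCommGroup E]

/-- `H` dominates `u` at frequency scale `B`: it is a log-Lipschitz majorant of `‖u‖` which also
controls the oscillation of `u`. This is the cone of Dolgopyat's argument, with aperture `A`. -/
structure IsMajorant (A B : ℝ) (u : X → E) (H : X → ℝ) : Prop where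
  norm_le : ∀ x, ‖u x‖ ≤ H x
  logLipschitz : LogLipschitz B H
  norm_sub_le : ∀ x y,
    ‖u x - u y‖ ≤ A * (B * dist x y) * Real.exp (B * dist x y) * H x

lemma IsMajorant.nonneg {A B : ℝ} {u : X → E} {H : X → ℝ} (h : IsMajorant A B u H) (x : X) :
    0 ≤ H x := (norm_nonneg _).trans (h.norm_le x)

end IsMajorant

/-- The aperture of the cone of majorants for branches contracting by `lam`. -/
noncomputable def coneConst (lam : ℝ) : ℝ := 2 / (1 - lam)

/-- The factor by which one step of the transfer operator narrows the cone of majorants. -/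
noncomputable def coneRatio (lam : ℝ) : ℝ := (1 + lam) / 2

section step

variable {ι X : Type*} [PseudoMetricSpace X] {S : WeightedIFS ι X}
  {θ : ι → X → ℝ} {lam b : ℝ} {u : X → ℂ} {H : X → ℝ}

/-- The majorant of `S.twisted θ b u` produced from the majorant `H` of `u`. -/
noncomputable def WeightedIFS.nextMajorant (S : WeightedIFS ι X) (θ : ι → X → ℝ) (lam b : ℝ)
    (u : X → ℂ) (H : X → ℝ) (x : X) : ℝ :=
  max (logLipHull |b| (fun z => ‖S.twisted θ b u z‖) x) (coneRatio lam * S.quadMean H x)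

namespace WeightedIFS

lemma IsContractive.coneConst_nonneg (hS : S.IsContractive θ lam) : 0 ≤ coneConst lam :=
  div_nonneg zero_le_two (sub_nonneg.2 hS.lt_one.le)

lemma IsContractive.coneRatio_nonneg (hS : S.IsContractive θ lam) : 0 ≤ coneRatio lam :=
  div_nonneg (add_nonneg zero_le_one hS.nonneg) zero_le_two

lemma IsContractive.coneRatio_lt_one (hS : S.IsContractive θ lam) : coneRatio lam < 1 := by
  have := hS.lt_one
  unfold coneRatio
  linarith

lemma IsContractive.coneRatio_mul_coneConst (hS : S.IsContractive θ lam) :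
    coneRatio lam * coneConst lam = 1 + lam * coneConst lam := by
  have : 1 - lam ≠ 0 := (sub_pos.2 hS.lt_one).ne'
  unfold coneRatio coneConst
  field_simp
  ring

end WeightedIFS

lemma IsMajorant.norm_twisted_le_quadMean {A B : ℝ} (h : IsMajorant A B u H) (θ : ι → X → ℝ)
    (b : ℝ) (x : X) : ‖S.twisted θ b u x‖ ≤ S.quadMean H x :=
  (S.norm_twisted_le θ b u x).trans ((S.op_monotone h.norm_le x).trans (S.op_le_quadMean H x))

variable (hS : S.IsContractive θ lam) (h : IsMajorant (coneConst lam) |b| u H)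

include hS in
lemma WeightedIFS.IsContractive.norm_exp_mul_sub_le (i : ι) (x y : X) :
    ‖Complex.exp ((b * θ i x : ℝ) * Complex.I) - Complex.exp ((b * θ i y : ℝ) * Complex.I)‖ ≤
      |b| * dist x y := by
  refine (norm_exp_mul_I_sub_exp_mul_I_le _ _).trans ?_
  rw [← mul_sub, abs_mul]
  exact mul_le_mul_of_nonneg_left (hS.abs_sub_le i x y) (abs_nonneg _)

include h hS in
lemma IsMajorant.norm_twisted_term_sub_le (i : ι) (x y : X) :
    ‖Complex.exp ((b * θ i x : ℝ) * Complex.I) * u (S.map i x) -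
        Complex.exp ((b * θ i y : ℝ) * Complex.I) * u (S.map i y)‖ ≤
      coneRatio lam * coneConst lam * (|b| * dist x y) * Real.exp (|b| * dist x y) *
        H (S.map i x) := by
  set r := |b| * dist x y
  set e₁ := Complex.exp ((b * θ i x : ℝ) * Complex.I)
  set e₂ := Complex.exp ((b * θ i y : ℝ) * Complex.I)
  have hr : 0 ≤ r := by positivity
  have hH := h.nonneg (S.map i x)
  have hA := hS.coneConst_nonneg
  have hlam := hS.nonneg
  have hcontr : |b| * dist (S.map i x) (S.map i y) ≤ lam * r :=
    (mul_le_mul_of_nonneg_left (hS.dist_map_le i x y) (abs_nonneg b)).trans_eq (by ring)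
  calc ‖e₁ * u (S.map i x) - e₂ * u (S.map i y)‖
      = ‖(e₁ - e₂) * u (S.map i x) + e₂ * (u (S.map i x) - u (S.map i y))‖ := by ring_nf
    _ ≤ ‖e₁ - e₂‖ * ‖u (S.map i x)‖ + ‖u (S.map i x) - u (S.map i y)‖ := by
        refine (norm_add_le _ _).trans_eq ?_
        rw [norm_mul, norm_mul, Complex.norm_exp_ofReal_mul_I, one_mul]
    _ ≤ r * Real.exp r * H (S.map i x) +
          coneConst lam * (lam * r) * Real.exp r * H (S.map i x) := by
        refine add_le_add (mul_le_mul ?_ (h.norm_le _) (norm_nonneg _) (by positivity))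
          ((h.norm_sub_le _ _).trans ?_)
        · exact (hS.norm_exp_mul_sub_le i x y).trans
            (le_mul_of_one_le_right hr (Real.one_le_exp hr))
        · gcongr
          exact hcontr.trans (mul_le_of_le_one_left hr hS.lt_one.le)
    _ = _ := by rw [hS.coneRatio_mul_coneConst]; ring

include h hS in
lemma IsMajorant.norm_twisted_sub_le (x y : X) :
    ‖S.twisted θ b u x - S.twisted θ b u y‖ ≤
      coneRatio lam * coneConst lam * (|b| * dist x y) * Real.exp (|b| * dist x y) *
        S.quadMean H x := by
  set C := coneRatio lam * coneConst lam * (|b| * dist x y) * Real.exp (|b| * dist x y)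
  have hC : 0 ≤ C := by
    have := hS.coneConst_nonneg
    have := hS.coneRatio_nonneg
    positivity
  calc ‖S.twisted θ b u x - S.twisted θ b u y‖
      ≤ ∑ i ∈ S.index, S.weight i * (C * H (S.map i x)) := by
        rw [WeightedIFS.twisted, WeightedIFS.twisted, ← sum_sub_distrib]
        refine (norm_sum_le _ _).trans (sum_le_sum fun i _ => ?_)
        rw [← smul_sub, norm_smul, Real.norm_of_nonneg (S.weight_nonneg i)]
        exact mul_le_mul_of_nonneg_left (h.norm_twisted_term_sub_le hS i x y) (S.weight_nonneg i)
    _ = C * S.op H x := by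
        simp only [WeightedIFS.op, mul_sum, smul_eq_mul, mul_left_comm]
    _ ≤ C * S.quadMean H x := mul_le_mul_of_nonneg_left (S.op_le_quadMean H x) hC

include h hS in
lemma IsMajorant.norm_twisted_mul_exp_le (x z : X) :
    ‖S.twisted θ b u z‖ * Real.exp (-(|b| * dist x z)) ≤
      S.quadMean H x * Real.exp (-((1 - lam) * (|b| * dist x z))) :=
  calc _ ≤ S.quadMean H x * Real.exp (lam * |b| * dist z x) * Real.exp (-(|b| * dist x z)) := by
        gcongr
        exact (h.norm_twisted_le_quadMean θ b z).trans
          (hS.logLipschitz_quadMean (abs_nonneg b) h.nonneg h.logLipschitz z x)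
    _ = _ := by
        rw [mul_assoc, ← Real.exp_add, dist_comm z x]
        congr 2
        ring

include h hS in
lemma IsMajorant.norm_twisted_mul_exp_le_quadMean (x z : X) :
    ‖S.twisted θ b u z‖ * Real.exp (-(|b| * dist x z)) ≤ S.quadMean H x := by
  refine (h.norm_twisted_mul_exp_le hS x z).trans
    (mul_le_of_le_one_right (S.quadMean_nonneg H x) (Real.exp_le_one_iff.2 ?_))
  have : 0 ≤ 1 - lam := sub_nonneg.2 hS.lt_one.le
  have : 0 ≤ (1 - lam) * (|b| * dist x z) := by positivity
  linarith

include h hS in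
lemma IsMajorant.bddAbove_norm_twisted_mul_exp (x : X) :
    BddAbove (Set.range fun z => ‖S.twisted θ b u z‖ * Real.exp (-(|b| * dist x z))) :=
  ⟨S.quadMean H x, by rintro _ ⟨z, rfl⟩; exact h.norm_twisted_mul_exp_le_quadMean hS x z⟩

include h hS in
lemma IsMajorant.nextMajorant_le_quadMean (x : X) :
    S.nextMajorant θ lam b u H x ≤ S.quadMean H x :=
  max_le (logLipHull_le fun z => h.norm_twisted_mul_exp_le_quadMean hS x z)
    (mul_le_of_le_one_left (S.quadMean_nonneg H x) hS.coneRatio_lt_one.le)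

include h hS in
lemma IsMajorant.nextMajorant :
    IsMajorant (coneConst lam) |b| (S.twisted θ b u) (S.nextMajorant θ lam b u H) where
  norm_le x := le_max_of_le_left
    (le_logLipHull (f := fun z => ‖S.twisted θ b u z‖) (h.bddAbove_norm_twisted_mul_exp hS x))
  logLipschitz := by
    refine (logLipschitz_logLipHull (abs_nonneg b) (fun _ => norm_nonneg _)
      (h.bddAbove_norm_twisted_mul_exp hS)).max (LogLipschitz.const_mul ?_ hS.coneRatio_nonneg)
    exact (hS.logLipschitz_quadMean (abs_nonneg b) h.nonneg h.logLipschitz).mono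
      (S.quadMean_nonneg H) (mul_le_of_le_one_left (abs_nonneg b) hS.lt_one.le)
  norm_sub_le x y := by
    have hA := hS.coneConst_nonneg
    calc _ ≤ coneRatio lam * coneConst lam * (|b| * dist x y) * Real.exp (|b| * dist x y) *
          S.quadMean H x := h.norm_twisted_sub_le hS x y
      _ = coneConst lam * (|b| * dist x y) * Real.exp (|b| * dist x y) *
          (coneRatio lam * S.quadMean H x) := by ring
      _ ≤ _ := by
        gcongr
        exact le_max_right _ _

end step

section localGain

variable {ι X : Type*} [PseudoMetricSpace X] {S : WeightedIFS ι X}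
  {θ : ι → X → ℝ} {lam b : ℝ} {u : X → ℂ} {H : X → ℝ}

lemma exists_pos_gain_mul_exp_lt {A η₀ : ℝ} (h0 : 0 < η₀) :
    ∃ δ > 0, (1 - η₀ + A * (2 * δ) * Real.exp (2 * δ)) * Real.exp δ < 1 - η₀ / 2 := by
  have hcont : Continuous fun δ : ℝ =>
      (1 - η₀ + A * (2 * δ) * Real.exp (2 * δ)) * Real.exp δ := by fun_prop
  have hlim : ∀ᶠ δ : ℝ in nhds 0,
      (1 - η₀ + A * (2 * δ) * Real.exp (2 * δ)) * Real.exp δ < 1 - η₀ / 2 := by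
    refine hcont.continuousAt.eventually (gt_mem_nhds ?_)
    simp only [mul_zero, Real.exp_zero, mul_one, add_zero]
    linarith
  obtain ⟨δ, hδ, hδ0⟩ := ((hlim.filter_mono nhdsWithin_le_nhds).and
    (self_mem_nhdsWithin : Set.Ioi (0 : ℝ) ∈ nhdsWithin 0 (Set.Ioi 0))).exists
  exact ⟨δ, hδ0, hδ⟩

lemma IsMajorant.norm_twisted_le_of_near (h : IsMajorant (coneConst lam) |b| u H)
    (hS : S.IsContractive θ lam) {η₀ δ : ℝ} (h1 : η₀ ≤ 1) {s x z : X}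
    (hs : ‖S.twisted θ b u s‖ ≤ (1 - η₀) * S.quadMean H s)
    (hxs : |b| * dist x s ≤ δ) (hxz : |b| * dist x z ≤ δ) :
    ‖S.twisted θ b u z‖ ≤
      (1 - η₀ + coneConst lam * (2 * δ) * Real.exp (2 * δ)) * Real.exp δ * S.quadMean H x := by
  have hA := hS.coneConst_nonneg
  have hG := S.quadMean_nonneg H
  have hδ : 0 ≤ δ := hxs.trans' (by positivity)
  have hsz : |b| * dist s z ≤ 2 * δ := by
    have := mul_le_mul_of_nonneg_left (dist_triangle_left s z x) (abs_nonneg b)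
    linarith
  have hdiff : ‖S.twisted θ b u s - S.twisted θ b u z‖ ≤
      coneConst lam * (2 * δ) * Real.exp (2 * δ) * S.quadMean H s := by
    refine (h.norm_twisted_sub_le hS s z).trans ?_
    have := hG s
    gcongr
    exact mul_le_of_le_one_left hA hS.coneRatio_lt_one.le
  have hGs : S.quadMean H s ≤ Real.exp δ * S.quadMean H x := by
    have hlip := (hS.logLipschitz_quadMean (abs_nonneg b) h.nonneg h.logLipschitz).mono hG
      (mul_le_of_le_one_left (abs_nonneg b) hS.lt_one.le) s x
    refine hlip.trans ?_
    rw [mul_comm, dist_comm]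
    have := hG x
    gcongr
  calc ‖S.twisted θ b u z‖
      ≤ ‖S.twisted θ b u s‖ + ‖S.twisted θ b u s - S.twisted θ b u z‖ := by
        rw [norm_sub_rev]
        exact norm_le_norm_add_norm_sub' _ _
    _ ≤ (1 - η₀ + coneConst lam * (2 * δ) * Real.exp (2 * δ)) * S.quadMean H s := by linarith
    _ ≤ _ := by
        rw [mul_assoc _ (Real.exp δ)]
        refine mul_le_mul_of_nonneg_left hGs (add_nonneg (by linarith) (by positivity))

/-- A gain at the point `s` propagates to the ball of radius `δ / |b|`: nearby, the twisted
function oscillates little; farther away, the contraction of the branches makes its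
log-Lipschitz hull small. -/
lemma exists_forall_nextMajorant_le (ι X : Type*) [PseudoMetricSpace X] {lam η₀ : ℝ}
    (hlam1 : lam < 1) (h0 : 0 < η₀) (h1 : η₀ ≤ 1) :
    ∃ δ > 0, ∃ η > 0, η < 1 ∧ ∀ (S : WeightedIFS ι X) (θ : ι → X → ℝ), S.IsContractive θ lam →
      ∀ (b : ℝ) (u : X → ℂ) (H : X → ℝ), IsMajorant (coneConst lam) |b| u H →
      ∀ s, ‖S.twisted θ b u s‖ ≤ (1 - η₀) * S.quadMean H s → ∀ x, |b| * dist x s ≤ δ →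
        S.nextMajorant θ lam b u H x ≤ (1 - η) * S.quadMean H x := by
  obtain ⟨δ, hδ, hgain⟩ := exists_pos_gain_mul_exp_lt (A := coneConst lam) h0
  set q := max (1 - η₀ / 2) (max (Real.exp (-((1 - lam) * δ))) (coneRatio lam))
  have hq0 : 0 < q := lt_max_of_lt_right (lt_max_of_lt_left (Real.exp_pos _))
  have hq1 : q < 1 := by
    refine max_lt (by linarith) (max_lt (Real.exp_lt_one_iff.2 ?_) (by unfold coneRatio; linarith))
    have := mul_pos (sub_pos.2 hlam1) hδ
    linarith
  refine ⟨δ, hδ, 1 - q, by linarith, by linarith, fun S θ hS b u H h s hs x hx => ?_⟩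
  have hG := S.quadMean_nonneg H x
  rw [sub_sub_cancel]
  refine max_le (logLipHull_le fun z => ?_)
    (mul_le_mul_of_nonneg_right ((le_max_right _ _).trans (le_max_right _ _)) hG)
  rcases le_total (|b| * dist x z) δ with hz | hz
  · calc ‖S.twisted θ b u z‖ * Real.exp (-(|b| * dist x z)) ≤ ‖S.twisted θ b u z‖ :=
          mul_le_of_le_one_right (norm_nonneg _)
            (Real.exp_le_one_iff.2 (neg_nonpos.2 (by positivity)))
      _ ≤ (1 - η₀ / 2) * S.quadMean H x :=
          (h.norm_twisted_le_of_near hS h1 hs hx hz).trans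
            (mul_le_mul_of_nonneg_right hgain.le hG)
      _ ≤ q * S.quadMean H x := mul_le_mul_of_nonneg_right (le_max_left _ _) hG
  · calc _ ≤ S.quadMean H x * Real.exp (-((1 - lam) * (|b| * dist x z))) :=
          h.norm_twisted_mul_exp_le hS x z
      _ ≤ S.quadMean H x * Real.exp (-((1 - lam) * δ)) := by
          have := sub_nonneg.2 hlam1.le
          gcongr
      _ ≤ q * S.quadMean H x := by
          rw [mul_comm]
          exact mul_le_mul_of_nonneg_right ((le_max_left _ _).trans (le_max_right _ _)) hG

end localGain

/-! ### Cancellation from uniform non-integrability -/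

lemma half_abs_le_norm_exp_mul_I_sub {a c : ℝ} (h : |a - c| ≤ 1) :
    |a - c| / 2 ≤ ‖Complex.exp (a * Complex.I) - Complex.exp (c * Complex.I)‖ := by
  have hhalf : |(a - c) / 2| = |a - c| / 2 := by rw [abs_div, abs_two]
  have hπ := Real.pi_gt_three
  have hsin : 2 / Real.pi * |(a - c) / 2| ≤ |Real.sin ((a - c) / 2)| :=
    Real.mul_abs_le_abs_sin (by rw [hhalf]; linarith)
  have hπ' : 1 / 2 ≤ 2 / Real.pi := by
    rw [div_le_div_iff₀ two_pos Real.pi_pos]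
    linarith [Real.pi_le_four]
  rw [norm_exp_mul_I_sub_exp_mul_I, Complex.norm_exp_I_mul_ofReal_sub_one, norm_mul,
    Real.norm_two, Real.norm_eq_abs]
  rw [hhalf] at hsin
  nlinarith [abs_nonneg (a - c)]

lemma sum_mul_norm_sub_sum_sq_le {ι E : Type*} [NormedAddCommGroup E] [InnerProductSpace ℝ E]
    (s : Finset ι) {w : ι → ℝ} (hw : ∑ i ∈ s, w i ≤ 1) (a : ι → E) :
    ∑ i ∈ s, w i * ‖a i - ∑ j ∈ s, w j • a j‖ ^ 2 ≤
      ∑ i ∈ s, w i * ‖a i‖ ^ 2 - ‖∑ j ∈ s, w j • a j‖ ^ 2 := by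
  set v := ∑ j ∈ s, w j • a j with hv
  have hinner : ∑ i ∈ s, w i * inner ℝ (a i) v = ‖v‖ ^ 2 := by
    rw [← real_inner_self_eq_norm_sq]
    nth_rewrite 2 [hv]
    simp only [sum_inner, real_inner_smul_left]
  calc ∑ i ∈ s, w i * ‖a i - v‖ ^ 2
      = ∑ i ∈ s, w i * ‖a i‖ ^ 2 - 2 * ∑ i ∈ s, w i * inner ℝ (a i) v +
          (∑ i ∈ s, w i) * ‖v‖ ^ 2 := by
        rw [mul_sum, sum_mul, ← sum_sub_distrib, ← sum_add_distrib]
        refine sum_congr rfl fun i _ => ?_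
        rw [norm_sub_sq_real]
        ring
    _ ≤ _ := by
        rw [hinner]
        linarith [mul_le_of_le_one_left (sq_nonneg ‖v‖) hw]

namespace WeightedIFS

variable {ι X : Type*} (S : WeightedIFS ι X)

lemma weight_le_one {i : ι} (hi : i ∈ S.index) : S.weight i ≤ 1 :=
  (single_le_sum (fun j _ => S.weight_nonneg j) hi).trans S.sum_weight_le_one

/-- The uniform non-integrability condition: along the branches `α` and `β`, of weight at least
`p`, the phase difference `θ α - θ β` varies at a rate between `c` and `1`, whereas both branches
contract by the (much smaller) factor `κ`. -/
structure IsUniformPair [PseudoMetricSpace X] (S : WeightedIFS ι X) (θ : ι → X → ℝ)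
    (c κ p : ℝ) (α β : ι) : Prop where
  mem_left : α ∈ S.index
  mem_right : β ∈ S.index
  le_weight_left : p ≤ S.weight α
  le_weight_right : p ≤ S.weight β
  dist_left_le : ∀ x y, dist (S.map α x) (S.map α y) ≤ κ * dist x y
  dist_right_le : ∀ x y, dist (S.map β x) (S.map β y) ≤ κ * dist x y
  mul_dist_le : ∀ x y, c * dist x y ≤ |(θ α x - θ β x) - (θ α y - θ β y)|
  abs_sub_le : ∀ x y, |(θ α x - θ β x) - (θ α y - θ β y)| ≤ dist x y

end WeightedIFS

section saturation

variable {ι X : Type*} [PseudoMetricSpace X] {S : WeightedIFS ι X} {θ : ι → X → ℝ}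
  {A B b p ε : ℝ} {u : X → ℂ} {H : X → ℝ} {x : X} {i : ι}

lemma IsMajorant.defect_le (h : IsMajorant A B u H) (θ : ι → X → ℝ) (b : ℝ) (x : X)
    (hi : i ∈ S.index) :
    S.weight i * (‖Complex.exp ((b * θ i x : ℝ) * Complex.I) * u (S.map i x) -
        S.twisted θ b u x‖ ^ 2 + (H (S.map i x) ^ 2 - ‖u (S.map i x)‖ ^ 2)) ≤
      S.quadMean H x ^ 2 - ‖S.twisted θ b u x‖ ^ 2 := by
  set a : ι → ℂ := fun i => Complex.exp ((b * θ i x : ℝ) * Complex.I) * u (S.map i x)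
  have hnorm : ∀ i, ‖a i‖ = ‖u (S.map i x)‖ := fun i => by
    rw [norm_mul, Complex.norm_exp_ofReal_mul_I, one_mul]
  have hvar := sum_mul_norm_sub_sum_sq_le S.index S.sum_weight_le_one a
  have hgap : ∀ i, 0 ≤ H (S.map i x) ^ 2 - ‖u (S.map i x)‖ ^ 2 := fun i =>
    sub_nonneg.2 (pow_le_pow_left₀ (norm_nonneg _) (h.norm_le _) 2)
  calc _ ≤ ∑ i ∈ S.index, S.weight i * (‖a i - S.twisted θ b u x‖ ^ 2 +
          (H (S.map i x) ^ 2 - ‖u (S.map i x)‖ ^ 2)) :=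
        single_le_sum (f := fun i => S.weight i * (‖a i - S.twisted θ b u x‖ ^ 2 +
          (H (S.map i x) ^ 2 - ‖u (S.map i x)‖ ^ 2)))
          (fun i _ => mul_nonneg (S.weight_nonneg i) (add_nonneg (sq_nonneg _) (hgap i))) hi
    _ = ∑ i ∈ S.index, S.weight i * ‖a i - S.twisted θ b u x‖ ^ 2 + S.quadMean H x ^ 2 -
          ∑ i ∈ S.index, S.weight i * ‖a i‖ ^ 2 := by
        simp only [S.sq_quadMean, WeightedIFS.op, smul_eq_mul, hnorm]
        rw [← sum_add_distrib, ← sum_sub_distrib]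
        exact sum_congr rfl fun i _ => by ring
    _ ≤ _ := by
        unfold WeightedIFS.twisted
        linarith

lemma IsMajorant.defect_sq_le (h : IsMajorant A B u H) (hi : i ∈ S.index) (hp : 0 < p)
    (hpi : p ≤ S.weight i) (hε0 : 0 ≤ ε) (hε : ε ≤ 1 / 4)
    (hv : (1 - p * ε ^ 2 / 2) * S.quadMean H x < ‖S.twisted θ b u x‖) :
    ‖Complex.exp ((b * θ i x : ℝ) * Complex.I) * u (S.map i x) - S.twisted θ b u x‖ ^ 2 +
      (H (S.map i x) ^ 2 - ‖u (S.map i x)‖ ^ 2) ≤ (ε * S.quadMean H x) ^ 2 := by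
  have hdef := h.defect_le θ b x hi
  set Q := ‖Complex.exp ((b * θ i x : ℝ) * Complex.I) * u (S.map i x) - S.twisted θ b u x‖ ^ 2 +
    (H (S.map i x) ^ 2 - ‖u (S.map i x)‖ ^ 2)
  set G := S.quadMean H x
  have hG0 : 0 ≤ G := S.quadMean_nonneg H x
  have hQ : 0 ≤ Q := add_nonneg (sq_nonneg _)
    (sub_nonneg.2 (pow_le_pow_left₀ (norm_nonneg _) (h.norm_le _) 2))
  have hpε : p * ε ^ 2 ≤ 1 := by
    have := S.weight_le_one hi
    calc p * ε ^ 2 ≤ 1 * 1 ^ 2 := by gcongr <;> linarith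
      _ = 1 := by norm_num
  have hsq : (1 - p * ε ^ 2) * G ^ 2 ≤ ‖S.twisted θ b u x‖ ^ 2 := by
    have hvsq := pow_le_pow_left₀ (mul_nonneg (by linarith) hG0) hv.le 2
    nlinarith [sq_nonneg (p * ε ^ 2 * G)]
  have hweight := mul_le_mul_of_nonneg_right hpi hQ
  refine le_of_mul_le_mul_left ?_ hp
  calc p * Q ≤ G ^ 2 - ‖S.twisted θ b u x‖ ^ 2 := hweight.trans hdef
    _ ≤ p * (ε * G) ^ 2 := by linarith

section

variable (h : IsMajorant A B u H) (hi : i ∈ S.index) (hp : 0 < p)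
    (hpi : p ≤ S.weight i) (hε0 : 0 ≤ ε) (hε : ε ≤ 1 / 4)
    (hv : (1 - p * ε ^ 2 / 2) * S.quadMean H x < ‖S.twisted θ b u x‖)

include h hi hp hpi hε0 hε hv

lemma IsMajorant.norm_term_sub_twisted_le :
    ‖Complex.exp ((b * θ i x : ℝ) * Complex.I) * u (S.map i x) - S.twisted θ b u x‖ ≤
      ε * S.quadMean H x := by
  have hdef := h.defect_sq_le hi hp hpi hε0 hε hv
  have hgap := pow_le_pow_left₀ (norm_nonneg _) (h.norm_le (S.map i x)) 2
  exact le_of_sq_le_sq (by linarith) (mul_nonneg hε0 (S.quadMean_nonneg H x))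

lemma IsMajorant.apply_map_le : H (S.map i x) ≤ 2 * S.quadMean H x := by
  have hG := S.quadMean_nonneg H x
  have hdef := h.defect_sq_le hi hp hpi hε0 hε hv
  have hterm := h.norm_term_sub_twisted_le hi hp hpi hε0 hε hv
  set e := Complex.exp ((b * θ i x : ℝ) * Complex.I)
  have hu : ‖u (S.map i x)‖ ≤ (1 + ε) * S.quadMean H x := by
    have hadd := norm_le_norm_add_norm_sub' (e * u (S.map i x)) (S.twisted θ b u x)
    have hle : ‖S.twisted θ b u x‖ ≤ S.quadMean H x := h.norm_twisted_le_quadMean θ b x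
    rw [norm_mul, Complex.norm_exp_ofReal_mul_I, one_mul] at hadd
    linarith
  refine le_of_sq_le_sq ?_ (by positivity)
  calc H (S.map i x) ^ 2 ≤ ((1 + ε) * S.quadMean H x) ^ 2 + (ε * S.quadMean H x) ^ 2 := by
        linarith [pow_le_pow_left₀ (norm_nonneg _) hu 2,
          sq_nonneg ‖e * u (S.map i x) - S.twisted θ b u x‖]
    _ = ((1 + ε) ^ 2 + ε ^ 2) * S.quadMean H x ^ 2 := by ring
    _ ≤ 2 ^ 2 * S.quadMean H x ^ 2 := by
        gcongr
        nlinarith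
    _ = _ := by ring

lemma IsMajorant.half_quadMean_le_norm : S.quadMean H x / 2 ≤ ‖u (S.map i x)‖ := by
  have hG := S.quadMean_nonneg H x
  have hterm := h.norm_term_sub_twisted_le hi hp hpi hε0 hε hv
  have hsub := norm_sub_norm_le (S.twisted θ b u x)
    (Complex.exp ((b * θ i x : ℝ) * Complex.I) * u (S.map i x))
  rw [norm_mul, Complex.norm_exp_ofReal_mul_I, one_mul, norm_sub_rev] at hsub
  have hpε : p * ε ^ 2 ≤ 1 / 4 := by
    have := S.weight_le_one hi
    calc p * ε ^ 2 ≤ 1 * (1 / 4) ^ 2 := by gcongr; linarith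
      _ ≤ 1 / 4 := by norm_num
  have := mul_le_mul_of_nonneg_right hpε hG
  have := mul_le_mul_of_nonneg_right hε hG
  linarith

end

end saturation

section cancellation

variable {ι X : Type*} [PseudoMetricSpace X] {S : WeightedIFS ι X} {θ : ι → X → ℝ}
  {A B b c κ p ε lam : ℝ} {u : X → ℂ} {H : X → ℝ} {x y : X} {i α β : ι}

lemma IsMajorant.norm_mul_sub_le_of_pair (h : IsMajorant A B u H)
    (hpair : S.IsUniformPair θ c κ p α β) (hp : 0 < p) (hε0 : 0 ≤ ε) (hε : ε ≤ 1 / 4)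
    (hv : (1 - p * ε ^ 2 / 2) * S.quadMean H x < ‖S.twisted θ b u x‖) :
    ‖Complex.exp ((b * (θ α x - θ β x) : ℝ) * Complex.I) * u (S.map α x) - u (S.map β x)‖ ≤
      2 * ε * S.quadMean H x := by
  have hα := h.norm_term_sub_twisted_le hpair.mem_left hp hpair.le_weight_left hε0 hε hv
  have hβ := h.norm_term_sub_twisted_le hpair.mem_right hp hpair.le_weight_right hε0 hε hv
  set e := Complex.exp ((b * θ β x : ℝ) * Complex.I)
  have he : ‖e‖ = 1 := Complex.norm_exp_ofReal_mul_I _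
  have hmul : Complex.exp ((b * θ α x : ℝ) * Complex.I) =
      e * Complex.exp ((b * (θ α x - θ β x) : ℝ) * Complex.I) := by
    rw [← Complex.exp_add]
    congr 1
    push_cast
    ring
  rw [← one_mul ‖_ - _‖, ← he, ← norm_mul, mul_sub, ← mul_assoc, ← hmul]
  refine (norm_sub_le_norm_sub_add_norm_sub _ (S.twisted θ b u x) _).trans ?_
  rw [norm_sub_rev (S.twisted θ b u x)]
  linarith

lemma IsMajorant.norm_comp_sub_comp_le (h : IsMajorant A |b| u H) (hA : 0 ≤ A) (hκ : κ ≤ 1)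
    (hdist : dist (S.map i x) (S.map i y) ≤ κ * dist x y) (hxy : |b| * dist x y ≤ 1)
    (hH : H (S.map i x) ≤ 2 * S.quadMean H x) :
    ‖u (S.map i x) - u (S.map i y)‖ ≤ 6 * A * κ * (|b| * dist x y) * S.quadMean H x := by
  have hb : |b| * dist (S.map i x) (S.map i y) ≤ κ * (|b| * dist x y) :=
    (mul_le_mul_of_nonneg_left hdist (abs_nonneg b)).trans_eq (by ring)
  have hexp : Real.exp (|b| * dist (S.map i x) (S.map i y)) ≤ 3 :=
    (Real.exp_le_exp.2 (hb.trans ((mul_le_of_le_one_left (by positivity) hκ).trans hxy))).trans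
      Real.exp_one_lt_three.le
  have := h.nonneg (S.map i x)
  have hr : 0 ≤ κ * (|b| * dist x y) := hb.trans' (by positivity)
  calc _ ≤ A * (|b| * dist (S.map i x) (S.map i y)) *
          Real.exp (|b| * dist (S.map i x) (S.map i y)) * H (S.map i x) := h.norm_sub_le _ _
    _ ≤ A * (κ * (|b| * dist x y)) * 3 * (2 * S.quadMean H x) := by gcongr
    _ = _ := by ring

lemma IsMajorant.quadMean_pos (h : IsMajorant A B u H)
    {η : ℝ} (hv : (1 - η) * S.quadMean H x < ‖S.twisted θ b u x‖) : 0 < S.quadMean H x := by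
  refine (S.quadMean_nonneg H x).lt_of_ne' fun h0 => hv.not_ge ?_
  rw [h0, mul_zero, ← h0]
  exact h.norm_twisted_le_quadMean θ b x

lemma IsMajorant.quadMean_le_three_mul (h : IsMajorant A |b| u H) (hS : S.IsContractive θ lam)
    (hxy : |b| * dist x y ≤ 1) : S.quadMean H y ≤ 3 * S.quadMean H x := by
  have hG := S.quadMean_nonneg H x
  have hexp : Real.exp (lam * |b| * dist y x) ≤ 3 := by
    rw [mul_assoc, dist_comm]
    refine (Real.exp_le_exp.2 ?_).trans Real.exp_one_lt_three.le
    exact (mul_le_of_le_one_left (by positivity) hS.lt_one.le).trans hxy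
  calc S.quadMean H y ≤ S.quadMean H x * Real.exp (lam * |b| * dist y x) :=
        hS.logLipschitz_quadMean (abs_nonneg b) h.nonneg h.logLipschitz y x
    _ ≤ 3 * S.quadMean H x := by rw [mul_comm]; gcongr

lemma IsMajorant.norm_phase_sub_mul_le (h : IsMajorant (coneConst lam) |b| u H)
    (hS : S.IsContractive θ lam) (hpair : S.IsUniformPair θ c κ p α β) (hκ : κ ≤ 1)
    (hp : 0 < p) (hε0 : 0 ≤ ε) (hε : ε ≤ 1 / 4) (hxy : |b| * dist x y ≤ 1)
    (hx : (1 - p * ε ^ 2 / 2) * S.quadMean H x < ‖S.twisted θ b u x‖)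
    (hy : (1 - p * ε ^ 2 / 2) * S.quadMean H y < ‖S.twisted θ b u y‖) :
    ‖(Complex.exp ((b * (θ α x - θ β x) : ℝ) * Complex.I) -
        Complex.exp ((b * (θ α y - θ β y) : ℝ) * Complex.I)) * u (S.map α x)‖ ≤
      (8 * ε + 12 * coneConst lam * κ * (|b| * dist x y)) * S.quadMean H x := by
  have hGy : S.quadMean H y ≤ 3 * S.quadMean H x := h.quadMean_le_three_mul hS hxy
  have hux := h.norm_mul_sub_le_of_pair hpair hp hε0 hε hx
  have huy := h.norm_mul_sub_le_of_pair hpair hp hε0 hε hy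
  have hoscα := h.norm_comp_sub_comp_le hS.coneConst_nonneg hκ (hpair.dist_left_le x y) hxy
    (h.apply_map_le hpair.mem_left hp hpair.le_weight_left hε0 hε hx)
  have hoscβ := h.norm_comp_sub_comp_le hS.coneConst_nonneg hκ (hpair.dist_right_le x y) hxy
    (h.apply_map_le hpair.mem_right hp hpair.le_weight_right hε0 hε hx)
  have hunit := Complex.norm_exp_ofReal_mul_I (b * (θ α y - θ β y))
  set wx := Complex.exp ((b * (θ α x - θ β x) : ℝ) * Complex.I)
  set wy := Complex.exp ((b * (θ α y - θ β y) : ℝ) * Complex.I)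
  have hsplit : (wx - wy) * u (S.map α x) =
      (wx * u (S.map α x) - u (S.map β x)) - (wy * u (S.map α y) - u (S.map β y)) +
        ((u (S.map β x) - u (S.map β y)) - wy * (u (S.map α x) - u (S.map α y))) := by ring
  have hosc : ‖wy * (u (S.map α x) - u (S.map α y))‖ ≤
      6 * coneConst lam * κ * (|b| * dist x y) * S.quadMean H x := by
    rwa [norm_mul, hunit, one_mul]
  rw [hsplit]
  refine (norm_add_le_of_le (norm_sub_le_of_le hux huy) (norm_sub_le_of_le hoscβ hosc)).trans ?_
  linarith [mul_le_mul_of_nonneg_left hGy hε0]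

/-- If neither `x` nor `y` sees cancellation, then along both branches of the pair `u` nearly
saturates its majorant, so that the phase difference cannot vary between `x` and `y` by more
than the small oscillation of `u` along these branches. -/
lemma IsMajorant.mul_dist_le_of_lt_norm_twisted (h : IsMajorant (coneConst lam) |b| u H)
    (hS : S.IsContractive θ lam) (hpair : S.IsUniformPair θ c κ p α β) (hκ : κ ≤ 1)
    (hp : 0 < p) (hε0 : 0 ≤ ε) (hε : ε ≤ 1 / 4) (hxy : |b| * dist x y ≤ 1)
    (hx : (1 - p * ε ^ 2 / 2) * S.quadMean H x < ‖S.twisted θ b u x‖)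
    (hy : (1 - p * ε ^ 2 / 2) * S.quadMean H y < ‖S.twisted θ b u y‖) :
    c * (|b| * dist x y) / 4 ≤ 8 * ε + 12 * coneConst lam * κ * (|b| * dist x y) := by
  set φ : X → ℝ := fun z => b * (θ α z - θ β z) with hφ
  have hmul : |φ x - φ y| = |b| * |(θ α x - θ β x) - (θ α y - θ β y)| := by
    rw [hφ, ← mul_sub, abs_mul]
  have hφ_le : |φ x - φ y| ≤ |b| * dist x y :=
    hmul.trans_le (mul_le_mul_of_nonneg_left (hpair.abs_sub_le x y) (abs_nonneg b))
  have hle_φ : c * (|b| * dist x y) ≤ |φ x - φ y| := by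
    rw [hmul, mul_left_comm]
    exact mul_le_mul_of_nonneg_left (hpair.mul_dist_le x y) (abs_nonneg b)
  have hG : 0 < S.quadMean H x := h.quadMean_pos hx
  have hlower : c * (|b| * dist x y) / 2 * (S.quadMean H x / 2) ≤
      ‖(Complex.exp (φ x * Complex.I) - Complex.exp (φ y * Complex.I)) * u (S.map α x)‖ := by
    rw [norm_mul]
    have hphase := half_abs_le_norm_exp_mul_I_sub (hφ_le.trans hxy)
    exact mul_le_mul (by linarith)
      (h.half_quadMean_le_norm hpair.mem_left hp hpair.le_weight_left hε0 hε hx)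
      (by positivity) (norm_nonneg _)
  refine le_of_mul_le_mul_right ?_ hG
  linarith [hlower.trans (h.norm_phase_sub_mul_le hS hpair hκ hp hε0 hε hxy hx hy)]

lemma exists_norm_twisted_le_or (ι X : Type*) [PseudoMetricSpace X] (hc : 0 < c) (hp : 0 < p)
    (hκ : κ ≤ 1) (hcκ : 96 * coneConst lam * κ ≤ c) {r₀ : ℝ} (hr₀ : 0 < r₀) :
    ∃ η > 0, η ≤ 1 ∧ ∀ (S : WeightedIFS ι X) (θ : ι → X → ℝ) (α β : ι),
      S.IsContractive θ lam → S.IsUniformPair θ c κ p α β →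
      ∀ (b : ℝ) (u : X → ℂ) (H : X → ℝ), IsMajorant (coneConst lam) |b| u H →
      ∀ x y, r₀ ≤ |b| * dist x y → |b| * dist x y ≤ 1 →
        ‖S.twisted θ b u x‖ ≤ (1 - η) * S.quadMean H x ∨
        ‖S.twisted θ b u y‖ ≤ (1 - η) * S.quadMean H y := by
  set ε := min (1 / 4) (c * r₀ / 65)
  have hε0 : 0 < ε := lt_min (by norm_num) (by positivity)
  have hε4 : ε ≤ 1 / 4 := min_le_left _ _
  have hεc : ε ≤ c * r₀ / 65 := min_le_right _ _
  refine ⟨min 1 (p * ε ^ 2 / 2), lt_min one_pos (by positivity), min_le_left _ _, ?_⟩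
  intro S θ α β hS hpair b u H h x y hr hxy
  by_contra! ⟨hx, hy⟩
  have hweaken : ∀ z, (1 - p * ε ^ 2 / 2) * S.quadMean H z ≤
      (1 - min 1 (p * ε ^ 2 / 2)) * S.quadMean H z := fun z =>
    mul_le_mul_of_nonneg_right (by linarith [min_le_right 1 (p * ε ^ 2 / 2)])
      (S.quadMean_nonneg H z)
  have hkey := h.mul_dist_le_of_lt_norm_twisted hS hpair hκ hp hε0.le hε4 hxy
    ((hweaken x).trans_lt hx) ((hweaken y).trans_lt hy)
  have hosc := mul_le_mul_of_nonneg_right hcκ (hr₀.le.trans hr)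
  have hphase := mul_le_mul_of_nonneg_left hr hc.le
  linarith

lemma exists_forall_nextMajorant_le_or (ι X : Type*) [PseudoMetricSpace X] (hlam : lam < 1)
    (hc : 0 < c) (hp : 0 < p) (hκ : κ ≤ 1) (hcκ : 96 * coneConst lam * κ ≤ c) {r₀ : ℝ}
    (hr₀ : 0 < r₀) :
    ∃ δ > 0, ∃ η > 0, η < 1 ∧ ∀ (S : WeightedIFS ι X) (θ : ι → X → ℝ) (α β : ι),
      S.IsContractive θ lam → S.IsUniformPair θ c κ p α β →
      ∀ (b : ℝ) (u : X → ℂ) (H : X → ℝ), IsMajorant (coneConst lam) |b| u H →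
      ∀ x y, r₀ ≤ |b| * dist x y → |b| * dist x y ≤ 1 → ∃ s, (s = x ∨ s = y) ∧
        ∀ z, |b| * dist z s ≤ δ →
          S.nextMajorant θ lam b u H z ≤ (1 - η) * S.quadMean H z := by
  obtain ⟨η₀, hη₀, hη₀1, hcancel⟩ := exists_norm_twisted_le_or ι X hc hp hκ hcκ hr₀
  obtain ⟨δ, hδ, η, hη, hη1, hlocal⟩ := exists_forall_nextMajorant_le ι X hlam hη₀ hη₀1
  refine ⟨δ, hδ, η, hη, hη1, fun S θ α β hS hpair b u H h x y hr hxy => ?_⟩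
  rcases hcancel S θ α β hS hpair b u H h x y hr hxy with hx | hy
  · exact ⟨x, Or.inl rfl, hlocal S θ hS b u H h x hx⟩
  · exact ⟨y, Or.inr rfl, hlocal S θ hS b u H h y hy⟩

end cancellation

/-! ### The continued fraction branches -/

/-- The weights of the branches. -/
noncomputable def wt (n : ℕ) : ℝ := (1 / 2) ^ (n + 1)

lemma wt_pos (n : ℕ) : 0 < wt n := by
  unfold wt
  positivity

lemma wt_antitone : Antitone wt := fun _ _ h =>
  pow_le_pow_of_le_one (by norm_num) (by norm_num) (by omega)

lemma sum_range_wt (N : ℕ) : ∑ n ∈ range N, wt n = 1 - (1 / 2) ^ N := by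
  induction N with
  | zero => simp
  | succ k ih =>
    rw [sum_range_succ, ih, wt]
    ring

lemma sum_wt_le {s : Finset ℕ} {m : ℕ} (hm : ∀ n ∈ s, m ≤ n) : ∑ n ∈ s, wt n ≤ (1 / 2) ^ m := by
  set N := m + (s.sup id + 1)
  have hs : s ⊆ Ico m N := fun n hn => mem_Ico.2
    ⟨hm n hn, (mem_range.1 (subset_range_sup_succ s hn)).trans_le (Nat.le_add_left _ m)⟩
  have hN : (0 : ℝ) ≤ (1 / 2) ^ N := by positivity
  calc ∑ n ∈ s, wt n ≤ ∑ n ∈ Ico m N, wt n :=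
        sum_le_sum_of_subset_of_nonneg hs fun n _ _ => (wt_pos n).le
    _ = (1 / 2) ^ m - (1 / 2) ^ N := by
        rw [sum_Ico_eq_sub _ (Nat.le_add_right m _), sum_range_wt, sum_range_wt]
        ring
    _ ≤ _ := by linarith

/-- The denominator of the `n`-th branch. -/
noncomputable def den (t : ℝ) (n : ℕ) (x : ℝ) : ℝ := 2 + t * (n + 1) - x

section branch

variable {t x : ℝ}

lemma one_add_le_den (t : ℝ) (n : ℕ) (hx : x ≤ 1) : 1 + t * (n + 1) ≤ den t n x := by
  unfold den
  linarith

variable (ht : 0 < t)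

include ht

lemma one_add_t_le_den (n : ℕ) (hx : x ≤ 1) : 1 + t ≤ den t n x := by
  have := one_add_le_den t n hx
  have : 0 ≤ t * n := by positivity
  linarith

lemma one_lt_den (n : ℕ) (hx : x ≤ 1) : 1 < den t n x := by
  linarith [one_add_t_le_den ht n hx]

lemma den_pos (n : ℕ) (hx : x ≤ 1) : 0 < den t n x := one_pos.trans (one_lt_den ht n hx)

omit ht in
/-- The `n`-th inverse continued fraction branch `y ↦ 1 / (2 + t (n + 1) - y)`. -/
noncomputable def branch (ht : 0 < t) (n : ℕ) (y : unitInterval) : unitInterval :=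
  ⟨1 / den t n y, (one_div_pos.2 (den_pos ht n y.2.2)).le,
    (div_le_one (den_pos ht n y.2.2)).2 (one_lt_den ht n y.2.2).le⟩

lemma coe_branch (n : ℕ) (y : unitInterval) : (branch ht n y : ℝ) = 1 / den t n y := rfl

lemma branch_sub (n : ℕ) (y z : unitInterval) :
    (branch ht n y : ℝ) - branch ht n z = ((y : ℝ) - z) / (den t n y * den t n z) := by
  rw [coe_branch, coe_branch,
    div_sub_div _ _ (den_pos ht n y.2.2).ne' (den_pos ht n z.2.2).ne', den, den]
  ring

lemma dist_branch (n : ℕ) (y z : unitInterval) :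
    dist (branch ht n y) (branch ht n z) = dist y z / (den t n y * den t n z) := by
  rw [Subtype.dist_eq, Subtype.dist_eq, Real.dist_eq, Real.dist_eq, branch_sub, abs_div,
    abs_of_pos (mul_pos (den_pos ht n y.2.2) (den_pos ht n z.2.2))]

lemma dist_branch_le {n : ℕ} {a : ℝ} (ha : 0 < a) (y z : unitInterval)
    (hy : a ≤ den t n y) (hz : a ≤ den t n z) :
    dist (branch ht n y) (branch ht n z) ≤ 1 / a ^ 2 * dist y z := by
  rw [dist_branch, div_eq_mul_inv, mul_comm, ← one_div, sq]
  have := (den_pos ht n y.2.2).le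
  gcongr

lemma log_den_sub_log_den_le (n : ℕ) (y z : unitInterval) :
    Real.log (den t n y) - Real.log (den t n z) ≤ dist y z := by
  have hy := den_pos ht n y.2.2
  have hz := den_pos ht n z.2.2
  rw [← Real.log_div hy.ne' hz.ne', Subtype.dist_eq, Real.dist_eq]
  calc Real.log (den t n y / den t n z) ≤ den t n y / den t n z - 1 :=
        Real.log_le_sub_one_of_pos (div_pos hy hz)
    _ = ((z : ℝ) - y) / den t n z := by
        rw [div_sub_one hz.ne', den, den]
        ring
    _ ≤ |(y : ℝ) - z| / den t n z := by
        rw [abs_sub_comm]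
        gcongr
        exact le_abs_self _
    _ ≤ |(y : ℝ) - z| := div_le_self (abs_nonneg _) (one_lt_den ht n z.2.2).le

end branch

/-- The phase cocycle of the branches: half the logarithm of `1 / |branch'|`. -/
noncomputable def logDen (t : ℝ) (n : ℕ) (y : unitInterval) : ℝ := Real.log (den t n y)

/-- The first `N` branches. -/
noncomputable def branchIFS {t : ℝ} (ht : 0 < t) (N : ℕ) : WeightedIFS ℕ unitInterval where
  index := range N
  weight := wt
  map := branch ht
  weight_nonneg n := (wt_pos n).le
  sum_weight_le_one := by simpa using sum_wt_le (s := range N) (m := 0) (by simp)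

section

variable {t : ℝ} (ht : 0 < t) (N : ℕ)

lemma isContractive_branchIFS :
    (branchIFS ht N).IsContractive (logDen t) (1 / (1 + t)) where
  nonneg := by positivity
  lt_one := (div_lt_one (by positivity)).2 (by linarith)
  dist_map_le n y z := by
    refine (dist_branch_le ht (by positivity) y z (one_add_t_le_den ht n y.2.2)
      (one_add_t_le_den ht n z.2.2)).trans ?_
    gcongr
    exact le_self_pow₀ (by linarith) two_ne_zero
  abs_sub_le n y z := abs_sub_le_iff.2
    ⟨log_den_sub_log_den_le ht n y z, (log_den_sub_log_den_le ht n z y).trans_eq (dist_comm z y)⟩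

end

lemma den_two_mul_add_one (t : ℝ) (m : ℕ) (x : ℝ) :
    den t (2 * m + 1) x = 2 + 2 * (t * (m + 1)) - x := by
  unfold den
  push_cast
  ring

lemma log_sub_log_sub_log_sub_log_bounds {M y z : ℝ} (hM : 2 ≤ M) (hy : 0 ≤ y) (hyz : y ≤ z)
    (hz : z ≤ 1) :
    1 / (6 * M) * (z - y) ≤ (Real.log (2 + M - y) - Real.log (2 + 2 * M - y)) -
        (Real.log (2 + M - z) - Real.log (2 + 2 * M - z)) ∧
      (Real.log (2 + M - y) - Real.log (2 + 2 * M - y)) -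
        (Real.log (2 + M - z) - Real.log (2 + 2 * M - z)) ≤ z - y := by
  have h₁ : 0 < 2 + M - y := by linarith
  have h₂ : 0 < 2 + 2 * M - y := by linarith
  have h₃ : 0 < 2 + M - z := by linarith
  have h₄ : 0 < 2 + 2 * M - z := by linarith
  have : 0 ≤ M * (z - y) := mul_nonneg (by linarith) (by linarith)
  set q := (2 + M - y) * (2 + 2 * M - z) / ((2 + 2 * M - y) * (2 + M - z)) with hq
  have hq0 : 0 < q := by positivity
  have hlog : (Real.log (2 + M - y) - Real.log (2 + 2 * M - y)) -
      (Real.log (2 + M - z) - Real.log (2 + 2 * M - z)) = Real.log q := by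
    rw [hq, Real.log_div (by positivity) (by positivity), Real.log_mul h₁.ne' h₄.ne',
      Real.log_mul h₂.ne' h₃.ne']
    ring
  rw [hlog]
  constructor
  · calc 1 / (6 * M) * (z - y) = M * (z - y) / ((2 * M) * (3 * M)) := by field_simp; ring
      _ ≤ M * (z - y) / ((2 + M - y) * (2 + 2 * M - z)) := by gcongr <;> linarith
      _ = 1 - q⁻¹ := by
        rw [hq, inv_div, one_sub_div (by positivity)]
        ring
      _ ≤ Real.log q := Real.one_sub_inv_le_log_of_pos hq0
  · calc Real.log q ≤ q - 1 := Real.log_le_sub_one_of_pos hq0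
      _ = M * (z - y) / ((2 + 2 * M - y) * (2 + M - z)) := by
        rw [hq, div_sub_one (by positivity)]
        ring
      _ ≤ M * (z - y) / (M * 1) := by gcongr <;> linarith
      _ = z - y := by field_simp

lemma logDen_sub_logDen_bounds {t : ℝ} {m : ℕ} (hM : 2 ≤ t * (m + 1)) (y z : unitInterval) :
    1 / (6 * (t * (m + 1))) * dist y z ≤
        |(logDen t m y - logDen t (2 * m + 1) y) - (logDen t m z - logDen t (2 * m + 1) z)| ∧
      |(logDen t m y - logDen t (2 * m + 1) y) - (logDen t m z - logDen t (2 * m + 1) z)| ≤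
        dist y z := by
  wlog hyz : y ≤ z generalizing y z
  · rw [dist_comm, abs_sub_comm]
    exact this z y (le_of_not_ge hyz)
  replace hyz : (y : ℝ) ≤ z := hyz
  have hbounds := log_sub_log_sub_log_sub_log_bounds hM y.2.1 hyz z.2.2
  have hdist : dist y z = (z : ℝ) - (y : ℝ) := by
    rw [dist_comm, Subtype.dist_eq, Real.dist_eq, abs_of_nonneg (sub_nonneg.2 hyz)]
  simp only [logDen, den_two_mul_add_one]
  simp only [den]
  rw [hdist, abs_of_nonneg (hbounds.1.trans' (mul_nonneg (by positivity) (sub_nonneg.2 hyz)))]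
  exact hbounds

/-- Higher branches contract like `1 / M ^ 2`, where `M = t (m + 1)`, but the phases of the
branches `m` and `2 m + 1` separate at the slower rate `1 / M`. -/
lemma isUniformPair_branchIFS {t : ℝ} (ht : 0 < t) {N m : ℕ} (hM : 2 ≤ t * (m + 1))
    (hN : 2 * m + 2 ≤ N) :
    (branchIFS ht N).IsUniformPair (logDen t) (1 / (6 * (t * (m + 1))))
      (1 / (t * (m + 1)) ^ 2) (wt (2 * m + 1)) m (2 * m + 1) where
  mem_left := mem_range.2 (by omega)
  mem_right := mem_range.2 (by omega)
  le_weight_left := wt_antitone (by omega)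
  le_weight_right := le_rfl
  dist_left_le y z := dist_branch_le ht (by linarith) y z
    (by linarith [one_add_le_den t m y.2.2]) (by linarith [one_add_le_den t m z.2.2])
  dist_right_le y z := by
    have hy := y.2.2
    have hz := z.2.2
    apply dist_branch_le ht (by linarith) y z <;> rw [den_two_mul_add_one] <;> linarith
  mul_dist_le y z := (logDen_sub_logDen_bounds hM y z).1
  abs_sub_le y z := (logDen_sub_logDen_bounds hM y z).2

lemma exists_forall_nextMajorant_branchIFS_le_or {t : ℝ} (ht : 0 < t) {r₀ : ℝ} (hr₀ : 0 < r₀) :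
    ∃ N₀ : ℕ, ∃ δ > 0, ∃ η > 0, η < 1 ∧ ∀ N ≥ N₀, ∀ (b : ℝ) (u : unitInterval → ℂ)
      (H : unitInterval → ℝ), IsMajorant (coneConst (1 / (1 + t))) |b| u H →
      ∀ x y, r₀ ≤ |b| * dist x y → |b| * dist x y ≤ 1 → ∃ s, (s = x ∨ s = y) ∧
        ∀ z, |b| * dist z s ≤ δ →
          (branchIFS ht N).nextMajorant (logDen t) (1 / (1 + t)) b u H z ≤
            (1 - η) * (branchIFS ht N).quadMean H z := by
  set A := coneConst (1 / (1 + t))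
  obtain ⟨m, hm⟩ := exists_nat_ge ((2 + 576 * A) / t)
  have hA : 0 ≤ A := (isContractive_branchIFS ht 0).coneConst_nonneg
  have hM : 2 + 576 * A ≤ t * (m + 1) := by
    rw [div_le_iff₀ ht] at hm
    linarith
  have : 0 < t * (m + 1) := by positivity
  obtain ⟨δ, hδ, η, hη, hη1, hgain⟩ := exists_forall_nextMajorant_le_or ℕ unitInterval
    (lam := 1 / (1 + t)) (c := 1 / (6 * (t * (m + 1)))) (κ := 1 / (t * (m + 1)) ^ 2)
    (p := wt (2 * m + 1)) (isContractive_branchIFS ht 0).lt_one (by positivity) (wt_pos _)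
    ((div_le_one (by positivity)).2 (one_le_pow₀ (by linarith)))
    (by
      rw [mul_one_div, div_le_div_iff₀ (by positivity) (by positivity)]
      nlinarith) hr₀
  exact ⟨2 * m + 2, δ, hδ, η, hη, hη1, fun N hN => hgain (branchIFS ht N) (logDen t) m (2 * m + 1)
    (isContractive_branchIFS ht N) (isUniformPair_branchIFS ht (by linarith) hN)⟩

/-! ### Loss of mass along the tree of branches -/

/-- A word in the branches, seen as a Möbius self-map `φ` of the unit interval with
`φ' r = 1 / (d (1 - ρ r)) ^ 2`. -/
structure Node (t : ℝ) (φ : unitInterval → unitInterval) (d ρ : ℝ) : Prop where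
  d_pos : 0 < d
  rho_nonneg : 0 ≤ ρ
  rho_le : ρ ≤ 1 / (1 + t)
  sub_eq : ∀ r s : unitInterval,
    (φ r : ℝ) - φ s = ((r : ℝ) - s) / (d ^ 2 * ((1 - ρ * r) * (1 - ρ * s)))

/-- The distortion constant of the nodes. -/
noncomputable def distConst (t : ℝ) : ℝ := (t / (1 + t)) ^ 2

/-- A node is terminal for the frequency `b` when `|b| / d ^ 2` is in `[minFreq t, maxFreq t]`. -/
noncomputable def maxFreq (t : ℝ) : ℝ := distConst t / 8

/-- The lower end of the terminal range of frequencies, see `maxFreq`. -/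
noncomputable def minFreq (t : ℝ) : ℝ := maxFreq t / ((2 + t) * (1 + 2 * t)) ^ 2

section node

variable {t : ℝ} (ht : 0 < t) {φ : unitInterval → unitInterval} {d ρ b : ℝ}

include ht

lemma distConst_pos : 0 < distConst t := by
  unfold distConst
  positivity

lemma distConst_le_one : distConst t ≤ 1 :=
  pow_le_one₀ (by positivity) ((div_le_one (by positivity)).2 (by linarith))

lemma maxFreq_pos : 0 < maxFreq t := div_pos (distConst_pos ht) (by norm_num)

lemma minFreq_pos : 0 < minFreq t := div_pos (maxFreq_pos ht) (by positivity)

lemma minFreq_le : minFreq t ≤ maxFreq t / (2 + t) ^ 2 := by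
  have := (maxFreq_pos ht).le
  unfold minFreq
  gcongr
  exact le_mul_of_one_le_right (by positivity) (by linarith)

lemma minFreq_le_maxFreq : minFreq t ≤ maxFreq t :=
  (minFreq_le ht).trans (div_le_self (maxFreq_pos ht).le (one_le_pow₀ (by linarith)))

lemma node_id : Node t id 1 0 where
  d_pos := one_pos
  rho_nonneg := le_rfl
  rho_le := by positivity
  sub_eq r s := by simp

lemma Node.rho_le_one (h : Node t φ d ρ) : ρ ≤ 1 :=
  h.rho_le.trans ((div_le_one (by positivity)).2 (by linarith))

lemma Node.le_one_sub (h : Node t φ d ρ) (r : unitInterval) : t / (1 + t) ≤ 1 - ρ * r := by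
  have hr : ρ * r ≤ 1 / (1 + t) := (mul_le_of_le_one_right h.rho_nonneg r.2.2).trans h.rho_le
  calc t / (1 + t) = 1 - 1 / (1 + t) := by
        rw [eq_sub_iff_add_eq, ← add_div, add_comm, div_self (by positivity)]
    _ ≤ 1 - ρ * r := by linarith

lemma Node.one_sub_pos (h : Node t φ d ρ) (r : unitInterval) : 0 < 1 - ρ * r :=
  (div_pos ht (by positivity)).trans_le (h.le_one_sub ht r)

lemma Node.dist_eq (h : Node t φ d ρ) (r s : unitInterval) :
    dist (φ r) (φ s) = dist r s / (d ^ 2 * ((1 - ρ * r) * (1 - ρ * s))) := by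
  have := h.d_pos
  have := h.one_sub_pos ht r
  have := h.one_sub_pos ht s
  rw [Subtype.dist_eq, Subtype.dist_eq, Real.dist_eq, Real.dist_eq, h.sub_eq, abs_div,
    abs_of_pos (a := _ * _) (by positivity)]

lemma Node.dist_le (h : Node t φ d ρ) (r s : unitInterval) :
    dist (φ r) (φ s) ≤ dist r s / (d ^ 2 * distConst t) := by
  have := h.d_pos
  have := (h.one_sub_pos ht r).le
  have := h.le_one_sub ht r
  have := h.le_one_sub ht s
  rw [h.dist_eq ht, distConst, sq (t / (1 + t))]
  gcongr

lemma Node.le_dist (h : Node t φ d ρ) (r s : unitInterval) :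
    dist r s / d ^ 2 ≤ dist (φ r) (φ s) := by
  have := h.d_pos
  have hr := h.one_sub_pos ht r
  have hs := h.one_sub_pos ht s
  have := mul_nonneg h.rho_nonneg r.2.1
  have := mul_nonneg h.rho_nonneg s.2.1
  rw [h.dist_eq ht]
  gcongr
  exact mul_le_of_le_one_right (by positivity)
    (mul_le_one₀ (by linarith) hs.le (by linarith))

lemma Node.comp (h : Node t φ d ρ) (n : ℕ) :
    Node t (φ ∘ branch ht n) (d * den t n ρ) (1 / den t n ρ) where
  d_pos := mul_pos h.d_pos (den_pos ht n (h.rho_le_one ht))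
  rho_nonneg := one_div_nonneg.2 (den_pos ht n (h.rho_le_one ht)).le
  rho_le := one_div_le_one_div_of_le (by positivity) (one_add_t_le_den ht n (h.rho_le_one ht))
  sub_eq r s := by
    have hd := h.d_pos
    have ha := den_pos ht n (h.rho_le_one ht)
    have one_sub_mul_branch (r : unitInterval) :
        1 - ρ * branch ht n r = (1 - 1 / den t n ρ * r) * den t n ρ / den t n r := by
      have := (den_pos ht n r.2.2).ne'
      rw [coe_branch]
      field_simp
      unfold den
      ring
    have := (den_pos ht n r.2.2).ne'
    have := (den_pos ht n s.2.2).ne'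
    rw [Function.comp_apply, Function.comp_apply, h.sub_eq, branch_sub, one_sub_mul_branch,
      one_sub_mul_branch]
    field_simp

lemma Node.mul_dist_le (h : Node t φ d ρ) (hb : |b| / d ^ 2 ≤ maxFreq t) (r s : unitInterval) :
    |b| * dist (φ r) (φ s) ≤ 1 / 8 * dist r s := by
  have hC := distConst_pos ht
  have := h.d_pos
  calc |b| * dist (φ r) (φ s) ≤ |b| * (dist r s / (d ^ 2 * distConst t)) := by
        gcongr
        exact h.dist_le ht r s
    _ = |b| / d ^ 2 * (dist r s / distConst t) := by ring
    _ ≤ maxFreq t * (dist r s / distConst t) := by gcongr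
    _ = 1 / 8 * dist r s := by
        unfold maxFreq
        field_simp

end node

lemma WeightedIFS.iterate_op_two_le {ι X : Type*} (S : WeightedIFS ι X) {f g : X → ℝ}
    (hg : ∀ z, 0 ≤ g z) (hfg : ∀ z, f z ≤ g z) {i j : ι} (hi : i ∈ S.index) (hj : j ∈ S.index)
    {η K : ℝ} (hη : 0 ≤ η) (hK : 0 < K) (x : X)
    (hloss : f (S.map i (S.map j x)) ≤ (1 - η) * g (S.map i (S.map j x)))
    (hgK : ∀ z, g z ≤ K * g (S.map i (S.map j x))) :
    S.op^[2] f x ≤ (1 - S.weight i * S.weight j * η / K) * S.op^[2] g x := by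
  have weight_mul_le_op {h : X → ℝ} (hh : ∀ z, 0 ≤ h z) {k : ι} (hk : k ∈ S.index) (z : X) :
      S.weight k * h (S.map k z) ≤ S.op h z :=
    single_le_sum (f := fun k => S.weight k * h (S.map k z))
      (fun k _ => mul_nonneg (S.weight_nonneg k) (hh _)) hk
  have op_sub (f g : X → ℝ) : S.op (g - f) = S.op g - S.op f := by
    funext z
    simp only [op, Pi.sub_apply, smul_eq_mul, mul_sub, sum_sub_distrib]
  set p := S.map i (S.map j x)
  have hd (z : X) : 0 ≤ (g - f) z := sub_nonneg.2 (hfg z)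
  have hi0 := S.weight_nonneg i
  have hj0 := S.weight_nonneg j
  have hloss' : S.weight j * (S.weight i * (η * g p)) ≤ S.op (S.op (g - f)) x := by
    refine le_trans ?_ (weight_mul_le_op (S.op_nonneg hd) hj x)
    gcongr
    refine le_trans ?_ (weight_mul_le_op hd hi _)
    gcongr
    rw [Pi.sub_apply]
    linarith
  have hmass : S.op^[2] g x ≤ K * g p :=
    S.iterate_op_le_of_le 2 (mul_nonneg hK.le (hg p)) hgK x
  rw [op_sub, op_sub, Pi.sub_apply] at hloss'
  have : S.weight i * S.weight j * η / K * S.op^[2] g x ≤ S.weight j * (S.weight i * (η * g p)) :=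
    calc S.weight i * S.weight j * η / K * S.op^[2] g x
        ≤ S.weight i * S.weight j * η / K * (K * g p) := by gcongr
      _ = S.weight j * (S.weight i * (η * g p)) := by field_simp
  have : S.op^[2] f x = S.op (S.op f) x := rfl
  have : S.op^[2] g x = S.op (S.op g) x := rfl
  linarith

lemma dist_unitInterval_le_one (r s : unitInterval) : dist r s ≤ 1 :=
  Real.dist_le_of_mem_Icc_01 r.2 s.2

section terminal

variable {t : ℝ} (ht : 0 < t) {φ : unitInterval → unitInterval} {d ρ b : ℝ}

/-- The distance between the images of `0` under the first two branches. -/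
noncomputable def branchGap (t : ℝ) : ℝ := t / ((2 + t) * (2 + 2 * t))

include ht

lemma dist_branch_zero_branch_one : dist (branch ht 0 0) (branch ht 1 0) = branchGap t := by
  have h : (branch ht 0 0 : ℝ) - branch ht 1 0 = branchGap t := by
    simp only [coe_branch, den, branchGap, Set.Icc.coe_zero, Nat.cast_zero, Nat.cast_one]
    rw [div_sub_div _ _ (by linarith) (by linarith)]
    ring_nf
  rw [Subtype.dist_eq, Real.dist_eq, h, abs_of_nonneg (by unfold branchGap; positivity)]

/-- Test `P` on the images of `0` under the first two branches: for a terminal node their distance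
is comparable to `1 / |b|`, and the small cells around them are images of `branch m`. -/
lemma Node.exists_forall_comp_branch (h : Node t φ d ρ)
    (hb : |b| / d ^ 2 ∈ Set.Icc (minFreq t) (maxFreq t)) {P : unitInterval → Prop} {δ : ℝ}
    (hP : ∀ x y, minFreq t * branchGap t ≤ |b| * dist x y → |b| * dist x y ≤ 1 →
      ∃ s, (s = x ∨ s = y) ∧ ∀ z, |b| * dist z s ≤ δ → P z) {m : ℕ}
    (hδ : 0 < δ) (hm : 1 ≤ δ * (1 + t * (m + 1))) :
    ∃ e ≤ 1, ∀ r, P (φ (branch ht e (branch ht m r))) := by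
  have hgap := dist_branch_zero_branch_one ht
  have hg : 0 ≤ branchGap t := hgap ▸ dist_nonneg
  obtain ⟨s, hs, hPs⟩ := hP (φ (branch ht 0 0)) (φ (branch ht 1 0))
    (calc minFreq t * branchGap t ≤ |b| / d ^ 2 * branchGap t := by gcongr; exact hb.1
      _ = |b| * (dist (branch ht 0 0) (branch ht 1 0) / d ^ 2) := by rw [hgap]; ring
      _ ≤ _ := by gcongr; exact h.le_dist ht _ _)
    ((h.mul_dist_le ht hb.2 _ _).trans
      (by linarith [dist_unitInterval_le_one (branch ht 0 0) (branch ht 1 0)]))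
  have hbranch (r : unitInterval) : dist (branch ht m r) 0 ≤ δ := by
    rw [Subtype.dist_eq, Real.dist_eq, Set.Icc.coe_zero, sub_zero,
      abs_of_nonneg (branch ht m r).2.1, coe_branch, div_le_iff₀ (den_pos ht m r.2.2)]
    exact hm.trans (by gcongr; exact one_add_le_den t m r.2.2)
  have hcell (e : ℕ) (r : unitInterval) :
      |b| * dist (φ (branch ht e (branch ht m r))) (φ (branch ht e 0)) ≤ δ := by
    refine (h.mul_dist_le ht hb.2 _ _).trans ?_
    have := dist_branch_le ht one_pos (branch ht m r) 0 (one_lt_den ht e (branch ht m r).2.2).le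
      (one_lt_den ht e unitInterval.zero_mem.2).le
    linarith [hbranch r]
  rcases hs with rfl | rfl
  · exact ⟨0, zero_le_one, fun r => hPs _ (hcell 0 r)⟩
  · exact ⟨1, le_rfl, fun r => hPs _ (hcell 1 r)⟩

lemma Node.sq_le_three_mul_sq (h : Node t φ d ρ) (hb : |b| / d ^ 2 ≤ maxFreq t)
    {G : unitInterval → ℝ} (hG0 : ∀ x, 0 ≤ G x) (hG : LogLipschitz |b| G) (r s : unitInterval) :
    G (φ r) ^ 2 ≤ 3 * G (φ s) ^ 2 := by
  have hexp : Real.exp (|b| * dist (φ r) (φ s)) ^ 2 ≤ 3 := by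
    rw [← Real.exp_nat_mul]
    refine (Real.exp_le_exp.2 ?_).trans Real.exp_one_lt_three.le
    have := h.mul_dist_le ht hb r s
    have := dist_unitInterval_le_one r s
    push_cast
    linarith
  calc G (φ r) ^ 2 ≤ (G (φ s) * Real.exp (|b| * dist (φ r) (φ s))) ^ 2 := by
        gcongr
        exacts [hG0 _, hG _ _]
    _ = Real.exp (|b| * dist (φ r) (φ s)) ^ 2 * G (φ s) ^ 2 := by ring
    _ ≤ 3 * G (φ s) ^ 2 := by gcongr

lemma Node.iterate_op_two_sq_le (h : Node t φ d ρ)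
    (hb : |b| / d ^ 2 ∈ Set.Icc (minFreq t) (maxFreq t)) {F G : unitInterval → ℝ}
    (hF : ∀ x, 0 ≤ F x) (hFG : ∀ x, F x ≤ G x) (hG : LogLipschitz |b| G) {δ η : ℝ} (hδ : 0 < δ)
    (hη : 0 ≤ η) (hη1 : η ≤ 1) {m N : ℕ} (hm : 1 ≤ δ * (1 + t * (m + 1))) (hN : m + 2 ≤ N)
    (hgain : ∀ x y, minFreq t * branchGap t ≤ |b| * dist x y → |b| * dist x y ≤ 1 →
      ∃ s, (s = x ∨ s = y) ∧ ∀ z, |b| * dist z s ≤ δ → F z ≤ (1 - η) * G z) (y : unitInterval) :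
    (branchIFS ht N).op^[2] (fun z => F (φ z) ^ 2) y ≤
      (1 - wt 1 * wt m * η / 3) * (branchIFS ht N).op^[2] (fun z => G (φ z) ^ 2) y := by
  set S := branchIFS ht N
  have hG0 (x : unitInterval) : 0 ≤ G x := (hF x).trans (hFG x)
  obtain ⟨e, he, hcell⟩ := h.exists_forall_comp_branch ht hb hgain hδ hm
  refine (S.iterate_op_two_le (i := e) (j := m) (fun z => sq_nonneg _)
    (fun z => pow_le_pow_left₀ (hF _) (hFG _) 2) (mem_range.2 (by omega))
    (mem_range.2 (by omega)) hη three_pos y ?_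
    fun z => h.sq_le_three_mul_sq ht hb.2 hG0 hG _ _).trans ?_
  · calc F (φ (S.map e (S.map m y))) ^ 2
        ≤ ((1 - η) * G (φ (S.map e (S.map m y)))) ^ 2 := pow_le_pow_left₀ (hF _) (hcell y) 2
      _ = (1 - η) ^ 2 * G (φ (S.map e (S.map m y))) ^ 2 := mul_pow _ _ _
      _ ≤ _ := by
          gcongr
          exact pow_le_of_le_one (by linarith) (by linarith) two_ne_zero
  · have : 0 ≤ S.op^[2] (fun z => G (φ z) ^ 2) y := S.iterate_op_nonneg 2 (fun z => sq_nonneg _) y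
    have : wt 1 ≤ S.weight e := wt_antitone he
    have := (wt_pos m).le
    change (1 - S.weight e * wt m * η / 3) * _ ≤ _
    gcongr

lemma exists_terminal_gain :
    ∃ N₀ : ℕ, ∃ c > 0, c ≤ 1 ∧ ∀ N ≥ N₀, ∀ (b : ℝ) (u : unitInterval → ℂ)
      (H : unitInterval → ℝ), IsMajorant (coneConst (1 / (1 + t))) |b| u H →
      ∀ φ d ρ, Node t φ d ρ → |b| / d ^ 2 ∈ Set.Icc (minFreq t) (maxFreq t) → ∀ y,
      (branchIFS ht N).op^[2]
          (fun z => (branchIFS ht N).nextMajorant (logDen t) (1 / (1 + t)) b u H (φ z) ^ 2) y ≤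
        (1 - c) * (branchIFS ht N).op^[2] (fun z => (branchIFS ht N).quadMean H (φ z) ^ 2) y := by
  have hgap : 0 < branchGap t := by unfold branchGap; positivity
  obtain ⟨N₀, δ, hδ, η, hη, hη1, hgain⟩ :=
    exists_forall_nextMajorant_branchIFS_le_or ht (mul_pos (minFreq_pos ht) hgap)
  obtain ⟨m, hm⟩ := exists_nat_ge (1 / (δ * t))
  rw [div_le_iff₀ (by positivity)] at hm
  have hw1 := wt_pos 1
  have hwm := wt_pos m
  have wt_le_one (n : ℕ) : wt n ≤ 1 := pow_le_one₀ (by norm_num) (by norm_num)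
  refine ⟨max N₀ (m + 2), wt 1 * wt m * η / 3, by positivity, ?_, ?_⟩
  · have : wt 1 * wt m * η ≤ 1 :=
      mul_le_one₀ (mul_le_one₀ (wt_le_one 1) hwm.le (wt_le_one m)) hη.le hη1.le
    linarith
  intro N hN b u H h φ d ρ hφ hb y
  have hS : (branchIFS ht N).IsContractive (logDen t) (1 / (1 + t)) := isContractive_branchIFS ht N
  have hmean : LogLipschitz |b| ((branchIFS ht N).quadMean H) :=
    (hS.logLipschitz_quadMean (abs_nonneg b) h.nonneg h.logLipschitz).mono
      (WeightedIFS.quadMean_nonneg _ H) (mul_le_of_le_one_left (abs_nonneg b) hS.lt_one.le)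
  exact hφ.iterate_op_two_sq_le ht hb (h.nextMajorant hS).nonneg (h.nextMajorant_le_quadMean hS)
    hmean hδ hη.le hη1.le (by nlinarith) (le_of_max_le_right hN)
    (hgain N (le_of_max_le_left hN) b u H h) y

end terminal

section overshoot

variable {t : ℝ} (ht : 0 < t) {φ : unitInterval → unitInterval} {d ρ b κ : ℝ}

lemma den_sub_den (t : ℝ) (j k : ℕ) (ρ : ℝ) : den t j ρ - den t k ρ = t * ((j : ℝ) - k) := by
  unfold den
  ring

include ht

lemma exists_first_le_maxFreq (hρ : ρ ∈ Set.Icc (0 : ℝ) 1) (hκ : maxFreq t < κ)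
    (hex : ∃ n, κ / den t n ρ ^ 2 ≤ maxFreq t) :
    ∃ k, κ / den t k ρ ^ 2 ∈ Set.Icc (maxFreq t / (2 + t) ^ 2) (maxFreq t) ∧
      ∀ n, κ / den t n ρ ^ 2 ≤ maxFreq t → k ≤ n := by
  classical
  have hF := maxFreq_pos ht
  refine ⟨Nat.find hex, ⟨?_, Nat.find_spec hex⟩, fun n hn => Nat.find_min' hex hn⟩
  rcases hk : Nat.find hex with _ | k
  · have := hF.trans hκ
    have hden : den t 0 ρ ≤ 2 + t := by
      rw [den, Nat.cast_zero]
      linarith [hρ.1]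
    have := den_pos ht 0 hρ.2
    gcongr
  · have hlt : maxFreq t < κ / den t k ρ ^ 2 := not_le.1 (Nat.find_min hex (by omega))
    have hk0 := den_pos ht k hρ.2
    have hk1 := one_add_t_le_den ht k hρ.2
    have hk2 := den_pos ht (k + 1) hρ.2
    have hden : den t (k + 1) ρ ≤ (2 + t) * den t k ρ := by
      have := den_sub_den t (k + 1) k ρ
      push_cast at this
      nlinarith
    calc maxFreq t / (2 + t) ^ 2 ≤ κ / den t k ρ ^ 2 / (2 + t) ^ 2 := by gcongr
      _ = κ / ((2 + t) * den t k ρ) ^ 2 := by rw [div_div, mul_pow, mul_comm]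
      _ ≤ κ / den t (k + 1) ρ ^ 2 := by
        have := (hF.trans hκ).le
        gcongr

lemma two_mul_den_lt_sub (hρ : ρ ≤ 1) {j k : ℕ}
    (hk : maxFreq t / (2 + t) ^ 2 ≤ κ / den t k ρ ^ 2) (hj : κ / den t j ρ ^ 2 < minFreq t) :
    2 * den t k ρ < (j : ℝ) - k := by
  have hF := maxFreq_pos ht
  have hk0 := den_pos ht k hρ
  have hj0 := den_pos ht j hρ
  have hden : (1 + 2 * t) * den t k ρ < den t j ρ := by
    refine lt_of_pow_lt_pow_left₀ 2 hj0.le ?_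
    rw [div_le_div_iff₀ (by positivity) (by positivity)] at hk
    rw [minFreq, div_lt_div_iff₀ (by positivity) (by positivity), mul_pow] at hj
    refine lt_of_mul_lt_mul_left ?_ hF.le
    calc maxFreq t * ((1 + 2 * t) * den t k ρ) ^ 2
        = maxFreq t * den t k ρ ^ 2 * (1 + 2 * t) ^ 2 := by ring
      _ ≤ κ * (2 + t) ^ 2 * (1 + 2 * t) ^ 2 := by gcongr
      _ < maxFreq t * den t j ρ ^ 2 := by linarith
  have := den_sub_den t j k ρ
  nlinarith

lemma dist_branch_branch_le (hρ : 0 ≤ ρ) {j k : ℕ} (hkj : k ≤ j) (hρ1 : ρ ≤ 1) (z : unitInterval) :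
    dist (branch ht j z) (branch ht k z) ≤ 2 / den t k ρ := by
  have coe_branch_le {n : ℕ} (hn : k ≤ n) : (branch ht n z : ℝ) ≤ 2 / den t k ρ := by
    rw [coe_branch, div_le_div_iff₀ (den_pos ht n z.2.2) (den_pos ht k hρ1), one_mul]
    calc den t k ρ ≤ 2 * (1 + t * (k + 1)) := by
          unfold den
          nlinarith [(by positivity : 0 ≤ t * (k + 1 : ℝ))]
      _ ≤ 2 * (1 + t * (n + 1)) := by gcongr
      _ ≤ 2 * den t n z := by
          gcongr
          exact one_add_le_den t n z.2.2
  rw [Subtype.dist_eq, Real.dist_eq, abs_sub_le_iff]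
  constructor
  · linarith [coe_branch_le hkj, (branch ht k z).2.1]
  · linarith [coe_branch_le le_rfl, (branch ht j z).2.1]

lemma Node.apply_comp_branch_le (h : Node t φ d ρ) {Q : unitInterval → ℝ} (hQ0 : ∀ y, 0 ≤ Q y)
    (hQ : LogLipschitz (2 * |b|) Q) {j k : ℕ} (hkj : k ≤ j)
    (hk : |b| / d ^ 2 / den t k ρ ^ 2 ≤ maxFreq t) (z : unitInterval) :
    Q (φ (branch ht j z)) ≤ Real.exp (den t k ρ / 2) * Q (φ (branch ht k z)) := by
  have hC := distConst_pos ht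
  have hd := h.d_pos
  have ha := den_pos ht k (h.rho_le_one ht)
  rw [div_le_iff₀ (by positivity)] at hk
  have hdist : 2 * |b| * dist (φ (branch ht j z)) (φ (branch ht k z)) ≤ den t k ρ / 2 :=
    calc 2 * |b| * dist (φ (branch ht j z)) (φ (branch ht k z))
        ≤ 2 * |b| * (2 / den t k ρ / (d ^ 2 * distConst t)) := by
          gcongr
          refine (h.dist_le ht _ _).trans ?_
          gcongr
          exact dist_branch_branch_le ht h.rho_nonneg hkj (h.rho_le_one ht) z
      _ = |b| / d ^ 2 * (4 / (den t k ρ * distConst t)) := by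
          field_simp
          ring
      _ ≤ maxFreq t * den t k ρ ^ 2 * (4 / (den t k ρ * distConst t)) := by gcongr
      _ = den t k ρ / 2 := by
          unfold maxFreq
          field_simp
          ring
  rw [mul_comm]
  exact (hQ _ _).trans (mul_le_mul_of_nonneg_left (Real.exp_le_exp.2 hdist) (hQ0 _))

omit ht in
lemma exp_half_mul_half_pow_floor_le {a : ℝ} (ha : 1 ≤ a) :
    (1 / 2) ^ ⌊2 * a⌋₊ * Real.exp (a / 2) ≤ 1 := by
  have hq2 : 2 ≤ ⌊2 * a⌋₊ := Nat.le_floor (by push_cast; linarith)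
  have hq : a / 2 ≤ ⌊2 * a⌋₊ * (1 / 2 : ℝ) := by
    have : (2 : ℝ) ≤ ⌊2 * a⌋₊ := by exact_mod_cast hq2
    linarith [Nat.lt_floor_add_one (2 * a)]
  have hexp : Real.exp (1 / 2) ≤ 2 :=
    (Real.exp_bound_div_one_sub_of_interval (by norm_num) (by norm_num)).trans (by norm_num)
  calc (1 / 2) ^ ⌊2 * a⌋₊ * Real.exp (a / 2) ≤ (1 / 2) ^ ⌊2 * a⌋₊ * 2 ^ ⌊2 * a⌋₊ := by
        gcongr
        refine (Real.exp_le_exp.2 hq).trans ?_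
        rw [Real.exp_nat_mul]
        gcongr
    _ = 1 := by rw [← mul_pow]; norm_num

/-- The branches that overshoot the terminal range are outweighed by the first branch `k` to reach
it: the weights beyond `k` gain a factor `exp (-c * den t k ρ)` with a larger exponent than the one
by which `Q` can grow. -/
lemma Node.overshoot_sum_le (h : Node t φ d ρ) (hb : maxFreq t < |b| / d ^ 2)
    {Q : unitInterval → ℝ} (hQ0 : ∀ y, 0 ≤ Q y) (hQ : LogLipschitz (2 * |b|) Q) (N : ℕ)
    {J : Finset ℕ} (hJ : ∀ n ∈ J, |b| / (d * den t n ρ) ^ 2 < minFreq t) (hne : J.Nonempty) :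
    ∃ k, k ∉ J ∧ (∃ j ∈ J, k ≤ j) ∧
      |b| / (d * den t k ρ) ^ 2 ∈ Set.Icc (minFreq t) (maxFreq t) ∧
      ∀ L y, ∑ n ∈ J, wt n * (branchIFS ht N).op^[L] (fun z => Q (φ (branch ht n z))) y ≤
        wt k * (branchIFS ht N).op^[L] (fun z => Q (φ (branch ht k z))) y := by
  have hρ := h.rho_le_one ht
  simp only [mul_pow, ← div_div] at hJ ⊢
  obtain ⟨j₀, hj₀⟩ := hne
  have hle := minFreq_le_maxFreq ht
  obtain ⟨k, hk, hmin⟩ := exists_first_le_maxFreq ht ⟨h.rho_nonneg, hρ⟩ hb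
    ⟨j₀, (hJ j₀ hj₀).le.trans hle⟩
  have hkJ (j : ℕ) (hj : j ∈ J) : k ≤ j := hmin j ((hJ j hj).le.trans hle)
  have hk' := (minFreq_le ht).trans hk.1
  refine ⟨k, fun hkJ => (hJ k hkJ).not_ge hk', ⟨j₀, hj₀, hkJ j₀ hj₀⟩, ⟨hk', hk.2⟩, fun L y => ?_⟩
  set S := branchIFS ht N
  set a := den t k ρ
  have ha : 1 < a := one_lt_den ht k hρ
  set X := S.op^[L] (fun z => Q (φ (branch ht k z))) y
  have hX : 0 ≤ X := S.iterate_op_nonneg L (fun z => hQ0 _) y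
  have hcomp (j : ℕ) (hj : j ∈ J) :
      S.op^[L] (fun z => Q (φ (branch ht j z))) y ≤ Real.exp (a / 2) * X := by
    refine (S.iterate_op_mono L (fun z => h.apply_comp_branch_le ht hQ0 hQ (hkJ j hj) hk.2 z)
      y).trans_eq ?_
    exact S.iterate_op_smul L (Real.exp (a / 2)) _ y
  have hsum : ∑ n ∈ J, wt n ≤ wt k * (1 / 2) ^ ⌊2 * a⌋₊ := by
    rw [wt, ← pow_add]
    refine sum_wt_le fun j hj => ?_
    have hlt : ((⌊2 * a⌋₊ + k : ℕ) : ℝ) < j := by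
      push_cast
      linarith [two_mul_den_lt_sub ht hρ hk.1 (hJ j hj), Nat.floor_le (by linarith : 0 ≤ 2 * a)]
    have : ⌊2 * a⌋₊ + k < j := by exact_mod_cast hlt
    omega
  have hwk := (wt_pos k).le
  calc ∑ n ∈ J, wt n * S.op^[L] (fun z => Q (φ (branch ht n z))) y
      ≤ ∑ n ∈ J, wt n * (Real.exp (a / 2) * X) :=
        sum_le_sum fun n hn => mul_le_mul_of_nonneg_left (hcomp n hn) (wt_pos n).le
    _ = (∑ n ∈ J, wt n) * (Real.exp (a / 2) * X) := by rw [sum_mul]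
    _ ≤ wt k * (1 / 2) ^ ⌊2 * a⌋₊ * (Real.exp (a / 2) * X) := by gcongr
    _ = wt k * ((1 / 2) ^ ⌊2 * a⌋₊ * Real.exp (a / 2)) * X := by ring
    _ ≤ wt k * 1 * X := by
        gcongr
        exact exp_half_mul_half_pow_floor_le ha.le
    _ = wt k * X := by rw [mul_one]

end overshoot

lemma sum_le_one_sub_half_mul_sum {ι : Type*} {s J : Finset ι} (hJs : J ⊆ s)
    {f g : ι → ℝ} {c : ℝ} (hc : 0 ≤ c) (hfg : ∀ i ∈ s, f i ≤ g i)
    (hgood : ∀ i ∈ s, i ∉ J → f i ≤ (1 - c / 2) * g i)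
    (hJ : J.Nonempty → ∃ k ∈ s, k ∉ J ∧ f k ≤ (1 - c) * g k ∧ ∑ i ∈ J, g i ≤ g k) :
    ∑ i ∈ s, f i ≤ (1 - c / 2) * ∑ i ∈ s, g i := by
  rcases J.eq_empty_or_nonempty with rfl | hne
  · rw [mul_sum]
    exact sum_le_sum fun i hi => hgood i hi (notMem_empty i)
  classical
  obtain ⟨k, hks, hkJ, hk, hJk⟩ := hJ hne
  have hsplit (f : ι → ℝ) : ∑ i ∈ s, f i = ∑ i ∈ (s \ J).erase k, f i + f k + ∑ i ∈ J, f i := by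
    rw [sum_erase_add _ _ (mem_sdiff.2 ⟨hks, hkJ⟩), sum_sdiff hJs]
  have herase : ∑ i ∈ (s \ J).erase k, f i ≤ (1 - c / 2) * ∑ i ∈ (s \ J).erase k, g i := by
    rw [mul_sum]
    refine sum_le_sum fun i hi => ?_
    obtain ⟨his, hiJ⟩ := mem_sdiff.1 (mem_of_mem_erase hi)
    exact hgood i his hiJ
  have hsumJ : ∑ i ∈ J, f i ≤ ∑ i ∈ J, g i := sum_le_sum fun i hi => hfg i (hJs hi)
  rw [hsplit f, hsplit g]
  nlinarith

section tree

variable {t : ℝ} (ht : 0 < t) {N : ℕ} {Q R : unitInterval → ℝ} {b c : ℝ}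
  (hR : ∀ y, 0 ≤ R y) (hRQ : ∀ y, R y ≤ Q y)
  (hterm : ∀ φ d ρ, Node t φ d ρ → |b| / d ^ 2 ∈ Set.Icc (minFreq t) (maxFreq t) → ∀ y,
    (branchIFS ht N).op^[2] (fun z => R (φ z)) y ≤
      (1 - c) * (branchIFS ht N).op^[2] (fun z => Q (φ z)) y)

include hterm

lemma Node.iterate_op_le_of_terminal {φ : unitInterval → unitInterval} {d ρ : ℝ}
    (h : Node t φ d ρ) (hb : |b| / d ^ 2 ∈ Set.Icc (minFreq t) (maxFreq t)) {L : ℕ} (hL : 2 ≤ L)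
    (y : unitInterval) :
    (branchIFS ht N).op^[L] (fun z => R (φ z)) y ≤
      (1 - c) * (branchIFS ht N).op^[L] (fun z => Q (φ z)) y := by
  obtain ⟨m, rfl⟩ := Nat.exists_eq_add_of_le' hL
  rw [Function.iterate_add_apply, Function.iterate_add_apply]
  exact ((branchIFS ht N).iterate_op_mono m (hterm φ d ρ h hb) y).trans_eq
    ((branchIFS ht N).iterate_op_smul m (1 - c) _ y)

include hR hRQ

lemma Node.iterate_op_succ_le (hc : 0 ≤ c) (hQ : LogLipschitz (2 * |b|) Q)
    {φ : unitInterval → unitInterval} {d ρ : ℝ} (h : Node t φ d ρ) (hb : maxFreq t < |b| / d ^ 2)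
    {L : ℕ} (hL : 2 ≤ L) (y : unitInterval)
    (hgood : ∀ n, minFreq t ≤ |b| / (d * den t n ρ) ^ 2 →
      (branchIFS ht N).op^[L] (fun z => R (φ (branch ht n z))) y ≤
        (1 - c / 2) * (branchIFS ht N).op^[L] (fun z => Q (φ (branch ht n z))) y) :
    (branchIFS ht N).op^[L + 1] (fun z => R (φ z)) y ≤
      (1 - c / 2) * (branchIFS ht N).op^[L + 1] (fun z => Q (φ z)) y := by
  classical
  rw [WeightedIFS.iterate_op_succ_comp, WeightedIFS.iterate_op_succ_comp]
  simp only [smul_eq_mul]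
  refine sum_le_one_sub_half_mul_sum
    (filter_subset (fun n => |b| / (d * den t n ρ) ^ 2 < minFreq t) (range N)) hc (fun n _ => ?_)
    (fun n hn hnJ => ?_) fun hne => ?_
  · exact mul_le_mul_of_nonneg_left
      ((branchIFS ht N).iterate_op_mono L (fun z => hRQ _) y) (wt_pos n).le
  · rw [mul_left_comm]
    exact mul_le_mul_of_nonneg_left (hgood n (not_lt.1 fun hlt => hnJ (mem_filter.2 ⟨hn, hlt⟩)))
      (wt_pos n).le
  · obtain ⟨k, hkJ, ⟨j, hj, hkj⟩, hk, hsum⟩ := h.overshoot_sum_le ht hb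
      (fun y => (hR y).trans (hRQ y)) hQ N (fun n hn => (mem_filter.1 hn).2) hne
    refine ⟨k, mem_range.2 (hkj.trans_lt (mem_range.1 (mem_filter.1 hj).1)), hkJ, ?_, hsum L y⟩
    rw [mul_left_comm]
    exact mul_le_mul_of_nonneg_left
      ((h.comp ht k).iterate_op_le_of_terminal ht hterm hk hL y) (wt_pos k).le

lemma Node.iterate_op_le (hc : 0 ≤ c) (hQ : LogLipschitz (2 * |b|) Q) (l : ℕ) :
    ∀ {φ d ρ}, Node t φ d ρ → minFreq t ≤ |b| / d ^ 2 →
      |b| / d ^ 2 ≤ maxFreq t * (1 + t) ^ (2 * l) → ∀ L ≥ l + 2, ∀ y,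
      (branchIFS ht N).op^[L] (fun z => R (φ z)) y ≤
        (1 - c / 2) * (branchIFS ht N).op^[L] (fun z => Q (φ z)) y := by
  have terminal {φ : unitInterval → unitInterval} {d ρ : ℝ} (h : Node t φ d ρ)
      (hb₁ : minFreq t ≤ |b| / d ^ 2) (hb₂ : |b| / d ^ 2 ≤ maxFreq t) {L : ℕ} (hL : 2 ≤ L)
      (y : unitInterval) : (branchIFS ht N).op^[L] (fun z => R (φ z)) y ≤
        (1 - c / 2) * (branchIFS ht N).op^[L] (fun z => Q (φ z)) y := by
    refine (h.iterate_op_le_of_terminal ht hterm ⟨hb₁, hb₂⟩ hL y).trans ?_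
    have : 0 ≤ (branchIFS ht N).op^[L] (fun z => Q (φ z)) y :=
      WeightedIFS.iterate_op_nonneg _ L (fun z => (hR _).trans (hRQ _)) y
    gcongr
    linarith
  induction l with
  | zero => exact fun h hb₁ hb₂ L hL => terminal h hb₁ (by simpa using hb₂) hL
  | succ l ih =>
    intro φ d ρ h hb₁ hb₂ L hL y
    rcases le_or_gt (|b| / d ^ 2) (maxFreq t) with hb | hb
    · exact terminal h hb₁ hb (by omega) y
    obtain ⟨L, rfl⟩ : ∃ m, L = m + 1 := ⟨L - 1, by omega⟩
    refine h.iterate_op_succ_le ht hR hRQ hterm hc hQ hb (by omega) y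
      fun n hn => ih (h.comp ht n) hn ?_ L (by omega) y
    have ha := one_add_t_le_den ht n (h.rho_le_one ht)
    have hF := maxFreq_pos ht
    have ha0 := den_pos ht n (h.rho_le_one ht)
    rw [mul_pow, ← div_div, div_le_iff₀ (by positivity)]
    calc |b| / d ^ 2 ≤ maxFreq t * (1 + t) ^ (2 * (l + 1)) := hb₂
      _ = maxFreq t * (1 + t) ^ (2 * l) * (1 + t) ^ 2 := by ring
      _ ≤ _ := by gcongr

end tree

/-! ### Spectral gap of the twisted operators -/

lemma LogLipschitz.sq {X : Type*} [PseudoMetricSpace X] {B : ℝ} {G : X → ℝ}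
    (h : LogLipschitz B G) (hG : ∀ x, 0 ≤ G x) : LogLipschitz (2 * B) fun x => G x ^ 2 :=
  fun x y => calc
    G x ^ 2 ≤ (G y * Real.exp (B * dist x y)) ^ 2 := pow_le_pow_left₀ (hG x) (h x y) 2
    _ = G y ^ 2 * Real.exp (2 * B * dist x y) := by
      rw [mul_pow, ← Real.exp_nat_mul, Nat.cast_two, mul_assoc]

lemma isMajorant_const {X E : Type*} [PseudoMetricSpace X] [NormedAddCommGroup E] {A B M : ℝ}
    (hA : 1 ≤ A) (hB : 0 ≤ B) {u : X → E} (hu : ∀ x, ‖u x‖ ≤ M)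
    (hu' : ∀ x y, ‖u x - u y‖ ≤ B * dist x y * M) : IsMajorant A B u fun _ => M where
  norm_le := hu
  logLipschitz x y := le_mul_of_one_le_right ((norm_nonneg _).trans (hu x))
    (Real.one_le_exp (by positivity))
  norm_sub_le x y := by
    have hM : 0 ≤ M := (norm_nonneg _).trans (hu x)
    have hexp : 1 ≤ Real.exp (B * dist x y) := Real.one_le_exp (by positivity)
    calc ‖u x - u y‖ ≤ B * dist x y * M := hu' x y
      _ ≤ A * Real.exp (B * dist x y) * (B * dist x y * M) :=
        le_mul_of_one_le_left (by positivity) (one_le_mul_of_one_le_of_one_le hA hexp)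
      _ = A * (B * dist x y) * Real.exp (B * dist x y) * M := by ring

namespace WeightedIFS

variable {ι X : Type*} (S : WeightedIFS ι X)

lemma iterate_op_sq_le_pow_mul {H : ℕ → X → ℝ} {M q : ℝ} (hq : 0 ≤ q) (hM : ∀ x, H 0 x = M)
    {L₀ : ℕ} (hH : ∀ j, ∀ L ≥ L₀, ∀ x, S.op^[L] (fun z => H (j + 1) z ^ 2) x ≤
      q * S.op^[L] (fun z => S.quadMean (H j) z ^ 2) x) (j : ℕ) :
    ∀ L ≥ L₀, ∀ x, S.op^[L] (fun z => H j z ^ 2) x ≤ q ^ j * M ^ 2 := by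
  induction j with
  | zero =>
    intro L _ x
    rw [pow_zero, one_mul]
    exact S.iterate_op_le_of_le L (sq_nonneg M) (fun z => by rw [hM]) x
  | succ j ih =>
    intro L hL x
    refine (hH j L hL x).trans ?_
    simp only [sq_quadMean]
    rw [pow_succ', mul_assoc]
    exact mul_le_mul_of_nonneg_left (ih (L + 1) (Nat.le_succ_of_le hL) x) hq

variable (θ : ι → X → ℝ) (b : ℝ) (u : X → ℂ)

lemma norm_twisted_iterate_le (k : ℕ) (x : X) :
    ‖(S.twisted θ b)^[k] u x‖ ≤ S.op^[k] (fun z => ‖u z‖) x :=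
  S.norm_iterate_le (S.norm_twisted_le θ b) k u x

lemma sq_norm_twisted_iterate_add_le {H : X → ℝ} (L j : ℕ)
    (hH : ∀ z, ‖(S.twisted θ b)^[j] u z‖ ≤ H z) (x : X) :
    ‖(S.twisted θ b)^[L + j] u x‖ ^ 2 ≤ S.op^[L] (fun z => H z ^ 2) x := by
  rw [Function.iterate_add_apply]
  calc ‖(S.twisted θ b)^[L] ((S.twisted θ b)^[j] u) x‖ ^ 2 ≤ (S.op^[L] H x) ^ 2 := by
        gcongr
        exact (S.norm_twisted_iterate_le θ b _ L x).trans (S.iterate_op_mono L hH x)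
    _ ≤ _ := S.sq_iterate_op_le L H x

variable [PseudoMetricSpace X] (lam M : ℝ)

/-- The majorants of the iterates of the twisted operator, starting from a constant. -/
noncomputable def majorantSeq : ℕ → X → ℝ
  | 0 => fun _ => M
  | j + 1 => S.nextMajorant θ lam b ((S.twisted θ b)^[j] u) (majorantSeq j)

variable {S θ b u lam M}

lemma IsContractive.isMajorant_majorantSeq (hS : S.IsContractive θ lam)
    (h : IsMajorant (coneConst lam) |b| u fun _ => M) (j : ℕ) :
    IsMajorant (coneConst lam) |b| ((S.twisted θ b)^[j] u) (S.majorantSeq θ b u lam M j) := by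
  induction j with
  | zero => exact h
  | succ j ih =>
    rw [Function.iterate_succ_apply']
    exact ih.nextMajorant hS

lemma IsContractive.one_le_coneConst (hS : S.IsContractive θ lam) : 1 ≤ coneConst lam := by
  have := hS.nonneg
  rw [coneConst, one_le_div (sub_pos.2 hS.lt_one)]
  linarith

lemma IsContractive.logLipschitz_sq_quadMean (hS : S.IsContractive θ lam) {H : X → ℝ}
    (hH : ∀ x, 0 ≤ H x) (h : LogLipschitz |b| H) :
    LogLipschitz (2 * |b|) fun x => S.quadMean H x ^ 2 :=
  ((hS.logLipschitz_quadMean (abs_nonneg b) hH h).mono (S.quadMean_nonneg H)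
    (mul_le_of_le_one_left (abs_nonneg b) hS.lt_one.le)).sq (S.quadMean_nonneg H)

end WeightedIFS

section gap

variable {t : ℝ} (ht : 0 < t)

include ht

lemma maxFreq_le_one : maxFreq t ≤ 1 := by
  unfold maxFreq
  linarith [distConst_le_one ht]

lemma exists_iterate_op_sq_majorantSeq_le :
    ∃ N₀ : ℕ, ∃ c > 0, c ≤ 1 ∧ ∀ N ≥ N₀, ∀ (b M : ℝ) (u : unitInterval → ℂ) (l : ℕ), 1 ≤ |b| →
      IsMajorant (coneConst (1 / (1 + t))) |b| u (fun _ => M) →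
      |b| ≤ maxFreq t * (1 + t) ^ (2 * l) → ∀ j, ∀ L ≥ l + 2, ∀ y,
      (branchIFS ht N).op^[L]
          (fun z => (branchIFS ht N).majorantSeq (logDen t) b u (1 / (1 + t)) M j z ^ 2) y ≤
        (1 - c / 2) ^ j * M ^ 2 := by
  obtain ⟨N₀, c, hc, hc1, hterm⟩ := exists_terminal_gain ht
  refine ⟨N₀, c, hc, hc1, fun N hN b M u l hb h hl => ?_⟩
  have hS : (branchIFS ht N).IsContractive (logDen t) (1 / (1 + t)) := isContractive_branchIFS ht N
  refine (branchIFS ht N).iterate_op_sq_le_pow_mul (by linarith) (fun _ => rfl)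
    fun j L hL y => ?_
  have hj := hS.isMajorant_majorantSeq h j
  refine Node.iterate_op_le ht (b := b) (fun z => sq_nonneg _) (fun z => pow_le_pow_left₀
    ((hS.isMajorant_majorantSeq h (j + 1)).nonneg z) (hj.nextMajorant_le_quadMean hS z) 2)
    (hterm N hN b _ _ hj) hc.le (hS.logLipschitz_sq_quadMean hj.nonneg hj.logLipschitz) l
    (node_id ht) ?_ ?_ L hL y
  · rw [one_pow, div_one]
    exact ((minFreq_le_maxFreq ht).trans (maxFreq_le_one ht)).trans hb
  · rwa [one_pow, div_one]

lemma exists_scale {b : ℝ} (hb : 1 ≤ |b|) :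
    ∃ l : ℕ, |b| ≤ maxFreq t * (1 + t) ^ (2 * l) ∧
      (1 + t) ^ l ≤ (1 + t) * √(1 / maxFreq t) * √|b| := by
  have hF := maxFreq_pos ht
  have hx : 1 ≤ 1 / maxFreq t * |b| :=
    one_le_mul_of_one_le_of_one_le ((one_le_div hF).2 (maxFreq_le_one ht)) hb
  obtain ⟨n, hn, hn'⟩ := exists_nat_pow_near (Real.one_le_sqrt.2 hx) (by linarith : 1 < 1 + t)
  refine ⟨n + 1, ?_, ?_⟩
  · calc |b| = maxFreq t * √(1 / maxFreq t * |b|) ^ 2 := by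
          rw [Real.sq_sqrt (by positivity), ← mul_assoc, mul_one_div_cancel hF.ne', one_mul]
      _ ≤ maxFreq t * ((1 + t) ^ (n + 1)) ^ 2 := by gcongr
      _ = maxFreq t * (1 + t) ^ (2 * (n + 1)) := by rw [← pow_mul, mul_comm 2]
  · rw [pow_succ', mul_assoc, ← Real.sqrt_mul (by positivity)]
    gcongr

lemma exists_norm_twisted_iterate_le :
    ∃ N₀ : ℕ, ∃ σ C : ℝ, 0 < σ ∧ σ < 1 ∧ 0 < C ∧ ∀ N ≥ N₀, ∀ b : ℝ, 1 ≤ |b| →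
      ∀ (M : ℝ) (u : unitInterval → ℂ), (∀ y, ‖u y‖ ≤ M) →
        (∀ y z, ‖u y - u z‖ ≤ |b| * dist y z * M) →
        ∀ k y, ‖((branchIFS ht N).twisted (logDen t) b)^[k] u y‖ ≤ C * √|b| * σ ^ k * M := by
  obtain ⟨N₀, c, hc, hc1, hgain⟩ := exists_iterate_op_sq_majorantSeq_le ht
  have hF := maxFreq_pos ht
  set σ := max √(1 - c / 2) (1 / (1 + t))
  have hσt : 1 / (1 + t) ≤ σ := le_max_right _ _
  have hσ0 : 0 < σ := (by positivity : 0 < 1 / (1 + t)).trans_le hσt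
  have hσ1 : σ < 1 := max_lt ((Real.sqrt_lt' one_pos).2 (by linarith))
    ((div_lt_one (by positivity)).2 (by linarith))
  have hσc : 1 - c / 2 ≤ σ ^ 2 := (Real.sqrt_le_left hσ0.le).1 (le_max_left _ _)
  refine ⟨N₀, σ, (1 + t) ^ 3 * √(1 / maxFreq t), hσ0, hσ1, by positivity, ?_⟩
  intro N hN b hb M u hu hu' k y
  set S := branchIFS ht N
  have hM : 0 ≤ M := (norm_nonneg _).trans (hu 0)
  have hS : S.IsContractive (logDen t) (1 / (1 + t)) := isContractive_branchIFS ht N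
  have h₀ := isMajorant_const hS.one_le_coneConst (abs_nonneg b) hu hu'
  obtain ⟨l, hl, hl'⟩ := exists_scale ht hb
  have hσL (L : ℕ) (hL : L ≤ l + 2) : 1 ≤ (1 + t) ^ 3 * √(1 / maxFreq t) * √|b| * σ ^ L :=
    calc 1 ≤ ((1 + t) * σ) ^ (l + 2) := one_le_pow₀ (by rwa [div_le_iff₀' (by positivity)] at hσt)
      _ = (1 + t) ^ 2 * (1 + t) ^ l * σ ^ (l + 2) := by rw [mul_pow, pow_add (1 + t)]; ring
      _ ≤ (1 + t) ^ 2 * ((1 + t) * √(1 / maxFreq t) * √|b|) * σ ^ L := by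
          gcongr ?_ * ?_
          · gcongr
          · exact pow_le_pow_of_le_one hσ0.le hσ1.le hL
      _ = _ := by ring
  rcases le_total k (l + 2) with hk | hk
  · exact ((S.norm_twisted_iterate_le _ b u k y).trans (S.iterate_op_le_of_le k hM hu y)).trans
      (le_mul_of_one_le_left hM (hσL k hk))
  obtain ⟨j, rfl⟩ := Nat.exists_eq_add_of_le hk
  have hj : ‖(S.twisted (logDen t) b)^[l + 2 + j] u y‖ ≤ σ ^ j * M := by
    refine le_of_sq_le_sq (b := σ ^ j * M) ?_ (by positivity)
    calc _ ≤ S.op^[l + 2] _ y :=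
          S.sq_norm_twisted_iterate_add_le _ b u _ j (hS.isMajorant_majorantSeq h₀ j).norm_le y
      _ ≤ (1 - c / 2) ^ j * M ^ 2 := hgain N hN b M u l hb h₀ hl j _ le_rfl y
      _ ≤ (σ ^ 2) ^ j * M ^ 2 := by gcongr; linarith
      _ = (σ ^ j * M) ^ 2 := by ring
  calc _ ≤ σ ^ j * M := hj
    _ ≤ (1 + t) ^ 3 * √(1 / maxFreq t) * √|b| * σ ^ (l + 2) * (σ ^ j * M) :=
      le_mul_of_one_le_left (by positivity) (hσL _ le_rfl)
    _ = _ := by ring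

end gap

/-! ### Oscillating windows -/

section Oscillation

open FourierTransform
open scoped ContDiff

/-- The amplitude `g` oscillating with phase `a ψ`. -/
noncomputable def osc (ψ : ℝ → ℝ) (g : ℝ → ℂ) (a s : ℝ) : ℂ :=
  g s * Complex.exp ((a * ψ s : ℝ) * Complex.I)

variable {ψ : ℝ → ℝ} {g : ℝ → ℂ}

@[simp]
lemma norm_osc (ψ : ℝ → ℝ) (g : ℝ → ℂ) (a s : ℝ) : ‖osc ψ g a s‖ = ‖g s‖ := by
  rw [osc, norm_mul, Complex.norm_exp_ofReal_mul_I, mul_one]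

lemma continuous_osc (hψ : Continuous ψ) (hg : Continuous g) (a : ℝ) : Continuous (osc ψ g a) := by
  unfold osc
  fun_prop

lemma hasCompactSupport_osc (hg : HasCompactSupport g) (a : ℝ) : HasCompactSupport (osc ψ g a) :=
  hg.mul_right

lemma integrable_osc (hψ : Continuous ψ) (hg : Continuous g) (hgc : HasCompactSupport g) (a : ℝ) :
    Integrable (osc ψ g a) :=
  (continuous_osc hψ hg a).integrable_of_hasCompactSupport (hasCompactSupport_osc hgc a)

lemma norm_fourier_osc_le_integral (ψ : ℝ → ℝ) (g : ℝ → ℂ) (a β : ℝ) :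
    ‖𝓕 (osc ψ g a) β‖ ≤ ∫ s, ‖g s‖ :=
  (VectorFourier.norm_fourierIntegral_le_integral_norm Real.fourierChar volume (innerₗ ℝ)
    (osc ψ g a) β).trans_eq (by simp only [norm_osc])

lemma hasDerivAt_osc {ψ' : ℝ} {g' : ℂ} {s : ℝ} (hψ : HasDerivAt ψ ψ' s) (hg : HasDerivAt g g' s)
    (a : ℝ) :
    HasDerivAt (osc ψ g a)
      ((g' + a * (Complex.I * ψ' * g s)) * Complex.exp ((a * ψ s : ℝ) * Complex.I)) s := by
  refine (hg.mul ((hψ.const_mul a).ofReal_comp.mul_const Complex.I).cexp).congr_deriv ?_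
  push_cast
  ring

lemma fourier_osc_add_mul {g₁ g₂ : ℝ → ℂ} (hψ : Continuous ψ) (hg₁ : Continuous g₁)
    (hgc₁ : HasCompactSupport g₁) (hg₂ : Continuous g₂) (hgc₂ : HasCompactSupport g₂) (a β : ℝ) :
    𝓕 (fun s => (g₁ s + a * g₂ s) * Complex.exp ((a * ψ s : ℝ) * Complex.I)) β =
      𝓕 (osc ψ g₁ a) β + a * 𝓕 (osc ψ g₂ a) β := by
  have h₁ := (Real.fourierIntegral_convergent_iff β).2 (integrable_osc hψ hg₁ hgc₁ a)
  have h₂ := (Real.fourierIntegral_convergent_iff β).2 (integrable_osc hψ hg₂ hgc₂ a)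
  rw [Real.fourier_eq, Real.fourier_eq, Real.fourier_eq, ← integral_const_mul,
    ← integral_add h₁ (h₂.const_mul _)]
  refine integral_congr_ae (.of_forall fun s => ?_)
  simp only [osc, Circle.smul_def, smul_eq_mul]
  ring

lemma two_pi_mul_fourier_osc (hψ : ContDiff ℝ ∞ ψ) (hg : ContDiff ℝ ∞ g)
    (hgc : HasCompactSupport g) (a β : ℝ) :
    2 * Real.pi * Complex.I * β * 𝓕 (osc ψ g a) β =
      𝓕 (osc ψ (deriv g) a) β + a * 𝓕 (osc ψ (fun s => Complex.I * deriv ψ s * g s) a) β := by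
  have hψd : Continuous (deriv ψ) := hψ.continuous_deriv (by norm_num)
  have hgd : Continuous (deriv g) := hg.continuous_deriv (by norm_num)
  have hψc := hψ.continuous
  have hgcont := hg.continuous
  have hd (s : ℝ) := hasDerivAt_osc (hψ.differentiable (by simp) s).hasDerivAt
    (hg.differentiable (by simp) s).hasDerivAt a
  have hderiv := funext fun s => (hd s).deriv
  rw [← fourier_osc_add_mul (g₂ := fun s => Complex.I * deriv ψ s * g s) hψc hgd hgc.deriv
    (by fun_prop) hgc.mul_left, ← hderiv,
    Real.fourier_deriv (integrable_osc hψc hgcont hgc a) fun s => (hd s).differentiableAt]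
  · rfl
  · rw [hderiv]
    refine Continuous.integrable_of_hasCompactSupport (by fun_prop) ?_
    exact (hgc.deriv.add (hgc.mul_left.mul_left)).mul_right

lemma abs_mul_norm_fourier_osc_le (hψ : ContDiff ℝ ∞ ψ) (hg : ContDiff ℝ ∞ g)
    (hgc : HasCompactSupport g) (a β : ℝ) :
    |β| * ‖𝓕 (osc ψ g a) β‖ ≤ ‖𝓕 (osc ψ (deriv g) a) β‖ +
      |a| * ‖𝓕 (osc ψ (fun s => Complex.I * deriv ψ s * g s) a) β‖ := by
  have hβ : |β| ≤ ‖2 * Real.pi * Complex.I * (β : ℂ)‖ := by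
    simp only [norm_mul, Complex.norm_ofNat, Complex.norm_real, Real.norm_eq_abs,
      Complex.norm_I, mul_one, abs_of_pos Real.pi_pos]
    exact le_mul_of_one_le_left (abs_nonneg β) (by linarith [Real.pi_gt_three])
  calc |β| * ‖𝓕 (osc ψ g a) β‖
      ≤ ‖2 * Real.pi * Complex.I * (β : ℂ)‖ * ‖𝓕 (osc ψ g a) β‖ := by gcongr
    _ ≤ _ := by
      rw [← norm_mul, two_pi_mul_fourier_osc hψ hg hgc]
      refine (norm_add_le _ _).trans_eq ?_
      rw [norm_mul, Complex.norm_real, Real.norm_eq_abs]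

lemma exists_pow_mul_norm_fourier_osc_le (hψ : ContDiff ℝ ∞ ψ) (n : ℕ) :
    ∀ {g : ℝ → ℂ}, ContDiff ℝ ∞ g → HasCompactSupport g →
      ∃ K : ℝ, ∀ a β, |β| ^ n * ‖𝓕 (osc ψ g a) β‖ ≤ K * (1 + |a|) ^ n := by
  induction n with
  | zero =>
    intro g _ _
    exact ⟨∫ s, ‖g s‖, fun a β => by simpa using norm_fourier_osc_le_integral ψ g a β⟩
  | succ n ih =>
    intro g hg hgc
    have hψd : ContDiff ℝ ∞ (deriv ψ) := (contDiff_infty_iff_deriv.1 hψ).2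
    obtain ⟨K₁, hK₁⟩ := ih (contDiff_infty_iff_deriv.1 hg).2 hgc.deriv
    obtain ⟨K₂, hK₂⟩ := ih (g := fun s => Complex.I * deriv ψ s * g s)
      ((contDiff_const.mul (Complex.ofRealCLM.contDiff.comp hψd)).mul hg) hgc.mul_left
    refine ⟨|K₁| + |K₂|, fun a β => ?_⟩
    have ha := abs_nonneg a
    calc |β| ^ (n + 1) * ‖𝓕 (osc ψ g a) β‖ = |β| ^ n * (|β| * ‖𝓕 (osc ψ g a) β‖) := by ring
      _ ≤ |β| ^ n * (‖𝓕 (osc ψ (deriv g) a) β‖ +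
          |a| * ‖𝓕 (osc ψ (fun s => Complex.I * deriv ψ s * g s) a) β‖) :=
        mul_le_mul_of_nonneg_left (abs_mul_norm_fourier_osc_le hψ hg hgc a β) (by positivity)
      _ = |β| ^ n * ‖𝓕 (osc ψ (deriv g) a) β‖ + |a| *
          (|β| ^ n * ‖𝓕 (osc ψ (fun s => Complex.I * deriv ψ s * g s) a) β‖) := by ring
      _ ≤ |K₁| * (1 + |a|) ^ n + |a| * (|K₂| * (1 + |a|) ^ n) := add_le_add
        ((hK₁ a β).trans (mul_le_mul_of_nonneg_right (le_abs_self K₁) (by positivity)))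
        (mul_le_mul_of_nonneg_left ((hK₂ a β).trans
          (mul_le_mul_of_nonneg_right (le_abs_self K₂) (by positivity))) ha)
      _ ≤ (|K₁| + |K₂|) * (1 + |a|) ^ (n + 1) := by
        rw [pow_succ]
        have hK : 0 ≤ (|K₁| * |a| + |K₂|) * (1 + |a|) ^ n := by positivity
        linarith

lemma exists_norm_fourier_osc_le (hψ : ContDiff ℝ ∞ ψ) (hg : ContDiff ℝ ∞ g)
    (hgc : HasCompactSupport g) :
    ∃ K : ℝ, 0 < K ∧ ∀ a β, ‖𝓕 (osc ψ g a) β‖ ≤ K * (1 + |a|) ^ 2 * (1 + β ^ 2)⁻¹ := by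
  obtain ⟨K₀, hK₀⟩ := exists_pow_mul_norm_fourier_osc_le hψ 0 hg hgc
  obtain ⟨K₂, hK₂⟩ := exists_pow_mul_norm_fourier_osc_le hψ 2 hg hgc
  refine ⟨|K₀| + |K₂| + 1, by positivity, fun a β => ?_⟩
  rw [← div_eq_mul_inv, le_div_iff₀ (by positivity)]
  have h₀ := hK₀ a β
  have h₂ := hK₂ a β
  simp only [pow_zero, one_mul, mul_one, sq_abs] at h₀ h₂
  have hone : 1 ≤ (1 + |a|) ^ 2 := one_le_pow₀ (by linarith [abs_nonneg a])
  calc ‖𝓕 (osc ψ g a) β‖ * (1 + β ^ 2)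
      = ‖𝓕 (osc ψ g a) β‖ * 1 + β ^ 2 * ‖𝓕 (osc ψ g a) β‖ := by ring
    _ ≤ |K₀| * (1 + |a|) ^ 2 + |K₂| * (1 + |a|) ^ 2 := by
      refine add_le_add ?_ (h₂.trans (by gcongr; exact le_abs_self K₂))
      rw [mul_one]
      exact (h₀.trans (le_abs_self K₀)).trans (le_mul_of_one_le_right (abs_nonneg _) hone)
    _ ≤ (|K₀| + |K₂| + 1) * (1 + |a|) ^ 2 := by
      rw [← add_mul]
      exact mul_le_mul_of_nonneg_right (by linarith) (by positivity)

lemma hasDerivAt_fourier_osc (hψ : Continuous ψ) (hg : Continuous g) (hgc : HasCompactSupport g)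
    (a β : ℝ) :
    HasDerivAt (fun a => 𝓕 (osc ψ g a) β)
      (𝓕 (osc ψ (fun s => Complex.I * ψ s * g s) a) β) a := by
  have hcont (a : ℝ) : Continuous fun s => Real.fourierChar (-(inner ℝ s β)) • osc ψ g a s :=
    (Real.continuous_fourierChar.comp (by fun_prop)).smul (continuous_osc hψ hg a)
  have hcont' : Continuous fun s : ℝ => Real.fourierChar (-(inner ℝ s β)) •
      osc ψ (fun s => Complex.I * ψ s * g s) a s :=
    (Real.continuous_fourierChar.comp (by fun_prop)).smul (continuous_osc hψ (by fun_prop) a)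
  simp only [Real.fourier_eq]
  refine (hasDerivAt_integral_of_dominated_loc_of_deriv_le (μ := volume) (s := Set.univ)
    (F := fun a s => Real.fourierChar (-(inner ℝ s β)) • osc ψ g a s)
    (F' := fun a s => Real.fourierChar (-(inner ℝ s β)) •
      osc ψ (fun s => Complex.I * ψ s * g s) a s)
    (bound := fun s => ‖Complex.I * ψ s * g s‖) Filter.univ_mem
    (.of_forall fun a => (hcont a).aestronglyMeasurable)
    ((Real.fourierIntegral_convergent_iff β).2 (integrable_osc hψ hg hgc a))
    hcont'.aestronglyMeasurable (.of_forall fun s a _ => by simp [Circle.norm_smul]) ?_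
    (.of_forall fun s a _ => ?_)).2
  · exact (Continuous.integrable_of_hasCompactSupport (by fun_prop) hgc.mul_left).norm
  · refine HasDerivAt.const_smul _ ?_
    have hphase : HasDerivAt (fun a : ℝ => ((a * ψ s : ℝ) : ℂ) * Complex.I)
        (ψ s * Complex.I) a := by
      simpa using ((hasDerivAt_id a).mul_const (ψ s)).ofReal_comp.mul_const Complex.I
    refine (hphase.cexp.const_mul (g s)).congr_deriv ?_
    simp only [osc]
    ring

lemma exists_norm_fourier_osc_sub_le (hψ : ContDiff ℝ ∞ ψ) (hg : ContDiff ℝ ∞ g)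
    (hgc : HasCompactSupport g) :
    ∃ K : ℝ, 0 < K ∧ ∀ A a a' β, |a| ≤ A → |a'| ≤ A →
      ‖𝓕 (osc ψ g a) β - 𝓕 (osc ψ g a') β‖ ≤ K * (1 + A) ^ 2 * (1 + β ^ 2)⁻¹ * |a - a'| := by
  obtain ⟨K, hK, hbound⟩ := exists_norm_fourier_osc_le hψ
    (g := fun s => Complex.I * ψ s * g s)
    ((contDiff_const.mul (Complex.ofRealCLM.contDiff.comp hψ)).mul hg) hgc.mul_left
  refine ⟨K, hK, fun A a a' β ha ha' => ?_⟩
  refine (convex_Icc (-A) A).norm_image_sub_le_of_norm_hasDerivWithin_le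
    (f := fun a => 𝓕 (osc ψ g a) β)
    (fun x _ => (hasDerivAt_fourier_osc hψ.continuous hg.continuous hgc x β).hasDerivWithinAt)
    (fun x hx => (hbound x β).trans ?_) (abs_le.1 ha') (abs_le.1 ha)
  have := abs_le.2 hx
  gcongr

lemma exists_abs_mul_norm_fourier_osc_le (hψ : ContDiff ℝ ∞ ψ) (hψ' : ∀ s, deriv ψ s ≠ 0)
    (hg : ContDiff ℝ ∞ g) (hgc : HasCompactSupport g) :
    ∃ K : ℝ, 0 < K ∧ ∀ a β, |a| * ‖𝓕 (osc ψ g a) β‖ ≤ K * (1 + |β|) := by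
  set G : ℝ → ℂ := fun s => (Complex.I * deriv ψ s)⁻¹ * g s
  have hψd : ContDiff ℝ ∞ (deriv ψ) := (contDiff_infty_iff_deriv.1 hψ).2
  have hne (s : ℝ) : Complex.I * deriv ψ s ≠ 0 :=
    mul_ne_zero Complex.I_ne_zero (Complex.ofReal_ne_zero.2 (hψ' s))
  have hG : ContDiff ℝ ∞ G :=
    ((contDiff_const.mul (Complex.ofRealCLM.contDiff.comp hψd)).inv hne).mul hg
  have hcancel : (fun s => Complex.I * deriv ψ s * G s) = g :=
    funext fun s => mul_inv_cancel_left₀ (hne s) (g s)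
  have : 0 ≤ ∫ s, ‖G s‖ := integral_nonneg fun _ => norm_nonneg _
  have h₁ : 0 ≤ ∫ s, ‖deriv G s‖ := integral_nonneg fun _ => norm_nonneg _
  refine ⟨2 * Real.pi * (∫ s, ‖G s‖) + (∫ s, ‖deriv G s‖) + 1, by positivity, fun a β => ?_⟩
  have hparts := two_pi_mul_fourier_osc hψ hG hgc.mul_left a β
  rw [hcancel] at hparts
  calc |a| * ‖𝓕 (osc ψ g a) β‖ = ‖(a : ℂ) * 𝓕 (osc ψ g a) β‖ := by
        rw [norm_mul, Complex.norm_real, Real.norm_eq_abs]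
    _ = ‖2 * Real.pi * Complex.I * β * 𝓕 (osc ψ G a) β - 𝓕 (osc ψ (deriv G) a) β‖ := by
        rw [hparts, add_sub_cancel_left]
    _ ≤ 2 * Real.pi * |β| * (∫ s, ‖G s‖) + ∫ s, ‖deriv G s‖ := by
        refine (norm_sub_le _ _).trans (add_le_add ?_ (norm_fourier_osc_le_integral ..))
        simp only [norm_mul, Complex.norm_ofNat, Complex.norm_real, Real.norm_eq_abs,
          Complex.norm_I, mul_one, abs_of_pos Real.pi_pos]
        gcongr
        exact norm_fourier_osc_le_integral ..
    _ ≤ _ := by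
        have := mul_nonneg h₁ (abs_nonneg β)
        have : 0 ≤ 2 * Real.pi * ∫ s, ‖G s‖ := by positivity
        linarith [abs_nonneg β]

lemma continuous_fourier_osc (hψ : Continuous ψ) (hg : Continuous g) (hgc : HasCompactSupport g)
    (a : ℝ) : Continuous (𝓕 (osc ψ g a)) :=
  VectorFourier.fourierIntegral_continuous Real.continuous_fourierChar (by fun_prop)
    (integrable_osc hψ hg hgc a)

lemma integrable_fourier_osc (hψ : ContDiff ℝ ∞ ψ) (hg : ContDiff ℝ ∞ g)
    (hgc : HasCompactSupport g) (a : ℝ) : Integrable (𝓕 (osc ψ g a)) := by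
  obtain ⟨K, -, hK⟩ := exists_norm_fourier_osc_le hψ hg hgc
  exact (integrable_inv_one_add_sq.const_mul _).mono'
    (continuous_fourier_osc hψ.continuous hg.continuous hgc a).aestronglyMeasurable
    (.of_forall (hK a))

lemma osc_eq_integral_fourier (hψ : ContDiff ℝ ∞ ψ) (hg : ContDiff ℝ ∞ g)
    (hgc : HasCompactSupport g) (a s : ℝ) :
    osc ψ g a s =
      ∫ β : ℝ, Complex.exp ((2 * Real.pi * β * s : ℝ) * Complex.I) * 𝓕 (osc ψ g a) β := by
  conv_lhs =>
    rw [← (continuous_osc hψ.continuous hg.continuous a).fourierInv_fourier_eq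
      (integrable_osc hψ.continuous hg.continuous hgc a) (integrable_fourier_osc hψ hg hgc a)]
  rw [Real.fourierInv_eq']
  refine integral_congr_ae (.of_forall fun β => ?_)
  simp only [smul_eq_mul, RCLike.inner_apply, conj_trivial]
  congr 4
  ring

end Oscillation

/-! ### Skew products -/

namespace WeightedIFS

variable {ι X : Type*} (S : WeightedIFS ι X)

lemma iterate_op_integral {E α : Type*} [NormedAddCommGroup E] [NormedSpace ℝ E]
    [MeasurableSpace α] {μ : Measure α} {f : α → X → E} (hf : ∀ x, Integrable (fun a => f a x) μ)
    (k : ℕ) (x : X) :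
    Integrable (fun a => S.op^[k] (f a) x) μ ∧
      S.op^[k] (fun z => ∫ a, f a z ∂μ) x = ∫ a, S.op^[k] (f a) x ∂μ := by
  induction k generalizing x with
  | zero => exact ⟨hf x, rfl⟩
  | succ k ih =>
    simp only [Function.iterate_succ_apply', op]
    have h : ∀ i ∈ S.index, Integrable (fun a => S.weight i • S.op^[k] (f a) (S.map i x)) μ :=
      fun i _ => (ih _).1.smul (S.weight i)
    refine ⟨integrable_finsetSum _ h, ?_⟩
    rw [integral_finsetSum _ h]
    exact sum_congr rfl fun i _ => by rw [(ih _).2, integral_smul]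

/-- The skew product over `S` recording the cocycle `θ` in a real coordinate. -/
def skew (θ : ι → X → ℝ) : WeightedIFS ι (ℝ × X) where
  index := S.index
  weight := S.weight
  map i p := (p.1 + θ i p.2, S.map i p.2)
  weight_nonneg := S.weight_nonneg
  sum_weight_le_one := S.sum_weight_le_one

lemma iterate_op_skew_exp_mul (θ : ι → X → ℝ) (b : ℝ) (u : X → ℂ) (k : ℕ) (p : ℝ × X) :
    (S.skew θ).op^[k] (fun p => Complex.exp ((b * p.1 : ℝ) * Complex.I) * u p.2) p =
      Complex.exp ((b * p.1 : ℝ) * Complex.I) * (S.twisted θ b)^[k] u p.2 := by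
  induction k generalizing p with
  | zero => rfl
  | succ k ih =>
    simp only [Function.iterate_succ_apply', op, ih, twisted, mul_sum]
    refine sum_congr rfl fun i _ => ?_
    simp only [skew, Complex.real_smul, mul_add, Complex.ofReal_add, add_mul, Complex.exp_add]
    ring

open FourierTransform
open scoped ContDiff

/-- Fourier inversion reduces the skew operator to the twisted transfer operators. -/
lemma norm_iterate_op_skew_osc_le {ψ : ℝ → ℝ} {g : ℝ → ℂ} (hψ : ContDiff ℝ ∞ ψ)
    (hg : ContDiff ℝ ∞ g) (hgc : HasCompactSupport g) {θ : ι → X → ℝ} {α : X → ℝ} {w : ℝ → ℝ}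
    {k : ℕ} {p : ℝ × X} (hw : Integrable w)
    (h : ∀ β, ‖(S.twisted θ (2 * Real.pi * β))^[k] (fun x => 𝓕 (osc ψ g (α x)) β) p.2‖ ≤ w β) :
    ‖(S.skew θ).op^[k] (fun p => osc ψ g (α p.2) p.1) p‖ ≤ ∫ β, w β := by
  have hint (p : ℝ × X) : Integrable fun β : ℝ =>
      Complex.exp ((2 * Real.pi * β * p.1 : ℝ) * Complex.I) * 𝓕 (osc ψ g (α p.2)) β :=
    (integrable_fourier_osc hψ hg hgc _).bdd_mul (c := 1)
      (Continuous.aestronglyMeasurable (by fun_prop))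
      (.of_forall fun β => (Complex.norm_exp_ofReal_mul_I _).le)
  simp only [osc_eq_integral_fourier hψ hg hgc]
  rw [((S.skew θ).iterate_op_integral hint k p).2]
  refine norm_integral_le_of_norm_le hw (.of_forall fun β => ?_)
  rw [S.iterate_op_skew_exp_mul θ _ (fun x => 𝓕 (osc ψ g (α x)) β), norm_mul,
    Complex.norm_exp_ofReal_mul_I, one_mul]
  exact h β

end WeightedIFS

lemma sum_wt_mul_succ_le (N : ℕ) : ∑ n ∈ range N, wt n * (n + 1) ≤ 2 := by
  have h : ∑ n ∈ range N, wt n * (n + 1) = 2 - (N + 2) * (1 / 2) ^ N := by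
    induction N with
    | zero => norm_num
    | succ k ih => rw [sum_range_succ, ih, wt]; push_cast; ring
  rw [h, sub_le_self_iff]
  positivity

lemma iterate_op_skew_branchIFS_le_exp {t : ℝ} (ht : 0 < t) (N k : ℕ)
    {G : ℝ × unitInterval → ℝ} {c : ℝ} (hc : 0 ≤ c) (h : ∀ p, G p ≤ c * Real.exp p.1)
    (p : ℝ × unitInterval) :
    ((branchIFS ht N).skew (logDen t)).op^[k] G p ≤ (2 + 2 * t) ^ k * c * Real.exp p.1 := by
  induction k generalizing p with
  | zero => simpa using h p
  | succ k ih =>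
    rw [Function.iterate_succ_apply']
    have hK : 0 ≤ (2 + 2 * t) ^ k * c * Real.exp p.1 := by positivity
    calc _ ≤ ∑ n ∈ range N, wt n * ((2 + t * (n + 1)) * ((2 + 2 * t) ^ k * c * Real.exp p.1)) := by
          refine sum_le_sum fun n _ => mul_le_mul_of_nonneg_left ((ih _).trans ?_) (wt_pos n).le
          have hden : den t n p.2 ≤ 2 + t * (n + 1) := sub_le_self _ p.2.2.1
          change _ * Real.exp (p.1 + Real.log (den t n p.2)) ≤ _
          rw [Real.exp_add, Real.exp_log (den_pos ht n p.2.2.2), ← mul_assoc, mul_comm]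
          exact mul_le_mul_of_nonneg_right hden hK
      _ = (2 * ∑ n ∈ range N, wt n + t * ∑ n ∈ range N, wt n * (n + 1)) *
          ((2 + 2 * t) ^ k * c * Real.exp p.1) := by
          simp only [mul_sum, ← sum_add_distrib, sum_mul]
          exact sum_congr rfl fun n _ => by ring
      _ ≤ (2 * 1 + t * 2) * ((2 + 2 * t) ^ k * c * Real.exp p.1) := by
          gcongr
          · exact (sum_wt_le fun n _ => n.zero_le).trans_eq (pow_zero _)
          · exact sum_wt_mul_succ_le N
      _ = _ := by ring

/-! ### Decay of oscillating windows under the skew operator -/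

section WindowDecay

open FourierTransform
open scoped ContDiff

lemma integrable_one_add_sqrt_abs_mul_inv_one_add_sq :
    Integrable fun β : ℝ => (1 + √|β|) * (1 + β ^ 2)⁻¹ := by
  refine ((integrable_rpow_neg_one_add_norm_sq (E := ℝ) (μ := volume) (r := 3 / 2)
    (by norm_num)).const_mul 2).mono' (by fun_prop) (.of_forall fun β => ?_)
  have hone : 1 ≤ 1 + β ^ 2 := le_add_of_nonneg_right (sq_nonneg β)
  have hp : 0 < 1 + β ^ 2 := one_pos.trans_le hone
  have hsqrt : √|β| ≤ (1 + β ^ 2) ^ (1 / 4 : ℝ) := by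
    refine (Real.sqrt_le_sqrt (Real.abs_le_sqrt (by linarith : β ^ 2 ≤ 1 + β ^ 2))).trans_eq ?_
    rw [Real.sqrt_eq_rpow, Real.sqrt_eq_rpow, ← Real.rpow_mul hp.le]
    norm_num
  rw [Real.norm_of_nonneg (by positivity), Real.norm_eq_abs, sq_abs]
  calc (1 + √|β|) * (1 + β ^ 2)⁻¹ ≤ (2 * (1 + β ^ 2) ^ (1 / 4 : ℝ)) * (1 + β ^ 2)⁻¹ := by
        gcongr
        linarith [Real.one_le_rpow hone (by norm_num : (0 : ℝ) ≤ 1 / 4)]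
    _ = 2 * (1 + β ^ 2) ^ (-(3 / 2) / 2 : ℝ) := by
      rw [mul_assoc, ← Real.rpow_neg_one, ← Real.rpow_add hp]
      norm_num

variable {ψ : ℝ → ℝ} {g : ℝ → ℂ}

lemma exists_norm_fourier_osc_mul_le (hψ : ContDiff ℝ ∞ ψ) (hg : ContDiff ℝ ∞ g)
    (hgc : HasCompactSupport g) :
    ∃ K : ℝ, 0 < K ∧ ∀ B, 1 ≤ |B| → ∀ q q' β, |q| ≤ 1 → |q'| ≤ 1 →
      ‖𝓕 (osc ψ g (B * q)) β‖ ≤ K * |B| ^ 3 * (1 + β ^ 2)⁻¹ ∧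
      ‖𝓕 (osc ψ g (B * q)) β - 𝓕 (osc ψ g (B * q')) β‖ ≤
        K * |B| ^ 3 * (1 + β ^ 2)⁻¹ * |q - q'| := by
  obtain ⟨K₁, hK₁, hbound⟩ := exists_norm_fourier_osc_le hψ hg hgc
  obtain ⟨K₂, hK₂, hlip⟩ := exists_norm_fourier_osc_sub_le hψ hg hgc
  refine ⟨4 * (K₁ + K₂), by positivity, fun B hB q q' β hq hq' => ?_⟩
  have hα {q : ℝ} (hq : |q| ≤ 1) : |B * q| ≤ |B| := by
    rw [abs_mul]
    exact mul_le_of_le_one_right (abs_nonneg B) hq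
  have hsq : (1 + |B|) ^ 2 ≤ 4 * |B| ^ 2 := by nlinarith [abs_nonneg B]
  constructor
  · calc ‖𝓕 (osc ψ g (B * q)) β‖ ≤ K₁ * (1 + |B * q|) ^ 2 * (1 + β ^ 2)⁻¹ := hbound _ _
      _ ≤ (K₁ + K₂) * (4 * |B| ^ 3) * (1 + β ^ 2)⁻¹ := by
        gcongr
        · linarith
        · calc (1 + |B * q|) ^ 2 ≤ (1 + |B|) ^ 2 :=
              pow_le_pow_left₀ (by positivity) (by linarith [hα hq]) 2
            _ ≤ 4 * |B| ^ 2 := hsq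
            _ ≤ 4 * |B| ^ 3 := by gcongr; simp
      _ = _ := by ring
  · calc ‖𝓕 (osc ψ g (B * q)) β - 𝓕 (osc ψ g (B * q')) β‖
        ≤ K₂ * (1 + |B|) ^ 2 * (1 + β ^ 2)⁻¹ * |B * q - B * q'| := hlip _ _ _ _ (hα hq) (hα hq')
      _ ≤ (K₁ + K₂) * (4 * |B| ^ 2) * (1 + β ^ 2)⁻¹ * |B * q - B * q'| := by gcongr; linarith
      _ = _ := by rw [← mul_sub, abs_mul]; ring

lemma exists_norm_fourier_osc_low_le (hψ : ContDiff ℝ ∞ ψ) (hψ' : ∀ s, deriv ψ s ≠ 0)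
    (hg : ContDiff ℝ ∞ g) (hgc : HasCompactSupport g) {c : ℝ} (hc : 0 < c) :
    ∃ K : ℝ, 0 < K ∧ ∀ B, 1 ≤ |B| → ∀ q β, c ≤ q → |β| ≤ 1 →
      ‖𝓕 (osc ψ g (B * q)) β‖ ≤ K / |B| * (1 + β ^ 2)⁻¹ := by
  obtain ⟨K, hK, hbound⟩ := exists_abs_mul_norm_fourier_osc_le hψ hψ' hg hgc
  refine ⟨4 * K / c, by positivity, fun B hB q β hq hβ => ?_⟩
  have hB0 : 0 < |B| := one_pos.trans_le hB
  have hβ2 : β ^ 2 ≤ 1 := (sq_le_one_iff_abs_le_one β).2 hβ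
  have h : |B| * c * ‖𝓕 (osc ψ g (B * q)) β‖ ≤ K * 2 :=
    calc _ ≤ |B * q| * ‖𝓕 (osc ψ g (B * q)) β‖ := by
          rw [abs_mul, abs_of_pos (hc.trans_le hq)]
          gcongr
      _ ≤ K * (1 + |β|) := hbound _ _
      _ ≤ K * 2 := by gcongr; linarith
  rw [← div_eq_mul_inv, le_div_iff₀ (by positivity), div_div, le_div_iff₀ (by positivity)]
  nlinarith [mul_nonneg (mul_nonneg hB0.le hc.le) (norm_nonneg (𝓕 (osc ψ g (B * q)) β))]

/-- Low frequencies decay by non-stationary phase, high frequencies by the spectral gap. -/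
lemma exists_norm_twisted_iterate_fourier_osc_le {t : ℝ} (ht : 0 < t) (hψ : ContDiff ℝ ∞ ψ)
    (hψ' : ∀ s, deriv ψ s ≠ 0) (hg : ContDiff ℝ ∞ g) (hgc : HasCompactSupport g) :
    ∃ N₀ : ℕ, ∃ σ : ℝ, 0 < σ ∧ σ < 1 ∧ ∀ c L : ℝ, 0 < c → 0 ≤ L → ∃ C > 0, ∀ N ≥ N₀,
      ∀ q : unitInterval → ℝ, (∀ r, c ≤ q r) → (∀ r, q r ≤ 1) →
        (∀ r r', |q r - q r'| ≤ L * dist r r') → ∀ B : ℝ, 1 ≤ |B| → ∀ k β r,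
        ‖((branchIFS ht N).twisted (logDen t) (2 * Real.pi * β))^[k]
            (fun r => 𝓕 (osc ψ g (B * q r)) β) r‖ ≤
          C * (1 / |B| + |B| ^ 3 * σ ^ k) * ((1 + √|β|) * (1 + β ^ 2)⁻¹) := by
  obtain ⟨N₀, σ, C₁, hσ0, hσ1, hC₁, hgap⟩ := exists_norm_twisted_iterate_le ht
  refine ⟨N₀, σ, hσ0, hσ1, fun c L hc hL => ?_⟩
  obtain ⟨A, hA, hlow⟩ := exists_norm_fourier_osc_low_le hψ hψ' hg hgc hc
  obtain ⟨K, hK, hhigh⟩ := exists_norm_fourier_osc_mul_le hψ hg hgc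
  set D := C₁ * √(2 * Real.pi) * (K * (1 + L))
  refine ⟨A + D, by positivity, fun N hN q hcq hq1 hqL B hB k β r => ?_⟩
  have hq (r : unitInterval) : |q r| ≤ 1 := abs_le.2 ⟨by linarith [hcq r], hq1 r⟩
  rcases le_or_gt |β| 1 with hβ | hβ
  · calc _ ≤ A / |B| * (1 + β ^ 2)⁻¹ := ((branchIFS ht N).norm_twisted_iterate_le _ _ _ k _).trans
          ((branchIFS ht N).iterate_op_le_of_le k (by positivity)
            (fun r => hlow B hB (q r) β (hcq r) hβ) r)
      _ = A * (1 / |B| + 0) * ((1 + 0) * (1 + β ^ 2)⁻¹) := by ring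
      _ ≤ _ := by gcongr <;> first | positivity | linarith [show 0 < D by positivity]
  · have h2π : 1 ≤ |2 * Real.pi * β| := by
      rw [abs_mul, abs_of_pos Real.two_pi_pos]
      nlinarith [Real.pi_gt_three]
    calc _ ≤ C₁ * √|2 * Real.pi * β| * σ ^ k * (K * (1 + L) * |B| ^ 3 * (1 + β ^ 2)⁻¹) := by
          refine hgap N hN _ h2π _ _ (fun y => ?_) (fun y z => ?_) k r
          · refine (hhigh B hB (q y) (q y) β (hq y) (hq y)).1.trans ?_
            gcongr
            exact le_mul_of_one_le_right hK.le (by linarith)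
          · calc _ ≤ K * |B| ^ 3 * (1 + β ^ 2)⁻¹ * ((1 + L) * dist y z) := by
                  refine (hhigh B hB (q y) (q z) β (hq y) (hq z)).2.trans ?_
                  gcongr
                  exact (hqL y z).trans (by gcongr; linarith)
              _ = 1 * dist y z * (K * (1 + L) * |B| ^ 3 * (1 + β ^ 2)⁻¹) := by ring
              _ ≤ _ := by gcongr
      _ = D * (0 + |B| ^ 3 * σ ^ k) * ((0 + √|β|) * (1 + β ^ 2)⁻¹) := by
          rw [abs_mul, abs_of_pos Real.two_pi_pos, Real.sqrt_mul Real.two_pi_pos.le]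
          ring
      _ ≤ _ := by gcongr <;> first | positivity | linarith

lemma exists_norm_iterate_op_skew_osc_le {t : ℝ} (ht : 0 < t) (hψ : ContDiff ℝ ∞ ψ)
    (hψ' : ∀ s, deriv ψ s ≠ 0) (hg : ContDiff ℝ ∞ g) (hgc : HasCompactSupport g) :
    ∃ N₀ : ℕ, ∃ σ : ℝ, 0 < σ ∧ σ < 1 ∧ ∀ c L : ℝ, 0 < c → 0 ≤ L → ∃ C > 0, ∀ N ≥ N₀,
      ∀ q : unitInterval → ℝ, (∀ r, c ≤ q r) → (∀ r, q r ≤ 1) →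
        (∀ r r', |q r - q r'| ≤ L * dist r r') → ∀ B : ℝ, 1 ≤ |B| → ∀ k p,
        ‖((branchIFS ht N).skew (logDen t)).op^[k] (fun p => osc ψ g (B * q p.2) p.1) p‖ ≤
          C * (1 / |B| + |B| ^ 3 * σ ^ k) := by
  obtain ⟨N₀, σ, hσ0, hσ1, h⟩ := exists_norm_twisted_iterate_fourier_osc_le ht hψ hψ' hg hgc
  refine ⟨N₀, σ, hσ0, hσ1, fun c L hc hL => ?_⟩
  obtain ⟨C, hC, hbound⟩ := h c L hc hL
  set I := ∫ β : ℝ, (1 + √|β|) * (1 + β ^ 2)⁻¹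
  have : 0 ≤ I := integral_nonneg fun β => by positivity
  refine ⟨C * (I + 1), by positivity, fun N hN q hcq hq1 hqL B hB k p => ?_⟩
  refine ((branchIFS ht N).norm_iterate_op_skew_osc_le hψ hg hgc
    (integrable_one_add_sqrt_abs_mul_inv_one_add_sq.const_mul _)
    fun β => hbound N hN q hcq hq1 hqL B hB k β p.2).trans ?_
  rw [integral_const_mul, mul_right_comm]
  gcongr
  exact le_add_of_nonneg_right zero_le_one

end WindowDecay

/-! ### Möbius maps -/

/-- The Möbius map `x ↦ x / (1 + y x)`; the parabolic branch `f₀` is `mobius 1`. -/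
noncomputable def mobius (y x : ℝ) : ℝ := x / (1 + y * x)

lemma mobius_one : mobius 1 = fun x => x / (1 + x) := by
  ext x
  rw [mobius, one_mul]

lemma mobius_mobius {y z x : ℝ} (h : 1 + z * x ≠ 0) :
    mobius y (mobius z x) = mobius (y + z) x := by
  have hden : (1 + z * x) * (1 + y * (x / (1 + z * x))) = 1 + (y + z) * x := by
    field_simp
    ring
  rw [mobius, mobius, mobius, div_div, hden]

lemma mobius_add {y x t : ℝ} (ht : 1 + y * t ≠ 0) (hxt : 1 + y * (x + t) ≠ 0) :
    mobius y (x + t) = mobius y t + mobius (y / (1 + y * t)) x / (1 + y * t) ^ 2 := by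
  have hden : 1 + y / (1 + y * t) * x = (1 + y * (x + t)) / (1 + y * t) := by
    field_simp
    ring
  have hcancel : x / ((1 + y * (x + t)) / (1 + y * t)) / (1 + y * t) ^ 2 =
      x / ((1 + y * (x + t)) * (1 + y * t)) := by
    rw [div_div_eq_mul_div, div_div, mul_div_assoc, sq, ← mul_assoc, div_mul_cancel_right₀ ht,
      ← div_eq_mul_inv]
  rw [mobius, mobius, mobius, hden, hcancel, div_add_div _ _ ht (mul_ne_zero hxt ht),
    div_eq_div_iff hxt (mul_ne_zero ht (mul_ne_zero hxt ht))]
  ring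

lemma mobius_sub_mobius {y x x' : ℝ} (h : 1 + y * x ≠ 0) (h' : 1 + y * x' ≠ 0) :
    mobius y x - mobius y x' = (x - x') * ((1 + y * x)⁻¹ * (1 + y * x')⁻¹) := by
  rw [mobius, mobius, div_sub_div _ _ h h', ← mul_inv, ← div_eq_mul_inv]
  ring

/-- The parameter of the Möbius map attached to a point `r` of the branch system. -/
noncomputable def slope (t : ℝ) (r : unitInterval) : ℝ := (1 - r) / t

lemma slope_nonneg {t : ℝ} (ht : 0 ≤ t) (r : unitInterval) : 0 ≤ slope t r :=
  div_nonneg (sub_nonneg.2 r.2.2) ht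

lemma slope_le {t : ℝ} (ht : 0 ≤ t) (r : unitInterval) : slope t r ≤ 1 / t :=
  div_le_div_of_nonneg_right (sub_le_self 1 r.2.1) ht

lemma slope_branch {t : ℝ} (ht : 0 < t) (n : ℕ) (r : unitInterval) :
    slope t (branch ht n r) = (slope t r + (n + 1)) / den t n r := by
  have hD := (den_pos ht n r.2.2).ne'
  rw [slope, coe_branch, slope]
  field_simp
  rw [den]
  ring

/-- Here `x ↦ mobius (n + 1) (x + t)` is `f₀ⁿ ∘ f_t`. -/
lemma mobius_slope_mobius {t x : ℝ} (ht : 0 < t) (hx : 0 ≤ x) (n : ℕ) (r : unitInterval) :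
    mobius (slope t r) (mobius (n + 1) (x + t)) =
      t / den t n r + mobius (slope t (branch ht n r)) x / den t n r ^ 2 := by
  have hs := slope_nonneg ht.le r
  have hden : den t n r = 1 + (slope t r + (n + 1)) * t := by
    rw [den, slope]
    field_simp
    ring
  rw [slope_branch, hden, mobius_mobius (by positivity), mobius_add (by positivity) (by positivity),
    mobius]

/-! ### Stationary measures -/

/-- The probability measure `ν` on `[0,1]` is stationary for the Lyons iterated function system. -/
structure IsConductance (t : ℝ) (ν : Measure ℝ) : Prop where
  isProbabilityMeasure : IsProbabilityMeasure ν
  measure_compl : ν (Set.Icc (0 : ℝ) 1)ᶜ = 0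
  eq_add : ν = (1 / 2 : ℝ≥0∞) • ν.map (mobius 1)
    + (1 / 2 : ℝ≥0∞) • ν.map (fun x => mobius 1 (x + t))

@[fun_prop]
lemma measurable_mobius (y : ℝ) : Measurable (mobius y) := by
  unfold mobius
  fun_prop

namespace IsConductance

variable {t : ℝ} {ν : Measure ℝ} (h : IsConductance t ν)
include h

lemma ae_mem : ∀ᵐ x ∂ν, x ∈ Set.Icc (0 : ℝ) 1 := ae_iff.2 h.measure_compl

section integral

variable {E : Type*} [NormedAddCommGroup E] [NormedSpace ℝ E] {g : ℝ → E} {M : ℝ}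

lemma integral_eq (hg : StronglyMeasurable g) (hM : ∀ x, ‖g x‖ ≤ M) :
    ∫ x, g x ∂ν = (1 / 2 : ℝ) • ∫ x, g (mobius 1 x) ∂ν +
      (1 / 2 : ℝ) • ∫ x, g (mobius 1 (x + t)) ∂ν := by
  have := h.isProbabilityMeasure
  have hint {φ : ℝ → ℝ} (hφ : Measurable φ) : Integrable g (ν.map φ) :=
    have := Measure.isProbabilityMeasure_map (μ := ν) hφ.aemeasurable
    .of_bound hg.aestronglyMeasurable M (.of_forall hM)
  have hm₀ : Measurable (mobius 1) := by fun_prop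
  have hm₁ : Measurable fun x => mobius 1 (x + t) := by fun_prop
  have heq : ∫ x, g x ∂ν = _ := congrArg (fun μ => ∫ x, g x ∂μ) h.eq_add
  rw [heq, integral_add_measure ((hint hm₀).smul_measure (by simp))
    ((hint hm₁).smul_measure (by simp)), integral_smul_measure, integral_smul_measure,
    integral_map hm₀.aemeasurable hg.aestronglyMeasurable,
    integral_map hm₁.aemeasurable hg.aestronglyMeasurable]
  simp

lemma integral_eq_sum (ht : 0 ≤ t) (N : ℕ) (hg : StronglyMeasurable g) (hM : ∀ x, ‖g x‖ ≤ M) :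
    ∫ x, g x ∂ν = ∑ n ∈ range N, wt n • ∫ x, g (mobius (n + 1) (x + t)) ∂ν +
      ((1 / 2 : ℝ) ^ N) • ∫ x, g (mobius N x) ∂ν := by
  induction N with
  | zero => simp [mobius]
  | succ k ih =>
    have hstep := h.integral_eq (g := fun x => g (mobius k x))
      (hg.comp_measurable (by fun_prop)) fun x => hM _
    have hcomp {φ : ℝ → ℝ} (hφ : ∀ x, 0 ≤ x → 0 ≤ φ x) :
        ∫ x, g (mobius k (mobius 1 (φ x))) ∂ν = ∫ x, g (mobius (k + 1) (φ x)) ∂ν :=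
      integral_congr_ae (h.ae_mem.mono fun x hx => by
        have := hφ x hx.1
        simp only [mobius_mobius (show 1 + 1 * φ x ≠ 0 by positivity)])
    rw [ih, sum_range_succ, hstep, hcomp fun x hx => hx, hcomp fun x hx => add_nonneg hx ht,
      smul_add, smul_smul, smul_smul, wt, ← pow_succ]
    push_cast
    abel

lemma norm_integral_exp_le (f : ℝ → ℝ) :
    ‖∫ x, Complex.exp ((f x : ℝ) * Complex.I) ∂ν‖ ≤ 1 := by
  have := h.isProbabilityMeasure
  refine (norm_integral_le_of_norm_le_const (C := 1) (.of_forall fun x => ?_)).trans (by simp)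
  rw [Complex.norm_exp_ofReal_mul_I]

end integral

end IsConductance

/-! ### Fourier coefficients along the branch system -/

/-- The absolute value of the Fourier transform, at `-a e^{-2s} / 2π`, of the image of `ν` under
the Möbius map of parameter `slope t r`, where `p = (s, r)`. -/
noncomputable def coeff (t : ℝ) (ν : Measure ℝ) (a : ℝ) (p : ℝ × unitInterval) : ℝ :=
  ‖∫ x, Complex.exp ((a * Real.exp (-2 * p.1) * mobius (slope t p.2) x : ℝ) * Complex.I) ∂ν‖

lemma coeff_nonneg (t : ℝ) (ν : Measure ℝ) (a : ℝ) (p : ℝ × unitInterval) :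
    0 ≤ coeff t ν a p := norm_nonneg _

namespace IsConductance

variable {t : ℝ} {ν : Measure ℝ} (h : IsConductance t ν)
include h

lemma coeff_map (ht : 0 < t) (a : ℝ) (p : ℝ × unitInterval) (n : ℕ) :
    coeff t ν a (p.1 + logDen t n p.2, branch ht n p.2) =
      ‖∫ x, Complex.exp ((a * Real.exp (-2 * p.1) *
        mobius (slope t p.2) (mobius (n + 1) (x + t)) : ℝ) * Complex.I) ∂ν‖ := by
  have hexp : Real.exp (-2 * (p.1 + logDen t n p.2)) =
      Real.exp (-2 * p.1) / den t n p.2 ^ 2 := by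
    have hD := den_pos ht n p.2.2.2
    rw [mul_add, Real.exp_add, div_eq_mul_inv, ← Real.exp_log (pow_pos hD 2), ← Real.exp_neg,
      Real.log_pow, logDen]
    push_cast
    rw [neg_mul 2 (Real.log _)]
  have hphase : ∫ x, Complex.exp ((a * Real.exp (-2 * p.1) *
      mobius (slope t p.2) (mobius (n + 1) (x + t)) : ℝ) * Complex.I) ∂ν =
      ∫ x, Complex.exp ((a * Real.exp (-2 * p.1) * (t / den t n p.2) : ℝ) * Complex.I) *
        Complex.exp ((a * Real.exp (-2 * (p.1 + logDen t n p.2)) *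
          mobius (slope t (branch ht n p.2)) x : ℝ) * Complex.I) ∂ν := by
    refine integral_congr_ae (h.ae_mem.mono fun x hx => ?_)
    simp only
    rw [← Complex.exp_add, ← add_mul, ← Complex.ofReal_add, mobius_slope_mobius ht hx.1, hexp]
    congr 3
    ring
  rw [hphase, integral_const_mul, norm_mul, Complex.norm_exp_ofReal_mul_I, one_mul, coeff]

lemma coeff_le_op_coeff (ht : 0 < t) (N : ℕ) (a : ℝ) (p : ℝ × unitInterval) :
    coeff t ν a p ≤ ((branchIFS ht N).skew (logDen t)).op (coeff t ν a) p + (1 / 2) ^ N := by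
  have hsum := h.integral_eq_sum ht.le N (M := 1) (g := fun x =>
    Complex.exp ((a * Real.exp (-2 * p.1) * mobius (slope t p.2) x : ℝ) * Complex.I))
    (Measurable.stronglyMeasurable (by fun_prop)) fun x => (Complex.norm_exp_ofReal_mul_I _).le
  rw [coeff, hsum]
  refine (norm_add_le _ _).trans (add_le_add ((norm_sum_le _ _).trans_eq ?_) ?_)
  · refine sum_congr rfl fun n _ => ?_
    rw [norm_smul, Real.norm_of_nonneg (wt_pos n).le, ← h.coeff_map ht]
    rfl
  · rw [norm_smul, Real.norm_of_nonneg (by positivity)]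
    exact mul_le_of_le_one_right (by positivity) (h.norm_integral_exp_le _)

end IsConductance

namespace WeightedIFS

variable {ι X : Type*} (S : WeightedIFS ι X)

/-- Iterate until the height `φ` enters the window, which it cannot jump over. -/
lemma le_sum_iterate_op_indicator {f φ : X → ℝ} {ε m W r₀ : ℝ} (hf : ∀ x, 0 ≤ f x) (hε : 0 ≤ ε)
    (hsub : ∀ x, f x ≤ S.op f x + ε) (hm : ∀ i x, φ x + m ≤ φ (S.map i x))
    (hW : ∀ i ∈ S.index, ∀ x, φ (S.map i x) ≤ φ x + W) (k : ℕ) {x : X} (hx : φ x ≤ r₀ + W)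
    (hk : r₀ ≤ φ x + k * m) :
    f x ≤ ∑ i ∈ range (k + 1),
      S.op^[i] (Set.indicator (φ ⁻¹' Set.Icc r₀ (r₀ + W)) f) x + k * ε := by
  set g := Set.indicator (φ ⁻¹' Set.Icc r₀ (r₀ + W)) f
  have hg (x : X) : 0 ≤ g x := Set.indicator_nonneg (fun x _ => hf x) x
  have hiter (i : ℕ) (x : X) : 0 ≤ S.op^[i] g x := S.iterate_op_nonneg i hg x
  have hmem {k : ℕ} {x : X} (hx : φ x ≤ r₀ + W) (hx' : r₀ ≤ φ x) :
      f x ≤ ∑ i ∈ range (k + 1), S.op^[i] g x + k * ε := by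
    have hfg : f x = g x := (Set.indicator_of_mem
      (show x ∈ φ ⁻¹' Set.Icc r₀ (r₀ + W) from ⟨hx', hx⟩) f).symm
    rw [hfg]
    refine le_add_of_le_of_nonneg ?_ (by positivity)
    exact single_le_sum (f := fun i => S.op^[i] g x) (fun i _ => hiter i x) (by simp : 0 ∈ _)
  induction k generalizing x with
  | zero => exact hmem hx (by simpa using hk)
  | succ k ih =>
    rcases le_or_gt r₀ (φ x) with hx' | hx'
    · exact hmem hx hx'
    push_cast at hk ⊢
    calc f x ≤ S.op f x + ε := hsub x
      _ ≤ ∑ i ∈ S.index, S.weight i *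
            (∑ j ∈ range (k + 1), S.op^[j] g (S.map i x) + k * ε) + ε := by
          gcongr
          refine sum_le_sum fun i hi => mul_le_mul_of_nonneg_left (ih ?_ ?_) (S.weight_nonneg i)
          · linarith [hW i hi x]
          · linarith [hm i x]
      _ = ∑ j ∈ range (k + 1), S.op^[j + 1] g x + (∑ i ∈ S.index, S.weight i) * (k * ε) + ε := by
          simp only [Function.iterate_succ_apply', op, smul_eq_mul, mul_add, sum_add_distrib,
            mul_sum, sum_mul]
          rw [sum_comm]
      _ ≤ ∑ j ∈ range (k + 2), S.op^[j] g x + (k + 1) * ε := by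
          rw [sum_range_succ' _ (k + 1)]
          have := mul_le_of_le_one_left (by positivity : 0 ≤ k * ε) S.sum_weight_le_one
          have : 0 ≤ S.op^[0] g x := hg x
          linarith

end WeightedIFS

lemma IsConductance.coeff_le_sum {t : ℝ} {ν : Measure ℝ} (h : IsConductance t ν) (ht : 0 < t)
    (N : ℕ) (a : ℝ) {r₀ W : ℝ} (hW : Real.log (2 + t * N) ≤ W) (k : ℕ) {p : ℝ × unitInterval}
    (hp : p.1 ≤ r₀ + W) (hk : r₀ ≤ p.1 + k * Real.log (1 + t)) :
    coeff t ν a p ≤ ∑ i ∈ range (k + 1), ((branchIFS ht N).skew (logDen t)).op^[i]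
      (Set.indicator (Prod.fst ⁻¹' Set.Icc r₀ (r₀ + W)) (coeff t ν a)) p + k * (1 / 2) ^ N := by
  refine ((branchIFS ht N).skew (logDen t)).le_sum_iterate_op_indicator (coeff_nonneg t ν a)
    (by positivity) (h.coeff_le_op_coeff ht N a) (fun n p => ?_) (fun n hn p => ?_) k hp hk
  · exact add_le_add_right
      (Real.log_le_log (by positivity) (one_add_t_le_den ht n p.2.2.2)) p.1
  · refine add_le_add_right ((Real.log_le_log (den_pos ht n p.2.2.2) ?_).trans hW) p.1
    have hn' : (n : ℝ) + 1 ≤ N := by exact_mod_cast mem_range.1 hn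
    exact (sub_le_self _ p.2.2.1).trans (by gcongr)

/-! ### Pairs of points and Cauchy–Schwarz -/

/-- The factor by which the Möbius map of parameter `slope t r` scales the difference `x - x'`. -/
noncomputable def pairWeight (t x x' : ℝ) (r : unitInterval) : ℝ :=
  (1 + slope t r * x)⁻¹ * (1 + slope t r * x')⁻¹

section pairWeight

variable {t x x' : ℝ} (ht : 0 < t) (hx : x ∈ Set.Icc (0 : ℝ) 1) (hx' : x' ∈ Set.Icc (0 : ℝ) 1)
include ht hx

lemma one_le_one_add_slope_mul (r : unitInterval) : 1 ≤ 1 + slope t r * x :=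
  le_add_of_nonneg_right (mul_nonneg (slope_nonneg ht.le r) hx.1)

lemma inv_one_add_slope_mul_mem (r : unitInterval) :
    (1 + slope t r * x)⁻¹ ∈ Set.Icc (1 + 1 / t)⁻¹ 1 := by
  have hone := one_le_one_add_slope_mul ht hx r
  refine ⟨inv_anti₀ (by linarith) ?_, inv_le_one_of_one_le₀ hone⟩
  gcongr
  exact (mul_le_of_le_one_right (slope_nonneg ht.le r) hx.2).trans (slope_le ht.le r)

lemma abs_inv_one_add_slope_mul_sub_le (r r' : unitInterval) :
    |(1 + slope t r * x)⁻¹ - (1 + slope t r' * x)⁻¹| ≤ 1 / t * dist r r' := by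
  have h₁ := one_le_one_add_slope_mul ht hx r
  have h₂ := one_le_one_add_slope_mul ht hx r'
  rw [inv_sub_inv (by linarith) (by linarith), abs_div,
    abs_of_pos (mul_pos (by linarith) (by linarith) : 0 < (1 + slope t r * x) * _)]
  refine (div_le_self (abs_nonneg _) (one_le_mul_of_one_le_of_one_le h₁ h₂)).trans ?_
  have hdiff : 1 + slope t r' * x - (1 + slope t r * x) = 1 / t * (r - r') * x := by
    unfold slope
    ring
  rw [hdiff, abs_mul, abs_mul, abs_of_pos (one_div_pos.2 ht), abs_of_nonneg hx.1,
    ← Real.dist_eq, ← Subtype.dist_eq]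
  exact mul_le_of_le_one_right (by positivity) hx.2

include hx'

lemma pairWeight_le_one (r : unitInterval) : pairWeight t x x' r ≤ 1 :=
  mul_le_one₀ (inv_one_add_slope_mul_mem ht hx r).2
    ((by positivity : 0 ≤ (1 + 1 / t)⁻¹).trans (inv_one_add_slope_mul_mem ht hx' r).1)
    (inv_one_add_slope_mul_mem ht hx' r).2

lemma le_pairWeight (r : unitInterval) : ((1 + 1 / t)⁻¹) ^ 2 ≤ pairWeight t x x' r := by
  have h := (inv_one_add_slope_mul_mem ht hx r).1
  rw [sq, pairWeight]
  exact mul_le_mul h (inv_one_add_slope_mul_mem ht hx' r).1 (by positivity)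
    ((by positivity : 0 ≤ (1 + 1 / t)⁻¹).trans h)

lemma abs_pairWeight_sub_le (r r' : unitInterval) :
    |pairWeight t x x' r - pairWeight t x x' r'| ≤ 2 / t * dist r r' := by
  have habs {x : ℝ} (hx : x ∈ Set.Icc (0 : ℝ) 1) (r : unitInterval) :
      |(1 + slope t r * x)⁻¹| ≤ 1 := by
    have h := inv_one_add_slope_mul_mem ht hx r
    rw [abs_of_nonneg ((by positivity : 0 ≤ (1 + 1 / t)⁻¹).trans h.1)]
    exact h.2
  unfold pairWeight
  calc |(1 + slope t r * x)⁻¹ * (1 + slope t r * x')⁻¹ -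
        (1 + slope t r' * x)⁻¹ * (1 + slope t r' * x')⁻¹|
      = |((1 + slope t r * x)⁻¹ - (1 + slope t r' * x)⁻¹) * (1 + slope t r * x')⁻¹ +
        (1 + slope t r' * x)⁻¹ * ((1 + slope t r * x')⁻¹ - (1 + slope t r' * x')⁻¹)| := by
        congr 1
        ring
    _ ≤ 1 / t * dist r r' * 1 + 1 * (1 / t * dist r r') := by
        refine (abs_add_le _ _).trans ?_
        rw [abs_mul, abs_mul]
        gcongr
        · exact abs_inv_one_add_slope_mul_sub_le ht hx r r'
        · exact habs hx' r
        · exact habs hx r'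
        · exact abs_inv_one_add_slope_mul_sub_le ht hx' r r'
    _ = _ := by ring

lemma mobius_slope_sub_mobius_slope (r : unitInterval) :
    mobius (slope t r) x - mobius (slope t r) x' = (x - x') * pairWeight t x x' r :=
  mobius_sub_mobius (one_pos.trans_le (one_le_one_add_slope_mul ht hx r)).ne'
    (one_pos.trans_le (one_le_one_add_slope_mul ht hx' r)).ne'

end pairWeight

/-- A smooth bump equal to one on `[-1, 1]` and supported in `[-2, 2]`. -/
def cutoff : ContDiffBump (0 : ℝ) := ⟨1, 2, one_pos, one_lt_two⟩

/-- The localised oscillation contributed by the pair `x` to the squared coefficients. -/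
noncomputable def pairWindow (t a : ℝ) (x : ℝ × ℝ) (p : ℝ × unitInterval) : ℂ :=
  osc (fun s => Real.exp (-2 * s)) (fun s => cutoff s)
    (a * (x.1 - x.2) * pairWeight t x.1 x.2 p.2) p.1

lemma norm_pairWindow_le_one (t a : ℝ) (x : ℝ × ℝ) (p : ℝ × unitInterval) :
    ‖pairWindow t a x p‖ ≤ 1 := by
  rw [pairWindow, norm_osc, Complex.norm_real, Real.norm_of_nonneg cutoff.nonneg]
  exact cutoff.le_one

lemma integrable_pairWindow {μ : Measure (ℝ × ℝ)} [IsFiniteMeasure μ] (t a : ℝ)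
    (p : ℝ × unitInterval) : Integrable (fun x => pairWindow t a x p) μ := by
  refine .of_bound (Measurable.aestronglyMeasurable ?_) 1
    (.of_forall fun x => norm_pairWindow_le_one t a x p)
  unfold pairWindow osc pairWeight
  fun_prop

lemma sq_norm_integral_exp_mul_I {α : Type*} [MeasurableSpace α] (μ : Measure α) [SFinite μ]
    (f : α → ℝ) :
    ((‖∫ x, Complex.exp (f x * Complex.I) ∂μ‖ ^ 2 : ℝ) : ℂ) =
      ∫ x, Complex.exp ((f x.1 - f x.2 : ℝ) * Complex.I) ∂μ.prod μ := by
  have hprod := integral_prod_mul (μ := μ) (ν := μ) (fun x => Complex.exp (f x * Complex.I))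
    fun x => (starRingEnd ℂ) (Complex.exp (f x * Complex.I))
  rw [integral_conj, Complex.mul_conj, Complex.normSq_eq_norm_sq] at hprod
  rw [← hprod]
  refine integral_congr_ae (.of_forall fun x => ?_)
  simp only
  rw [← Complex.exp_conj, ← Complex.exp_add, map_mul, Complex.conj_ofReal, Complex.conj_I]
  push_cast
  congr 1
  ring

lemma norm_integral_le_add_measureReal {α E : Type*} [MeasurableSpace α] {μ : Measure α}
    [IsProbabilityMeasure μ] [NormedAddCommGroup E] [NormedSpace ℝ E] {f : α → E} {A : Set α}
    {η : ℝ} (hη : 0 ≤ η) (hA : MeasurableSet A) (hf : ∀ᵐ x ∂μ, ‖f x‖ ≤ 1)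
    (hfA : ∀ᵐ x ∂μ, x ∉ A → ‖f x‖ ≤ η) : ‖∫ x, f x ∂μ‖ ≤ η + μ.real A := by
  have hind : Integrable (A.indicator fun _ => (1 : ℝ)) μ := (integrable_const 1).indicator hA
  refine (norm_integral_le_of_norm_le (g := fun x => η + A.indicator (fun _ => 1) x)
    ((integrable_const η).add hind) ?_).trans_eq ?_
  · filter_upwards [hf, hfA] with x hx hxA
    by_cases hmem : x ∈ A
    · rw [Set.indicator_of_mem hmem]
      linarith
    · rw [Set.indicator_of_notMem hmem, add_zero]
      exact hxA hmem
  · rw [integral_add (integrable_const η) hind, integral_indicator_const _ hA]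
    simp

namespace IsConductance

variable {t : ℝ} {ν : Measure ℝ} (h : IsConductance t ν)
include h

lemma ae_prod_mem : ∀ᵐ x ∂ν.prod ν, x ∈ Set.Icc (0 : ℝ) 1 ×ˢ Set.Icc (0 : ℝ) 1 := by
  have := h.isProbabilityMeasure
  exact (Measure.quasiMeasurePreserving_fst.ae h.ae_mem).and
    (Measure.quasiMeasurePreserving_snd.ae h.ae_mem)

lemma cutoff_mul_sq_coeff (ht : 0 < t) (a s : ℝ) (p : ℝ × unitInterval) :
    ((cutoff (p.1 - s) * coeff t ν a p ^ 2 : ℝ) : ℂ) =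
      ∫ x, pairWindow t (a * Real.exp (-2 * s)) x (p.1 - s, p.2) ∂ν.prod ν := by
  have := h.isProbabilityMeasure
  rw [coeff, Complex.ofReal_mul, sq_norm_integral_exp_mul_I, ← integral_const_mul]
  refine integral_congr_ae (h.ae_prod_mem.mono fun x hx => ?_)
  have hexp : Real.exp (-2 * p.1) = Real.exp (-2 * s) * Real.exp (-2 * (p.1 - s)) := by
    rw [← Real.exp_add]
    ring_nf
  simp only [pairWindow, osc]
  rw [← mul_sub, mobius_slope_sub_mobius_slope ht hx.1 hx.2, hexp]
  congr 4
  ring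

lemma iterate_op_skew_cutoff_mul_sq_coeff_le (ht : 0 < t) (N i : ℕ) (a s : ℝ)
    (p : ℝ × unitInterval) {δ η : ℝ} (hη : 0 ≤ η)
    (hfar : ∀ x ∈ Set.Icc (0 : ℝ) 1 ×ˢ Set.Icc (0 : ℝ) 1, δ < |x.1 - x.2| →
      ‖((branchIFS ht N).skew (logDen t)).op^[i] (pairWindow t (a * Real.exp (-2 * s)) x)
        (p.1 - s, p.2)‖ ≤ η) :
    ((branchIFS ht N).skew (logDen t)).op^[i]
        (fun p => cutoff (p.1 - s) * coeff t ν a p ^ 2) p ≤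
      η + (ν.prod ν).real {x | |x.1 - x.2| ≤ δ} := by
  have := h.isProbabilityMeasure
  set S := (branchIFS ht N).skew (logDen t)
  set a' := a * Real.exp (-2 * s)
  have htranslate (n : ℕ) (q : ℝ × unitInterval) :
      S.map n (q.1 - s, q.2) = ((S.map n q).1 - s, (S.map n q).2) :=
    Prod.ext (add_sub_right_comm _ _ _).symm rfl
  have hrepr : ((S.op^[i] (fun p => cutoff (p.1 - s) * coeff t ν a p ^ 2) p : ℝ) : ℂ) =
      ∫ x, S.op^[i] (pairWindow t a' x) (p.1 - s, p.2) ∂ν.prod ν :=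
    calc _ = S.op^[i] (fun p => ((cutoff (p.1 - s) * coeff t ν a p ^ 2 : ℝ) : ℂ)) p :=
          (S.iterate_op_comp_linearMap Complex.ofRealCLM.toLinearMap i _ p).symm
      _ = S.op^[i] (fun p => ∫ x, pairWindow t a' x (p.1 - s, p.2) ∂ν.prod ν) p := by
          simp only [h.cutoff_mul_sq_coeff ht, a']
      _ = S.op^[i] (fun p => ∫ x, pairWindow t a' x p ∂ν.prod ν) (p.1 - s, p.2) :=
          S.iterate_op_comp (φ := fun q => (q.1 - s, q.2)) htranslate i
            (fun p => ∫ x, pairWindow t a' x p ∂ν.prod ν) p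
      _ = _ := (S.iterate_op_integral (integrable_pairWindow t a') i _).2
  refine (le_abs_self _).trans ?_
  rw [← Real.norm_eq_abs, ← Complex.norm_real, hrepr]
  refine norm_integral_le_add_measureReal hη (measurableSet_le (by fun_prop) measurable_const)
    (.of_forall fun x => ?_) (h.ae_prod_mem.mono fun x hx hmem => hfar x hx (not_le.1 hmem))
  exact (S.norm_iterate_op_le i _ _).trans
    (S.iterate_op_le_of_le i zero_le_one (norm_pairWindow_le_one t a' x) _)

lemma sq_iterate_op_skew_indicator_coeff_le (ht : 0 < t) (N i J : ℕ) (a : ℝ)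
    (p : ℝ × unitInterval) {r₀ W δ η : ℝ} (hJ : W < J) (hη : 0 ≤ η)
    (hfar : ∀ j < J, ∀ x ∈ Set.Icc (0 : ℝ) 1 ×ˢ Set.Icc (0 : ℝ) 1, δ < |x.1 - x.2| →
      ‖((branchIFS ht N).skew (logDen t)).op^[i]
        (pairWindow t (a * Real.exp (-2 * (r₀ + j))) x) (p.1 - (r₀ + j), p.2)‖ ≤ η) :
    (((branchIFS ht N).skew (logDen t)).op^[i]
        (Set.indicator (Prod.fst ⁻¹' Set.Icc r₀ (r₀ + W)) (coeff t ν a)) p) ^ 2 ≤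
      J * (η + (ν.prod ν).real {x | |x.1 - x.2| ≤ δ}) := by
  set S := (branchIFS ht N).skew (logDen t)
  have hdom (p : ℝ × unitInterval) :
      Set.indicator (Prod.fst ⁻¹' Set.Icc r₀ (r₀ + W)) (coeff t ν a) p ^ 2 ≤
        ∑ j ∈ range J, cutoff (p.1 - (r₀ + j)) * coeff t ν a p ^ 2 := by
    have hnn : ∀ j ∈ range J, 0 ≤ cutoff (p.1 - (r₀ + j)) * coeff t ν a p ^ 2 :=
      fun j _ => mul_nonneg cutoff.nonneg (sq_nonneg _)
    by_cases hp : p.1 ∈ Set.Icc r₀ (r₀ + W)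
    · have hfloor := Nat.floor_le (sub_nonneg.2 hp.1)
      have hlt := Nat.lt_floor_add_one (p.1 - r₀)
      have hmem : ⌊p.1 - r₀⌋₊ ∈ range J := by
        rw [mem_range, ← Nat.cast_lt (α := ℝ)]
        linarith [hp.2]
      refine le_trans (le_of_eq ?_) (single_le_sum hnn hmem)
      rw [Set.indicator_of_mem (Set.mem_preimage.2 hp), cutoff.one_of_mem_closedBall, one_mul]
      rw [mem_closedBall_zero_iff, Real.norm_eq_abs]
      exact abs_le.2 ⟨by linarith [show cutoff.rIn = 1 from rfl], by
        linarith [show cutoff.rIn = 1 from rfl]⟩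
    · rw [Set.indicator_of_notMem (by simpa using hp), zero_pow two_ne_zero]
      exact sum_nonneg hnn
  calc _ ≤ S.op^[i] (fun p => ∑ j ∈ range J, cutoff (p.1 - (r₀ + j)) * coeff t ν a p ^ 2) p :=
        (S.sq_iterate_op_le i _ p).trans (S.iterate_op_mono i hdom p)
    _ ≤ ∑ _j ∈ range J, (η + (ν.prod ν).real {x | |x.1 - x.2| ≤ δ}) := by
        rw [S.iterate_op_sum]
        exact sum_le_sum fun j hj => h.iterate_op_skew_cutoff_mul_sq_coeff_le ht N i a _ p hη
          (hfar j (mem_range.1 hj))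
    _ = _ := by rw [sum_const, card_range, nsmul_eq_mul]

end IsConductance

/-! ### Frostman regularity -/

lemma mobius_le_mobius {y x x' : ℝ} (hy : 0 ≤ y) (hx : 0 ≤ x) (hxx' : x ≤ x') :
    mobius y x ≤ mobius y x' := by
  have hx' := hx.trans hxx'
  rw [mobius, mobius, div_le_div_iff₀ (by positivity) (by positivity)]
  linarith

lemma abs_sub_le_sq_mul_abs_mobius_sub {y D u v : ℝ} (hu : 0 < 1 + y * u) (hv : 0 < 1 + y * v)
    (huD : 1 + y * u ≤ D) (hvD : 1 + y * v ≤ D) :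
    |u - v| ≤ D ^ 2 * |mobius y u - mobius y v| := by
  have hD := hu.le.trans huD
  rw [mobius_sub_mobius hu.ne' hv.ne', ← mul_inv, ← div_eq_mul_inv, abs_div,
    abs_of_pos (mul_pos hu hv), mul_div_assoc', le_div_iff₀ (mul_pos hu hv), mul_comm, sq]
  gcongr

lemma real_preimage_closedBall_le {X Y : Type*} [PseudoMetricSpace X] [PseudoMetricSpace Y]
    [MeasurableSpace X] {μ : Measure X} [IsFiniteMeasure μ] {A : Set X} (hA : ∀ᵐ u ∂μ, u ∈ A)
    {φ : X → Y} {K ρ m : ℝ} (hK : 0 ≤ K) (hφ : ∀ u ∈ A, ∀ v ∈ A, dist u v ≤ K * dist (φ u) (φ v))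
    (hm : 0 ≤ m) (hball : ∀ u, μ.real (Metric.closedBall u (2 * K * ρ)) ≤ m) (y : Y) :
    μ.real (φ ⁻¹' Metric.closedBall y ρ) ≤ m := by
  by_cases hex : ∃ u ∈ A, φ u ∈ Metric.closedBall y ρ
  · obtain ⟨u, hu, hφu⟩ := hex
    refine (ENNReal.toReal_mono (by finiteness)
      (measure_mono_ae (hA.mono fun v hv hφv => ?_))).trans (hball u)
    calc dist v u ≤ K * dist (φ v) (φ u) := hφ v hv u hu
      _ ≤ K * (ρ + ρ) := by
          gcongr
          exact (dist_triangle_right _ _ y).trans (add_le_add hφv hφu)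
      _ = 2 * K * ρ := by ring
  · have hzero : μ (φ ⁻¹' Metric.closedBall y ρ) = 0 :=
      measure_mono_null (fun u hu hmem => hex ⟨u, hmem, hu⟩) (ae_iff.1 hA)
    rwa [measureReal_def, hzero, ENNReal.toReal_zero]

lemma exists_le_mul_rpow_of_le_mul {ι : Type*} {f : ι → ℝ → ℝ} {A q ρ₀ : ℝ} (hA : 1 < A)
    (hq : 0 < q) (hq' : q < 1) (hρ₀ : 0 < ρ₀) (hf : ∀ x ρ, f x ρ ≤ 1)
    (hstep : ∀ ρ m, ρ ≤ ρ₀ → 0 ≤ m → (∀ x, f x (A * ρ) ≤ m) → ∀ x, f x ρ ≤ q * m) :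
    ∃ C : ℝ, 0 < C ∧ ∃ s : ℝ, 0 < s ∧ ∀ x ρ, 0 < ρ → f x ρ ≤ C * ρ ^ s := by
  have hA₀ : 0 < A := one_pos.trans hA
  set s := -Real.log q / Real.log A
  have hs : 0 < s := div_pos (neg_pos.2 (Real.log_neg hq hq')) (Real.log_pos hA)
  have hqA : q * A ^ s = 1 := by
    rw [Real.rpow_def_of_pos hA₀, mul_div_cancel₀ _ (Real.log_pos hA).ne', Real.exp_neg,
      Real.exp_log hq, mul_inv_cancel₀ hq.ne']
  have hlarge {ρ : ℝ} (hρ : ρ₀ ≤ ρ) (x : ι) : f x ρ ≤ (ρ / ρ₀) ^ s :=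
    (hf x ρ).trans (Real.one_le_rpow (by rwa [one_le_div hρ₀]) hs.le)
  have hscale (j : ℕ) : ∀ ρ, 0 < ρ → ρ₀ ≤ A ^ j * ρ → ∀ x, f x ρ ≤ (ρ / ρ₀) ^ s := by
    induction j with
    | zero => exact fun ρ _ hj => hlarge (by simpa using hj)
    | succ j ih =>
      intro ρ hρ hj x
      rcases le_or_gt ρ₀ ρ with hle | hlt
      · exact hlarge hle x
      have hnext := hstep ρ ((A * ρ / ρ₀) ^ s) hlt.le (by positivity)
        (ih (A * ρ) (by positivity) (by rwa [← mul_assoc, ← pow_succ])) x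
      rwa [mul_div_assoc, Real.mul_rpow hA₀.le (by positivity), ← mul_assoc, hqA,
        one_mul] at hnext
  refine ⟨(1 / ρ₀) ^ s, by positivity, s, hs, fun x ρ hρ => ?_⟩
  obtain ⟨j, hj⟩ := pow_unbounded_of_one_lt (ρ₀ / ρ) hA
  refine (hscale j ρ hρ ((div_lt_iff₀ hρ).1 hj).le x).trans_eq ?_
  rw [← Real.mul_rpow (by positivity) hρ.le, one_div_mul_eq_div]

lemma sum_wt_mul_add_le {k : ℕ} {a : ℕ → ℝ} {b m : ℝ} (hm : 0 ≤ m) (ha : ∀ n < k + 1, a n ≤ m)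
    (hb : b ≤ m) (hzero : a 0 = 0 ∨ b = 0) :
    ∑ n ∈ range (k + 1), wt n * a n + (1 / 2) ^ (k + 1) * b ≤ (1 - (1 / 2) ^ (k + 1)) * m := by
  have hmass := sum_range_wt (k + 1)
  rcases hzero with ha₀ | rfl
  · have hrest : ∑ n ∈ range k, wt (n + 1) * a (n + 1) ≤ (∑ n ∈ range k, wt (n + 1)) * m := by
      rw [sum_mul]
      exact sum_le_sum fun n hn =>
        mul_le_mul_of_nonneg_left (ha (n + 1) (by simpa using hn)) (wt_pos _).le
    have hb' := mul_le_mul_of_nonneg_left hb (by positivity : (0 : ℝ) ≤ (1 / 2) ^ (k + 1))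
    have hhalf : (1 / 2 : ℝ) ^ (k + 1) * m ≤ wt 0 * m := mul_le_mul_of_nonneg_right
      (pow_le_pow_of_le_one (by norm_num) (by norm_num) (by simp)) hm
    rw [sum_range_succ'] at hmass ⊢
    rw [ha₀, mul_zero, add_zero, ← hmass]
    linarith
  · rw [mul_zero, add_zero, ← hmass, sum_mul]
    exact sum_le_sum fun n hn => mul_le_mul_of_nonneg_left (ha n (mem_range.1 hn)) (wt_pos n).le

namespace IsConductance

variable {t : ℝ} {ν : Measure ℝ} (h : IsConductance t ν)
include h

lemma real_eq_sum (ht : 0 ≤ t) (N : ℕ) {A : Set ℝ} (hA : MeasurableSet A) :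
    ν.real A = ∑ n ∈ range N, wt n * ν.real ((fun x => mobius (n + 1) (x + t)) ⁻¹' A) +
      (1 / 2 : ℝ) ^ N * ν.real (mobius N ⁻¹' A) := by
  have hind {φ : ℝ → ℝ} (hφ : Measurable φ) :
      ∫ x, A.indicator (fun _ => (1 : ℝ)) (φ x) ∂ν = ν.real (φ ⁻¹' A) := by
    rw [← integral_indicator_one (hφ hA)]
    rfl
  have hsum := h.integral_eq_sum ht N (g := A.indicator fun _ => (1 : ℝ))
    (stronglyMeasurable_const.indicator hA) (M := 1) fun x =>
      (norm_indicator_le_norm_self _ x).trans norm_one.le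
  rw [hind (by fun_prop), hind (by fun_prop)] at hsum
  refine hsum.trans (congrArg₂ _ (sum_congr rfl fun n _ => ?_) rfl)
  rw [hind (by fun_prop), smul_eq_mul]

lemma real_preimage_branch_closedBall_le (ht : 0 ≤ t) {n l : ℕ} (hn : n < l) {ρ m : ℝ} (hm : 0 ≤ m)
    (hball : ∀ u, ν.real (Metric.closedBall u (2 * (1 + l * (1 + t)) ^ 2 * ρ)) ≤ m) (x : ℝ) :
    ν.real ((fun y => mobius (n + 1) (y + t)) ⁻¹' Metric.closedBall x ρ) ≤ m := by
  have := h.isProbabilityMeasure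
  have hden {u : ℝ} (hu : u ∈ Set.Icc (0 : ℝ) 1) :
      0 < 1 + ((n : ℝ) + 1) * (u + t) ∧ 1 + ((n : ℝ) + 1) * (u + t) ≤ 1 + l * (1 + t) := by
    have hu₀ := hu.1
    have hn' : (n : ℝ) + 1 ≤ l := by exact_mod_cast hn
    refine ⟨by positivity, ?_⟩
    gcongr
    exact hu.2
  refine real_preimage_closedBall_le h.ae_mem (by positivity) (fun u hu v hv => ?_) hm hball x
  have hexpand := abs_sub_le_sq_mul_abs_mobius_sub (hden hu).1 (hden hv).1 (hden hu).2 (hden hv).2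
  rwa [add_sub_add_right_eq_sub] at hexpand

lemma real_preimage_mobius_closedBall_le (ht : 0 ≤ t) (l : ℕ) {ρ m : ℝ} (hm : 0 ≤ m)
    (hball : ∀ u, ν.real (Metric.closedBall u (2 * (1 + l * (1 + t)) ^ 2 * ρ)) ≤ m) (x : ℝ) :
    ν.real (mobius l ⁻¹' Metric.closedBall x ρ) ≤ m := by
  have := h.isProbabilityMeasure
  have hden {u : ℝ} (hu : u ∈ Set.Icc (0 : ℝ) 1) :
      0 < 1 + (l : ℝ) * u ∧ 1 + (l : ℝ) * u ≤ 1 + l * (1 + t) := by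
    have hu₀ := hu.1
    refine ⟨by positivity, ?_⟩
    gcongr
    linarith [hu.2]
  exact real_preimage_closedBall_le h.ae_mem (by positivity)
    (fun u hu v hv => abs_sub_le_sq_mul_abs_mobius_sub (hden hu).1 (hden hv).1 (hden hu).2
      (hden hv).2) hm hball x

lemma real_preimage_eq_zero {φ : ℝ → ℝ} {A : Set ℝ} (hφ : ∀ y ∈ Set.Icc (0 : ℝ) 1, φ y ∉ A) :
    ν.real (φ ⁻¹' A) = 0 := by
  have hzero : ν (φ ⁻¹' A) = 0 :=
    measure_mono_null (fun y hy hmem => hφ y hmem hy) h.measure_compl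
  rw [measureReal_def, hzero, ENNReal.toReal_zero]

/-- A small ball cannot meet both the parabolic branch `f₀^(k+1)` and the branch `f_t`, so a
definite proportion of the mass misses it. -/
lemma real_closedBall_le (ht : 0 ≤ t) (k : ℕ) {ρ m : ℝ} (hm : 0 ≤ m)
    (hρ : mobius (k + 1) 1 + 2 * ρ < mobius 1 t)
    (hball : ∀ u, ν.real (Metric.closedBall u (2 * (1 + (k + 1) * (1 + t)) ^ 2 * ρ)) ≤ m) (x : ℝ) :
    ν.real (Metric.closedBall x ρ) ≤ (1 - (1 / 2) ^ (k + 1)) * m := by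
  have hball' (u : ℝ) :
      ν.real (Metric.closedBall u (2 * (1 + (k + 1 : ℕ) * (1 + t)) ^ 2 * ρ)) ≤ m := by
    exact_mod_cast hball u
  rw [h.real_eq_sum ht (k + 1) Metric.isClosed_closedBall.measurableSet]
  refine sum_wt_mul_add_le hm
    (fun n hn => h.real_preimage_branch_closedBall_le ht hn hm hball' x)
    (h.real_preimage_mobius_closedBall_le ht (k + 1) hm hball' x) ?_
  rw [Real.closedBall_eq_Icc]
  rcases le_or_gt (x - ρ) (mobius (k + 1) 1) with hx | hx
  · refine .inl (h.real_preimage_eq_zero fun y hy hmem => ?_)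
    have hle := mobius_le_mobius zero_le_one ht (le_add_of_nonneg_left hy.1 : t ≤ y + t)
    rw [Nat.cast_zero, zero_add] at hmem
    linarith [hmem.2]
  · refine .inr (h.real_preimage_eq_zero fun y hy hmem => ?_)
    have hle := mobius_le_mobius (by positivity : (0 : ℝ) ≤ (k : ℝ) + 1) hy.1 hy.2
    rw [Nat.cast_succ] at hmem
    linarith [hmem.1]

lemma exists_real_closedBall_le (ht : 0 < t) :
    ∃ C : ℝ, 0 < C ∧ ∃ s : ℝ, 0 < s ∧ ∀ x ρ : ℝ, 0 < ρ →
      ν.real (Metric.closedBall x ρ) ≤ C * ρ ^ s := by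
  have := h.isProbabilityMeasure
  obtain ⟨k, hk⟩ := exists_nat_one_div_lt (show 0 < mobius 1 t by unfold mobius; positivity)
  have hgap : mobius (k + 1) 1 < mobius 1 t := by
    refine lt_of_le_of_lt ?_ hk
    rw [mobius, mul_one]
    exact one_div_le_one_div_of_le (by positivity) (le_add_of_nonneg_left zero_le_one)
  have hexp : 1 < 2 * (1 + (k + 1) * (1 + t)) ^ 2 := by
    have : 0 ≤ ((k : ℝ) + 1) * (1 + t) := by positivity
    nlinarith
  have hpow : (1 / 2 : ℝ) ^ (k + 1) < 1 := pow_lt_one₀ (by norm_num) (by norm_num) (by simp)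
  have hpow' : (0 : ℝ) < (1 / 2) ^ (k + 1) := by positivity
  refine exists_le_mul_rpow_of_le_mul (ρ₀ := (mobius 1 t - mobius (k + 1) 1) / 3) hexp
    (sub_pos.2 hpow) (sub_lt_self 1 hpow') (by linarith) (fun _ _ => measureReal_le_one)
    fun ρ m hρ hm hball => h.real_closedBall_le ht.le k hm (by linarith) hball

lemma exists_real_near_diagonal_le (ht : 0 < t) :
    ∃ C : ℝ, 0 < C ∧ ∃ s : ℝ, 0 < s ∧ ∀ δ : ℝ, 0 < δ →
      (ν.prod ν).real {x | |x.1 - x.2| ≤ δ} ≤ C * δ ^ s := by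
  have := h.isProbabilityMeasure
  obtain ⟨C, hC, s, hs, hball⟩ := h.exists_real_closedBall_le ht
  refine ⟨C, hC, s, hs, fun δ hδ => ENNReal.toReal_le_of_le_ofReal (by positivity) ?_⟩
  rw [Measure.prod_apply (measurableSet_le (by fun_prop) measurable_const)]
  calc ∫⁻ x, ν (Prod.mk x ⁻¹' {x : ℝ × ℝ | |x.1 - x.2| ≤ δ}) ∂ν
      ≤ ∫⁻ _, ENNReal.ofReal (C * δ ^ s) ∂ν := by
        refine lintegral_mono fun x => ?_
        have hslice : Prod.mk x ⁻¹' {x : ℝ × ℝ | |x.1 - x.2| ≤ δ} = Metric.closedBall x δ := by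
          ext y
          rw [Metric.mem_closedBall, Real.dist_eq, abs_sub_comm]
          rfl
        simp only [hslice]
        rw [← ofReal_measureReal]
        exact ENNReal.ofReal_le_ofReal (hball x δ hδ)
    _ = _ := by simp

end IsConductance

/-! ### Power decay -/

lemma norm_iterate_op_skew_pairWindow_le_exp {t : ℝ} (ht : 0 < t) (N k : ℕ) (a : ℝ) (x : ℝ × ℝ)
    (p : ℝ × unitInterval) :
    ‖((branchIFS ht N).skew (logDen t)).op^[k] (pairWindow t a x) p‖ ≤
      (2 + 2 * t) ^ k * Real.exp 2 * Real.exp p.1 := by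
  refine (WeightedIFS.norm_iterate_op_le _ k _ p).trans
    (iterate_op_skew_branchIFS_le_exp ht N k (Real.exp_pos 2).le (fun p => ?_) p)
  rw [← Real.exp_add]
  rcases lt_or_ge |p.1| 2 with hp | hp
  · exact (norm_pairWindow_le_one t a x p).trans
      (Real.one_le_exp (by linarith [(abs_lt.1 hp).1]))
  · have hzero : cutoff p.1 = 0 := cutoff.zero_of_le_dist (by rwa [Real.dist_0_eq_abs])
    rw [pairWindow, norm_osc, hzero, Complex.ofReal_zero, norm_zero]
    positivity

lemma pow_le_one_div_pow_of_pow_le {σ D Z : ℝ} {m i l : ℕ} (hσ : 0 ≤ σ) (hZ : 0 < Z) (hm : m ≠ 0)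
    (hσD : σ ^ m ≤ 1 / D) (hi : Z ^ (l * m) ≤ D ^ i) : σ ^ i ≤ 1 / Z ^ l := by
  refine le_of_pow_le_pow_left₀ hm (by positivity) ?_
  calc (σ ^ i) ^ m = (σ ^ m) ^ i := by rw [← pow_mul, ← pow_mul, mul_comm]
    _ ≤ (1 / D) ^ i := by gcongr
    _ = 1 / D ^ i := one_div_pow D i
    _ ≤ 1 / Z ^ (l * m) := one_div_le_one_div_of_le (by positivity) hi
    _ = (1 / Z ^ l) ^ m := by rw [one_div_pow, ← pow_mul]

lemma exists_norm_iterate_op_skew_pairWindow_le_spectral {t : ℝ} (ht : 0 < t) :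
    ∃ N₀ : ℕ, ∃ σ : ℝ, 0 < σ ∧ σ < 1 ∧ ∃ C : ℝ, 0 < C ∧ ∀ N ≥ N₀, ∀ a : ℝ,
      ∀ x ∈ Set.Icc (0 : ℝ) 1 ×ˢ Set.Icc (0 : ℝ) 1, 1 ≤ |a * (x.1 - x.2)| →
        ∀ (k : ℕ) (p : ℝ × unitInterval),
          ‖((branchIFS ht N).skew (logDen t)).op^[k] (pairWindow t a x) p‖ ≤
            C * (1 / |a * (x.1 - x.2)| + |a * (x.1 - x.2)| ^ 3 * σ ^ k) := by
  have hderiv (s : ℝ) : deriv (fun s => Real.exp (-2 * s)) s ≠ 0 := by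
    have h : HasDerivAt (fun s => Real.exp (-2 * s)) (Real.exp (-2 * s) * (-2 * 1)) s :=
      ((hasDerivAt_id s).const_mul (-2)).exp
    rw [h.deriv]
    have := Real.exp_pos (-2 * s)
    linarith
  obtain ⟨N₀, σ, hσ, hσ', hdecay⟩ := exists_norm_iterate_op_skew_osc_le ht
    (ψ := fun s => Real.exp (-2 * s)) (g := fun s => (cutoff s : ℂ)) (by fun_prop) hderiv
    (Complex.ofRealCLM.contDiff.comp cutoff.contDiff)
    (cutoff.hasCompactSupport.comp_left Complex.ofReal_zero)
  obtain ⟨C, hC, hdecay⟩ := hdecay (((1 + 1 / t)⁻¹) ^ 2) (2 / t) (by positivity) (by positivity)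
  exact ⟨N₀, σ, hσ, hσ', C, hC, fun N hN a x hx hB k p => hdecay N hN (pairWeight t x.1 x.2)
    (le_pairWeight ht hx.1 hx.2) (pairWeight_le_one ht hx.1 hx.2)
    (abs_pairWeight_sub_le ht hx.1 hx.2) _ hB k p⟩

/-- Few steps cannot lift the point `p` into the window, and many steps make the spectral gap
effective; hence the bound is uniform in the number of steps. -/
lemma exists_norm_iterate_op_skew_pairWindow_le {t : ℝ} (ht : 0 < t) :
    ∃ N₀ m : ℕ, ∃ C : ℝ, 0 < C ∧ ∀ N ≥ N₀, ∀ Z a : ℝ, 1 ≤ Z →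
      ∀ x ∈ Set.Icc (0 : ℝ) 1 ×ˢ Set.Icc (0 : ℝ) 1,
        Z ^ 4 / (2 + 2 * t) ^ 2 ≤ |a * (x.1 - x.2)| → |a * (x.1 - x.2)| ≤ Z ^ 8 →
          ∀ (i : ℕ) (p : ℝ × unitInterval), p.1 ≤ -(32 * m + 4) * Real.log Z →
            ‖((branchIFS ht N).skew (logDen t)).op^[i] (pairWindow t a x) p‖ ≤
              C * (1 / Z ^ 4) := by
  obtain ⟨N₀, σ, hσ, hσ', C, hC, hgap⟩ := exists_norm_iterate_op_skew_pairWindow_le_spectral ht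
  set D := 2 + 2 * t
  have hD : 1 < D := by linarith
  obtain ⟨m, hm⟩ := exists_pow_lt_of_lt_one (show 0 < 1 / D by positivity) hσ'
  have hm₀ : m ≠ 0 := by
    rintro rfl
    exact (hm.trans ((div_lt_one (by positivity)).2 hD)).ne (pow_zero σ)
  refine ⟨N₀, m, D ^ 2 + (D ^ 2 + 1) * C + Real.exp 2, by positivity,
    fun N hN Z a hZ x hx hlow hup i p hp => ?_⟩
  have hZ₀ : 0 < Z := one_pos.trans_le hZ
  set B := |a * (x.1 - x.2)|
  have hB₀ : 0 < B := lt_of_lt_of_le (by positivity) hlow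
  have hBinv : 1 / B ≤ D ^ 2 * (1 / Z ^ 4) :=
    (one_div_le_one_div_of_le (by positivity) hlow).trans_eq (by rw [one_div_div, mul_one_div])
  rcases le_or_gt (D ^ i) (Z ^ (32 * m)) with hi | hi
  · have hheight : Real.exp p.1 ≤ 1 / Z ^ (32 * m + 4) := by
      rw [one_div, ← Real.exp_log (pow_pos hZ₀ _), ← Real.exp_neg, Real.log_pow]
      exact Real.exp_le_exp.2 (hp.trans_eq (by push_cast; ring))
    calc _ ≤ D ^ i * Real.exp 2 * Real.exp p.1 :=
          norm_iterate_op_skew_pairWindow_le_exp ht N i a x p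
      _ ≤ Z ^ (32 * m) * Real.exp 2 * (1 / Z ^ (32 * m + 4)) := by gcongr
      _ = Real.exp 2 * (1 / Z ^ 4) := by rw [pow_add]; field_simp
      _ ≤ _ := by gcongr; exact le_add_of_nonneg_left (by positivity)
  rcases le_or_gt 1 B with hB | hB
  · have hσi := pow_le_one_div_pow_of_pow_le hσ.le hZ₀ hm₀ hm.le hi.le
    have hcube : B ^ 3 * σ ^ i ≤ 1 / Z ^ 4 :=
      calc B ^ 3 * σ ^ i ≤ (Z ^ 8) ^ 3 * (1 / Z ^ 32) := by gcongr
        _ = 1 / Z ^ 8 := by field_simp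
        _ ≤ 1 / Z ^ 4 := one_div_le_one_div_of_le (by positivity)
          (pow_le_pow_right₀ hZ (by norm_num))
    calc _ ≤ C * (1 / B + B ^ 3 * σ ^ i) := hgap N hN a x hx hB i p
      _ ≤ C * (D ^ 2 * (1 / Z ^ 4) + 1 / Z ^ 4) := by gcongr
      _ = (D ^ 2 + 1) * C * (1 / Z ^ 4) := by ring
      _ ≤ _ := by gcongr; linarith [Real.exp_pos 2, sq_nonneg D]
  · calc _ ≤ 1 := (WeightedIFS.norm_iterate_op_le _ i _ p).trans
          (WeightedIFS.iterate_op_le_of_le _ i zero_le_one (norm_pairWindow_le_one t a x) p)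
      _ ≤ 1 / B := (one_le_div hB₀).2 hB.le
      _ ≤ D ^ 2 * (1 / Z ^ 4) := hBinv
      _ ≤ _ := by gcongr; rw [add_assoc]; exact le_add_of_nonneg_right (by positivity)

lemma abs_mul_exp_mul_mem_Icc {a d j r₀ D Z : ℝ} (hZ : 0 < Z)
    (ha : |a| * Real.exp (-2 * r₀) = Z ^ 8) (hj : 0 ≤ j) (hjZ : Real.exp j ≤ D * Z)
    (hd : 1 / Z ^ 2 ≤ |d|) (hd' : |d| ≤ 1) :
    |a * Real.exp (-2 * (r₀ + j)) * d| ∈ Set.Icc (Z ^ 4 / D ^ 2) (Z ^ 8) := by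
  have habs : |a * Real.exp (-2 * (r₀ + j)) * d| = Z ^ 8 * Real.exp (-2 * j) * |d| := by
    rw [abs_mul, abs_mul, Real.abs_exp, mul_add, Real.exp_add, ← mul_assoc, ha]
  have hD : 0 < D := pos_of_mul_pos_left ((Real.exp_pos j).trans_le hjZ) hZ.le
  have hlow : 1 / (D * Z) ^ 2 ≤ Real.exp (-2 * j) := by
    rw [neg_mul, Real.exp_neg, two_mul, Real.exp_add, ← sq, ← one_div]
    exact one_div_le_one_div_of_le (by positivity) (by gcongr)
  rw [habs]
  constructor
  · calc Z ^ 4 / D ^ 2 = Z ^ 8 * (1 / (D * Z) ^ 2) * (1 / Z ^ 2) := by field_simp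
      _ ≤ _ := by gcongr
  · calc Z ^ 8 * Real.exp (-2 * j) * |d| ≤ Z ^ 8 * 1 * 1 := by
          gcongr
          exact Real.exp_le_one_iff.2 (by linarith)
      _ = Z ^ 8 := by ring

lemma abs_mul_exp_log_eq_pow {Z a : ℝ} {m : ℕ} (hZ : 0 < Z) (ha : |a| = Z ^ (64 * m + 16)) :
    |a| * Real.exp (-2 * ((32 * m + 4) * Real.log Z)) = Z ^ 8 := by
  have hlog : -2 * ((32 * m + 4) * Real.log Z) = -Real.log (Z ^ (64 * m + 8)) := by
    rw [Real.log_pow]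
    push_cast
    ring
  rw [ha, hlog, Real.exp_neg, Real.exp_log (by positivity), ← div_eq_mul_inv,
    div_eq_iff (by positivity), ← pow_add]
  congr 1
  ring

lemma exists_rpow_gauge {s : ℝ} (hs : 0 < s) :
    ∃ u : ℝ, 0 < u ∧ ∀ Z : ℝ, 1 ≤ Z → 1 ≤ Z ^ u ∧ (Z ^ u) ^ 4 ≤ Z ∧
      (1 / Z ^ 2) ^ s ≤ 1 / (Z ^ u) ^ 8 ∧ Real.log Z ≤ Z ^ u / u := by
  obtain ⟨u, hu, hu₁, hus⟩ : ∃ u > 0, u ≤ 1 / 4 ∧ u ≤ s / 4 :=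
    ⟨min (1 / 4) (s / 4), by positivity, min_le_left _ _, min_le_right _ _⟩
  refine ⟨u, hu, fun Z hZ => ?_⟩
  have hZ₀ : 0 ≤ Z := zero_le_one.trans hZ
  refine ⟨Real.one_le_rpow hZ hu.le, ?_, ?_, Real.log_le_rpow_div hZ₀ hu⟩
  · rw [← Real.rpow_mul_natCast hZ₀]
    refine (Real.rpow_le_rpow_of_exponent_le hZ ?_).trans_eq (Real.rpow_one Z)
    push_cast
    linarith
  · rw [Real.div_rpow zero_le_one (by positivity), Real.one_rpow, ← Real.rpow_mul_natCast hZ₀,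
      ← Real.rpow_natCast_mul hZ₀]
    refine one_div_le_one_div_of_le (by positivity) (Real.rpow_le_rpow_of_exponent_le hZ ?_)
    push_cast
    linarith

lemma mul_sqrt_add_mul_half_pow_le {k N : ℕ} {C₁ C₂ c E J Z μ : ℝ} (hC₁ : 0 ≤ C₁) (hC₂ : 0 ≤ C₂)
    (hJ₀ : 0 ≤ J) (hJ : J ≤ c * E) (hk : k + 1 ≤ c * E) (hE : 1 ≤ E) (hEZ : E ^ 4 ≤ Z)
    (hZN : Z ≤ N) (hμ₀ : 0 ≤ μ) (hμ : μ ≤ C₂ * (1 / E ^ 8)) :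
    (k + 1) * √(J * (C₁ * (1 / Z ^ 4) + μ)) + k * (1 / 2) ^ N ≤
      (c * √(c * (C₁ + C₂)) + c) * (1 / E ^ 2) := by
  have hE₀ : 0 < E := one_pos.trans_le hE
  have hc : 0 ≤ c := nonneg_of_mul_nonneg_left (hJ₀.trans hJ) hE₀
  have hk' : (k : ℝ) ≤ c * E := by linarith
  have hZ : 1 / Z ^ 4 ≤ 1 / E ^ 8 := by
    refine one_div_le_one_div_of_le (by positivity) ?_
    calc E ^ 8 ≤ E ^ 16 := pow_le_pow_right₀ hE (by norm_num)
      _ = (E ^ 4) ^ 4 := by ring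
      _ ≤ Z ^ 4 := by gcongr
  have hroot : √(J * (C₁ * (1 / Z ^ 4) + μ)) ≤ √(c * (C₁ + C₂)) * (1 / E ^ 3) := by
    rw [← Real.sqrt_sq (show 0 ≤ 1 / E ^ 3 by positivity), ← Real.sqrt_mul (by positivity)]
    refine Real.sqrt_le_sqrt ?_
    calc J * (C₁ * (1 / Z ^ 4) + μ) ≤ c * E * (C₁ * (1 / E ^ 8) + C₂ * (1 / E ^ 8)) := by
          gcongr
      _ = c * (C₁ + C₂) * (1 / E ^ 7) := by field_simp
      _ ≤ c * (C₁ + C₂) * (1 / E ^ 6) := by gcongr; norm_num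
      _ = _ := by field_simp
  have hpow : (1 / 2 : ℝ) ^ N ≤ 1 / E ^ 3 := by
    rw [one_div_pow]
    refine one_div_le_one_div_of_le (by positivity) ?_
    calc E ^ 3 ≤ E ^ 4 := pow_le_pow_right₀ hE (by norm_num)
      _ ≤ N := hEZ.trans hZN
      _ ≤ 2 ^ N := by exact_mod_cast Nat.lt_two_pow_self.le
  calc _ ≤ c * E * (√(c * (C₁ + C₂)) * (1 / E ^ 3)) + c * E * (1 / E ^ 3) := by gcongr
    _ = _ := by field_simp

namespace IsConductance

variable {t : ℝ} {ν : Measure ℝ} (h : IsConductance t ν)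
include h

lemma coeff_le_one (a : ℝ) (p : ℝ × unitInterval) : coeff t ν a p ≤ 1 :=
  h.norm_integral_exp_le _

lemma exists_coeff_le (ht : 0 < t) :
    ∃ N₀ m : ℕ, ∃ C : ℝ, 0 < C ∧ ∀ Z a : ℝ, 1 ≤ Z → |a| = Z ^ (64 * m + 16) → ∀ N k J : ℕ,
      N₀ ≤ N → (N : ℝ) ≤ 2 * Z → Real.log (2 + t * N) < J → J ≤ Real.log (2 + t * N) + 1 →
        (32 * m + 4) * Real.log Z ≤ k * Real.log (1 + t) → ∀ r : unitInterval,
          coeff t ν a (0, r) ≤ (k + 1) * √(J * (C * (1 / Z ^ 4) +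
            (ν.prod ν).real {x | |x.1 - x.2| ≤ 1 / Z ^ 2})) + k * (1 / 2) ^ N := by
  obtain ⟨N₀, m, C, hC, hdecay⟩ := exists_norm_iterate_op_skew_pairWindow_le ht
  refine ⟨N₀, m, C, hC, fun Z a hZ ha N k J hN hNZ hJ hJ' hk r => ?_⟩
  have hZ₀ : 0 < Z := one_pos.trans_le hZ
  set r₀ := (32 * m + 4) * Real.log Z with hr₀
  set W := Real.log (2 + t * N)
  have hr₀_nonneg : 0 ≤ r₀ := mul_nonneg (by positivity) (Real.log_nonneg hZ)
  have hW : 0 ≤ W := Real.log_nonneg (by linarith [mul_nonneg ht.le N.cast_nonneg])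
  have hterm (i : ℕ) : ((branchIFS ht N).skew (logDen t)).op^[i]
      (Set.indicator (Prod.fst ⁻¹' Set.Icc r₀ (r₀ + W)) (coeff t ν a)) (0, r) ≤
        √(J * (C * (1 / Z ^ 4) + (ν.prod ν).real {x | |x.1 - x.2| ≤ 1 / Z ^ 2})) := by
    refine Real.le_sqrt_of_sq_le (h.sq_iterate_op_skew_indicator_coeff_le ht N i J a _ hJ
      (by positivity) fun j hj x hx hfar => ?_)
    have hj' : (j : ℝ) + 1 ≤ J := by exact_mod_cast hj
    have hexp : Real.exp j ≤ (2 + 2 * t) * Z :=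
      calc Real.exp j ≤ Real.exp W := Real.exp_le_exp.2 (by linarith)
        _ = 2 + t * N := Real.exp_log (by positivity)
        _ ≤ 2 * Z + t * (2 * Z) := by gcongr; linarith
        _ = _ := by ring
    have hdist : |x.1 - x.2| ≤ 1 :=
      abs_le.2 ⟨by linarith [hx.1.1, hx.2.2], by linarith [hx.1.2, hx.2.1]⟩
    have hfreq := abs_mul_exp_mul_mem_Icc hZ₀ (abs_mul_exp_log_eq_pow hZ₀ ha) j.cast_nonneg hexp
      hfar.le hdist
    refine hdecay N hN Z _ hZ x hx hfreq.1 hfreq.2 i _ ?_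
    rw [neg_mul, ← hr₀]
    linarith [j.cast_nonneg (α := ℝ)]
  refine (h.coeff_le_sum ht N a le_rfl k (p := (0, r)) (add_nonneg hr₀_nonneg hW)
    (by rwa [zero_add])).trans (add_le_add_left ((sum_le_card_nsmul _ _ _
      fun i _ => hterm i).trans_eq ?_) _)
  rw [card_range, nsmul_eq_mul, Nat.cast_succ]

lemma exists_coeff_le_log (ht : 0 < t) :
    ∃ P : ℕ, P ≠ 0 ∧ ∃ Z₀ C c : ℝ, 0 < Z₀ ∧ 0 < C ∧ 0 < c ∧ ∀ Z a : ℝ, 1 ≤ Z → Z₀ ≤ Z →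
      |a| = Z ^ P → ∃ N k J : ℕ, Z ≤ N ∧ J ≤ c * (1 + Real.log Z) ∧
        k + 1 ≤ c * (1 + Real.log Z) ∧ ∀ r : unitInterval,
          coeff t ν a (0, r) ≤ (k + 1) * √(J * (C * (1 / Z ^ 4) +
            (ν.prod ν).real {x | |x.1 - x.2| ≤ 1 / Z ^ 2})) + k * (1 / 2) ^ N := by
  obtain ⟨N₀, m, C, hC, hcoeff⟩ := h.exists_coeff_le ht
  have hlog : 0 < Real.log (1 + t) := Real.log_pos (by linarith)
  have hlogD : 0 ≤ Real.log (2 + 2 * t) := Real.log_nonneg (by linarith)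
  obtain ⟨M, hM₀, hM⟩ : ∃ M > 0, (32 * m + 4) = M * Real.log (1 + t) :=
    ⟨(32 * m + 4) / Real.log (1 + t), by positivity, (div_mul_cancel₀ _ hlog.ne').symm⟩
  refine ⟨64 * m + 16, by simp, N₀ + 1, C, Real.log (2 + 2 * t) + M + 2, by positivity, hC,
    by positivity, fun Z a hZ hN₀ ha => ?_⟩
  have hZ₀ : 0 < Z := one_pos.trans_le hZ
  have hlogZ : 0 ≤ Real.log Z := Real.log_nonneg hZ
  have hceil := Nat.ceil_lt_add_one hZ₀.le
  have hZN := Nat.le_ceil Z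
  set N := ⌈Z⌉₊
  have hW₀ : 0 ≤ Real.log (2 + t * N) :=
    Real.log_nonneg (by linarith [mul_nonneg ht.le N.cast_nonneg])
  have hW : Real.log (2 + t * N) ≤ Real.log (2 + 2 * t) + Real.log Z := by
    rw [← Real.log_mul (by positivity) hZ₀.ne']
    exact Real.log_le_log (by positivity) (by nlinarith)
  have hfloor := Nat.floor_le hW₀
  have hk := Nat.le_ceil (M * Real.log Z)
  have hk' := Nat.ceil_lt_add_one (mul_nonneg hM₀.le hlogZ)
  refine ⟨N, ⌈M * Real.log Z⌉₊, ⌊Real.log (2 + t * N)⌋₊ + 1, hZN, ?_, ?_, hcoeff Z a hZ ha _ _ _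
    ?_ (by linarith) (by exact_mod_cast Nat.lt_floor_add_one _) (by push_cast; linarith) ?_⟩
  · push_cast
    nlinarith
  · nlinarith
  · have : (N₀ : ℝ) ≤ N := by linarith
    exact_mod_cast this
  · rw [hM, mul_right_comm]
    gcongr

lemma exists_coeff_le_one_div_sq (ht : 0 < t) :
    ∃ P : ℕ, P ≠ 0 ∧ ∃ u : ℝ, 0 < u ∧ ∃ C : ℝ, 0 < C ∧ ∀ Z a : ℝ, 1 ≤ Z → |a| = Z ^ P →
      ∀ r : unitInterval, coeff t ν a (0, r) ≤ C * (1 / (Z ^ u) ^ 2) := by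
  obtain ⟨P, hP, Z₀, C₁, c, hZ₀, hC₁, hc, hbasic⟩ := h.exists_coeff_le_log ht
  obtain ⟨C₂, hC₂, s, hs, hnear⟩ := h.exists_real_near_diagonal_le ht
  obtain ⟨u, hu, hgauge⟩ := exists_rpow_gauge hs
  set c' := c * (1 + 1 / u) with hc'
  refine ⟨P, hP, u, hu, c' * √(c' * (C₁ + C₂)) + c' + Z₀, by positivity, fun Z a hZ ha r => ?_⟩
  obtain ⟨hE, hEZ, hEs, hElog⟩ := hgauge Z hZ
  set E := Z ^ u
  rcases lt_or_ge Z Z₀ with hlt | hle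
  · refine (h.coeff_le_one a _).trans ?_
    rw [mul_one_div, one_le_div (by positivity)]
    have hE₂ : E ^ 2 ≤ Z₀ := (pow_le_pow_right₀ hE (by norm_num)).trans (hEZ.trans hlt.le)
    exact hE₂.trans (le_add_of_nonneg_left (by positivity))
  obtain ⟨N, k, J, hZN, hJ, hk, hcoeff⟩ := hbasic Z a hZ hle ha
  have hlog : c * (1 + Real.log Z) ≤ c' * E := by
    rw [hc', mul_assoc, add_mul, one_mul, one_div_mul_eq_div]
    gcongr
  refine (hcoeff r).trans ((mul_sqrt_add_mul_half_pow_le hC₁.le hC₂.le J.cast_nonneg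
    (hJ.trans hlog) (hk.trans hlog) hE hEZ hZN measureReal_nonneg
    ((hnear _ (by positivity)).trans (mul_le_mul_of_nonneg_left hEs hC₂.le))).trans ?_)
  exact mul_le_mul_of_nonneg_right (le_add_of_nonneg_right hZ₀.le) (by positivity)

lemma exists_norm_fourier_le (ht : 0 < t) :
    ∃ β : ℝ, 0 < β ∧ ∃ C : ℝ, 0 < C ∧ ∀ ξ : ℝ, 1 ≤ |ξ| →
      ‖∫ x : ℝ, Complex.exp (Complex.ofReal (-(2 * Real.pi * ξ * x)) * Complex.I) ∂ν‖
        ≤ C * |ξ| ^ (-β) := by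
  obtain ⟨P, hP, u, hu, C, hC, hcoeff⟩ := h.exists_coeff_le_one_div_sq ht
  have : (0 : ℝ) < P := by exact_mod_cast Nat.pos_of_ne_zero hP
  refine ⟨2 * u / P, by positivity, C, hC, fun ξ hξ => ?_⟩
  have hfreq : |ξ| ≤ |-(2 * Real.pi * ξ)| := by
    rw [abs_neg, abs_mul, abs_of_pos Real.two_pi_pos]
    exact le_mul_of_one_le_left (abs_nonneg ξ) (by linarith [Real.pi_gt_three])
  set η := |-(2 * Real.pi * ξ)|
  have hη : 0 ≤ η := abs_nonneg _
  have hdecay := hcoeff (η ^ (P : ℝ)⁻¹) (-(2 * Real.pi * ξ))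
    (Real.one_le_rpow (hξ.trans hfreq) (by positivity)) (Real.rpow_inv_natCast_pow hη hP).symm 1
  have hpow : 1 / ((η ^ (P : ℝ)⁻¹) ^ u) ^ 2 = η ^ (-(2 * u / P)) := by
    rw [← Real.rpow_mul hη, ← Real.rpow_mul_natCast hη, Real.rpow_neg hη, one_div]
    congr 2
    push_cast
    ring
  calc _ = coeff t ν (-(2 * Real.pi * ξ)) (0, 1) := by simp [coeff, slope, mobius]
    _ ≤ C * η ^ (-(2 * u / P)) := hpow ▸ hdecay
    _ ≤ C * |ξ| ^ (-(2 * u / P)) := by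
        gcongr ?_ * ?_
        exact Real.rpow_le_rpow_of_nonpos (one_pos.trans_le hξ) hfreq
          (neg_nonpos.2 (by positivity))

end IsConductance

end Lyons

theorem lyons_measure_fourier_decay_general (t : ℝ) (ht : 0 < t)
    (ν : Measure ℝ) [IsProbabilityMeasure ν]
    (hsupp : ν (Set.Icc (0 : ℝ) 1)ᶜ = 0)
    (hconf : ν = (1 / 2 : ℝ≥0∞) • Measure.map (fun x : ℝ => x / (1 + x)) ν
               + (1 / 2 : ℝ≥0∞) • Measure.map (fun x : ℝ => (x + t) / (1 + x + t)) ν) :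
    ∃ β : ℝ, 0 < β ∧ ∃ C : ℝ, 0 < C ∧ ∀ ξ : ℝ, 1 ≤ |ξ| →
      ‖∫ x : ℝ, Complex.exp (Complex.ofReal (-(2 * Real.pi * ξ * x)) * Complex.I) ∂ν‖
        ≤ C * |ξ| ^ (-β) := by
  have h : Lyons.IsConductance t ν :=
    ⟨inferInstance, hsupp, by simpa only [Lyons.mobius_one, add_assoc] using hconf⟩
  exact h.exists_norm_fourier_le ht

/-- **Power Fourier decay of the Lyons conductance measures** (Theorem 1.3).

For every `0 < t < 1`, any Borel probability measure `ν_t` on `[0,1]` satisfying the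
self-conformality equation `ν_t = ½ (f₀)_*ν_t + ½ (f_t)_*ν_t` for the parabolic
overlapping Lyons IFS `f₀(x) = x/(1+x)`, `f_t(x) = (x+t)/(1+x+t)` has power Fourier
decay: there are `β > 0` and `C > 0` with `|ν̂_t(ξ)| ≤ C |ξ|^{-β}` for all `|ξ| ≥ 1`. -/
theorem lyons_measure_fourier_decay (t : ℝ) (ht : t ∈ Set.Ioo (0:ℝ) 1)
    (ν : Measure ℝ) [IsProbabilityMeasure ν]
    (hsupp : ν (Set.Icc (0:ℝ) 1)ᶜ = 0)
    (hconf : ν = (1/2 : ℝ≥0∞) • Measure.map (fun x : ℝ => x / (1 + x)) ν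
               + (1/2 : ℝ≥0∞) • Measure.map (fun x : ℝ => (x + t) / (1 + x + t)) ν) :
    ∃ β : ℝ, 0 < β ∧ ∃ C : ℝ, 0 < C ∧ ∀ ξ : ℝ, 1 ≤ |ξ| →
      ‖∫ x : ℝ, Complex.exp (Complex.ofReal (-(2 * Real.pi * ξ * x)) * Complex.I) ∂ν‖
        ≤ C * |ξ| ^ (-β) := by
  exact lyons_measure_fourier_decay_general t ht.1 ν hsupp hconf
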